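/- arXiv:1701.06451 — 2 statements merged into one kernel-verified Lean document; each statement's English description precedes it below -/
import Mathlib

section
/- Let r ≥ 2 and let H be a 3-partite 3-graph with vertex classes A, B, C such that |A| = n. Suppose every vertex of A has degree at least r and every vertex of B ∪ C has degree at most r. If H contains no subhypergraph isomorphic to (r/2)·F, where F is the truncated Fano plane, then ν(H) ≥ (1 + 1/(72r² − 150r + 77))·n/2. -/
namespace Tripartite

/-- The degree of a vertex `a` in the first class of a 3-partite 3-multihypergraph,
whose edges are given as a multiset of triples (so parallel edges are allowed). -/
def deg1 {α β γ : Type*} [DecidableEq α] (H : Multiset (α × β × γ)) (a : α) : ℕ :=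
  (H.filter fun e => e.1 = a).card

/-- The degree of a vertex `b` in the second class. -/
def deg2 {α β γ : Type*} [DecidableEq β] (H : Multiset (α × β × γ)) (b : β) : ℕ :=
  (H.filter fun e => e.2.1 = b).card

/-- The degree of a vertex `c` in the third class. -/
def deg3 {α β γ : Type*} [DecidableEq γ] (H : Multiset (α × β × γ)) (c : γ) : ℕ :=
  (H.filter fun e => e.2.2 = c).card

/-- `H` is `r`-regular: every vertex of every class has degree exactly `r`. -/
def IsRegular {α β γ : Type*} [DecidableEq α] [DecidableEq β] [DecidableEq γ]
    (H : Multiset (α × β × γ)) (r : ℕ) : Prop :=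
  (∀ a, deg1 H a = r) ∧ (∀ b, deg2 H b = r) ∧ (∀ c, deg3 H c = r)

/-- A matching of `H`: a set of edges of `H` that are pairwise disjoint. -/
def IsMatching {α β γ : Type*} (H : Multiset (α × β × γ)) (M : Finset (α × β × γ)) : Prop :=
  (∀ e ∈ M, e ∈ H) ∧
  ∀ e ∈ M, ∀ f ∈ M, e ≠ f → e.1 ≠ f.1 ∧ e.2.1 ≠ f.2.1 ∧ e.2.2 ≠ f.2.2

/-- The matching number ν(H): the maximum size of a matching of `H`. -/
noncomputable def matchNum {α β γ : Type*} (H : Multiset (α × β × γ)) : ℕ :=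
  sSup {k | ∃ M : Finset (α × β × γ), IsMatching H M ∧ M.card = k}

/-- The edge multiset of the truncated Fano plane `F` on vertices `x1, y1` (first class),
`x2, y2` (second class), `x3, y3` (third class). -/
def fanoEdges {α β γ : Type*} (x1 y1 : α) (x2 y2 : β) (x3 y3 : γ) :
    Multiset (α × β × γ) :=
  {(x1, x2, x3), (x1, y2, y3), (y1, x2, y3), (y1, y2, x3)}

/-- The six vertices `x1, y1, x2, y2, x3, y3` span a copy of `s • F` in `H`, i.e. a
subhypergraph in which every edge of the truncated Fano plane appears with
multiplicity (at least) `s`. -/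
def IsFanoCopy {α β γ : Type*} (H : Multiset (α × β × γ)) (s : ℕ)
    (x1 y1 : α) (x2 y2 : β) (x3 y3 : γ) : Prop :=
  x1 ≠ y1 ∧ x2 ≠ y2 ∧ x3 ≠ y3 ∧ s • fanoEdges x1 y1 x2 y2 x3 y3 ≤ H

/-- The six vertices `x1, y1, x2, y2, x3, y3` span a connected component of `H` that is a
copy of `s • F`: the multiset of edges of `H` meeting one of these six vertices is exactly
`s` parallel copies of each of the four edges of the truncated Fano plane. -/
def IsFanoComponent {α β γ : Type*} [DecidableEq α] [DecidableEq β] [DecidableEq γ]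
    (H : Multiset (α × β × γ)) (s : ℕ)
    (x1 y1 : α) (x2 y2 : β) (x3 y3 : γ) : Prop :=
  x1 ≠ y1 ∧ x2 ≠ y2 ∧ x3 ≠ y3 ∧
  H.filter (fun e => e.1 = x1 ∨ e.1 = y1 ∨ e.2.1 = x2 ∨ e.2.1 = y2 ∨
      e.2.2 = x3 ∨ e.2.2 = y3)
    = s • fanoEdges x1 y1 x2 y2 x3 y3

/-!
Colour the edges of `H` by their ends in the first class, keeping exactly `r` edges of each colour.
They form a bipartite multigraph on the other two classes, and a matching of `H` is a rainbow
matching of this multigraph. The topological Hall theorem with deficiency produces a large rainbow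
matching unless, for some set `S` of colours, the complex of matchings of the edges with colours in
`S` has nonzero homology in low dimension.

Edge explosions bound this dimension from below. They remove the edges of the line graph one at a
time, and in each of them a potential made up of the matching number, the number of edges and the
number of components that are 4-cycles of size `2r` drops by at most `12r²`. To choose the
explosions, one looks at a smallest set of vertices that has no neighbours to spare in Hall's
condition.

So the matching number of `H` can be close to `n / 2` only if there are many such 4-cycles. Each of
them consists of two pairs of opposite sides. Choose one of the two pairs at random in each, and
give the chosen edges weight `1 / r`, or `1 / (r - 1)` if their colour is not entirely chosen. This
is a fractional rainbow matching. As `(r / 2) • F` is excluded, at least `r` edges of every 4-cycle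
have a colour that does not lie within a single pair, and the resulting expected weight exceeds one
per 4-cycle by enough to yield a large rainbow matching.
-/

/-! ### Simplicial chains modulo 2 -/

section Chains

variable {V α : Type*} [DecidableEq V] [DecidableEq α]

/-- Simplicial chains modulo 2 on the vertex set `V`. The empty set counts as a simplex, so that
homology is reduced. -/
abbrev Chain (V : Type*) : Type _ := Finset V → ZMod 2

/-- The simplicial boundary modulo 2, sending a simplex to the sum of its facets. -/
def boundary [Fintype V] : Chain V →ₗ[ZMod 2] Chain V where
  toFun z τ := ∑ v ∈ τᶜ, z (insert v τ)
  map_add' z w := by ext τ; simp [Finset.sum_add_distrib]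
  map_smul' c z := by ext τ; simp [Finset.mul_sum]

/-- The cone with apex `x` over a chain. Simplices that contain `x` are sent to zero. -/
def coneChain (x : V) : Chain V →ₗ[ZMod 2] Chain V where
  toFun z σ := if x ∈ σ then z (σ.erase x) else 0
  map_add' z w := by ext σ; simp [ite_add_ite]
  map_smul' c z := by ext σ; simp

/-- The link of the vertex `x` in a chain. -/
def linkChain (x : V) : Chain V →ₗ[ZMod 2] Chain V where
  toFun z σ := if x ∈ σ then 0 else z (insert x σ)
  map_add' z w := by ext σ; simp [ite_add_ite]
  map_smul' c z := by ext σ; simp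

/-- The chain map induced by a map of vertices. Simplices on which `f` is not injective are sent to
zero. -/
def mapChain [Fintype V] (f : V → α) : Chain V →ₗ[ZMod 2] Chain α where
  toFun z S := ∑ σ with σ.image f = S ∧ σ.card = S.card, z σ
  map_add' z w := by ext S; simp [Finset.sum_add_distrib]
  map_smul' c z := by ext S; simp [Finset.mul_sum]

lemma boundary_apply [Fintype V] (z : Chain V) (τ : Finset V) :
    boundary z τ = ∑ v ∈ τᶜ, z (insert v τ) := rfl

lemma coneChain_apply (x : V) (z : Chain V) (σ : Finset V) :
    coneChain x z σ = if x ∈ σ then z (σ.erase x) else 0 := rfl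

lemma linkChain_apply (x : V) (z : Chain V) (σ : Finset V) :
    linkChain x z σ = if x ∈ σ then 0 else z (insert x σ) := rfl

lemma boundary_single [Fintype V] (σ : Finset V) :
    boundary (Pi.single σ 1) = ∑ v ∈ σ, Pi.single (σ.erase v) 1 := by
  funext τ
  simp only [boundary_apply, Finset.sum_apply, Pi.single_apply, Finset.sum_boole]
  congr 2
  ext v
  simp only [Finset.mem_filter, Finset.mem_compl]
  constructor
  · rintro ⟨hv, rfl⟩
    simp [hv]
  · rintro ⟨hv, rfl⟩
    simp [hv]

lemma boundary_coneChain [Fintype V] (x : V) (z : Chain V) :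
    boundary (coneChain x z) = z + coneChain x (boundary z) := by
  funext τ
  simp only [Pi.add_apply, boundary_apply, coneChain_apply]
  by_cases hx : x ∈ τ
  · have hcompl : (τ.erase x)ᶜ = insert x τᶜ := by
      ext v; by_cases h : v = x <;> simp [h]
    have herase : ∀ v ∈ τᶜ, (insert v τ).erase x = insert v (τ.erase x) := fun v hv =>
      Finset.erase_insert_of_ne (by rintro rfl; exact Finset.mem_compl.1 hv hx)
    simp only [hx, Finset.mem_insert, or_true, if_true, hcompl]
    rw [Finset.sum_insert (by simpa using hx), Finset.insert_erase hx, ← add_assoc,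
      CharTwo.add_self_eq_zero, zero_add]
    exact Finset.sum_congr rfl fun v hv => by rw [herase v hv]
  · rw [Finset.sum_eq_single x]
    · simp [hx]
    · intro v _ hv
      simp [hx, hv.symm]
    · simp [hx]

lemma boundary_boundary [Fintype V] (z : Chain V) : boundary (boundary z) = 0 := by
  funext τ
  simp only [boundary_apply, Pi.zero_apply]
  rw [Finset.sum_sigma']
  refine Finset.sum_involution (fun x _ => ⟨x.2, x.1⟩) ?_ ?_ ?_ ?_
  · rintro ⟨u, v⟩ _
    rw [Finset.insert_comm]
    exact CharTwo.add_self_eq_zero _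
  · rintro ⟨u, v⟩ h _ heq
    simp only [Finset.mem_sigma, Finset.mem_compl, Finset.mem_insert] at h
    exact h.2 (Or.inl (congrArg Sigma.fst heq))
  · simp +contextual [eq_comm]
  · simp

lemma boundary_linkChain [Fintype V] (x : V) (z : Chain V) :
    boundary (linkChain x z) = linkChain x (boundary z) := by
  funext τ
  simp only [boundary_apply, linkChain_apply]
  split_ifs with hx
  · exact Finset.sum_eq_zero fun v _ => if_pos (Finset.mem_insert_of_mem hx)
  · rw [← Finset.add_sum_erase _ _ (Finset.mem_compl.2 hx), if_pos (Finset.mem_insert_self x τ),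
      zero_add, ← Finset.compl_insert]
    refine Finset.sum_congr rfl fun v hv => ?_
    have hxv : x ≠ v := by rintro rfl; simp at hv
    rw [if_neg (by simp [hxv, hx]), Finset.insert_comm]

lemma mapChain_single [Fintype V] (f : V → α) (σ : Finset V) :
    mapChain f (Pi.single σ 1) =
      if (σ.image f).card = σ.card then Pi.single (σ.image f) 1 else 0 := by
  funext S
  change ∑ τ with τ.image f = S ∧ τ.card = S.card, Pi.single σ 1 τ = _
  rw [Finset.sum_pi_single']
  simp only [Finset.mem_filter, Finset.mem_univ, true_and]
  by_cases hS : σ.image f = S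
  · subst hS
    split_ifs <;> simp_all
  · split_ifs <;> simp_all [eq_comm]

lemma mapChain_boundary_single_of_not_injOn [Fintype V] (f : V → α) {σ : Finset V}
    (hf : ¬ Set.InjOn f σ) : mapChain f (boundary (Pi.single σ 1)) = 0 := by
  obtain ⟨x, hx, y, hy, hfxy, hxy⟩ : ∃ x ∈ σ, ∃ y ∈ σ, f x = f y ∧ x ≠ y := by
    simpa [Set.InjOn] using hf
  have hxy_image : (σ.erase x).image f = (σ.erase y).image f := by
    have himage : ∀ {u v}, v ∈ σ → u ≠ v → f u = f v →
        (σ.erase u).image f = σ.image f := fun {u v} hv huv h => by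
      by_cases hu : u ∈ σ
      · conv_rhs => rw [← Finset.insert_erase hu, Finset.image_insert]
        rw [Finset.insert_eq_of_mem]
        exact Finset.mem_image.2 ⟨v, Finset.mem_erase.2 ⟨huv.symm, hv⟩, h.symm⟩
      · rw [Finset.erase_eq_of_notMem hu]
    rw [himage hy hxy hfxy, himage hx hxy.symm hfxy.symm]
  have hzero : ∀ v ∈ (σ.erase x).erase y, mapChain f (Pi.single (σ.erase v) 1) = 0 := by
    intro v hv
    simp only [Finset.mem_erase] at hv
    rw [mapChain_single, if_neg]
    rw [Finset.card_image_iff]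
    exact fun h => hxy (h (by simp [hx, hv.2.1.symm]) (by simp [hy, hv.1.symm]) hfxy)
  rw [boundary_single, map_sum, ← Finset.add_sum_erase σ _ hx,
    ← Finset.add_sum_erase _ _ (Finset.mem_erase.2 ⟨hxy.symm, hy⟩), Finset.sum_eq_zero hzero,
    mapChain_single, mapChain_single, hxy_image, Finset.card_erase_of_mem hx,
    Finset.card_erase_of_mem hy, add_zero]
  exact CharTwo.add_self_eq_zero _

lemma mapChain_boundary [Fintype V] [Fintype α] (f : V → α) (z : Chain V) :
    mapChain f (boundary z) = boundary (mapChain f z) := by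
  suffices mapChain f ∘ₗ boundary = boundary ∘ₗ mapChain f from LinearMap.congr_fun this z
  refine LinearMap.pi_ext' fun σ => LinearMap.ext_ring ?_
  simp only [LinearMap.comp_apply, LinearMap.coe_single]
  by_cases hf : Set.InjOn f σ
  · have hcard : ∀ v ∈ σ, ((σ.erase v).image f).card = (σ.erase v).card := fun v _ =>
      Finset.card_image_iff.2 (hf.mono (by simp))
    rw [mapChain_single, if_pos (Finset.card_image_iff.2 hf), boundary_single, boundary_single,
      map_sum, Finset.sum_image hf]
    refine Finset.sum_congr rfl fun v hv => ?_
    rw [mapChain_single, if_pos (hcard v hv), Finset.erase_eq σ, Finset.erase_eq,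
      Finset.image_sdiff_of_injOn hf (by simpa using hv), Finset.image_singleton]
  · rw [mapChain_boundary_single_of_not_injOn f hf, mapChain_single,
      if_neg (mt Finset.card_image_iff.1 hf), map_zero]

end Chains

section Acyclicity

variable {V : Type*}

/-- The chain `z` is a combination of `i`-element members of the complex `K`. -/
def SupportedOn (K : Set (Finset V)) (i : ℕ) (z : Chain V) : Prop :=
  ∀ σ, z σ ≠ 0 → σ.card = i ∧ σ ∈ K

/-- The reduced homology of the complex `K` modulo 2 vanishes in dimensions below `d - 1`: every
cycle on simplices with fewer than `d` vertices is a boundary. -/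
def Acyclic [Fintype V] [DecidableEq V] (K : Set (Finset V)) (d : ℕ) : Prop :=
  ∀ i < d, ∀ z, SupportedOn K i z → boundary z = 0 → ∃ w, SupportedOn K (i + 1) w ∧ boundary w = z

/-- The simplices of `K` that do not contain both `x` and `y`. -/
def edgeDeletion (K : Set (Finset V)) (x y : V) : Set (Finset V) :=
  {σ ∈ K | ¬ (x ∈ σ ∧ y ∈ σ)}

/-- The link of the edge `xy` in `K`. -/
def edgeLink [DecidableEq V] (K : Set (Finset V)) (x y : V) : Set (Finset V) :=
  {σ | x ∉ σ ∧ y ∉ σ ∧ insert x (insert y σ) ∈ K}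

lemma SupportedOn.add {K : Set (Finset V)} {i : ℕ} {z w : Chain V} (hz : SupportedOn K i z)
    (hw : SupportedOn K i w) : SupportedOn K i (z + w) := by
  intro σ hσ
  by_cases h : z σ = 0
  · exact hw σ (by simpa [h] using hσ)
  · exact hz σ h

variable [DecidableEq V]

lemma SupportedOn.coneChain_of_insert {K L : Set (Finset V)} {i : ℕ} {z : Chain V} {x : V}
    (hz : SupportedOn K i z) (hKL : ∀ σ ∈ K, insert x σ ∈ L) :
    SupportedOn L (i + 1) (coneChain x z) := by
  intro σ hσ
  rw [coneChain_apply] at hσ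
  split_ifs at hσ with hx
  · obtain ⟨hcard, hK⟩ := hz _ hσ
    exact ⟨by rw [← hcard, Finset.card_erase_add_one hx], by
      simpa only [Finset.insert_erase hx] using hKL _ hK⟩
  · exact absurd rfl hσ

lemma SupportedOn.linkChain_linkChain {K : Set (Finset V)} {i : ℕ} {w : Chain V} {x y : V}
    (hw : SupportedOn K (i + 2) w) (hxy : x ≠ y) :
    SupportedOn (edgeLink K x y) i (linkChain y (linkChain x w)) := by
  intro σ hσ
  simp only [linkChain_apply, Finset.mem_insert, hxy, false_or] at hσ
  split_ifs at hσ with hy hx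
  · exact absurd rfl hσ
  · exact absurd rfl hσ
  · obtain ⟨hcard, hK⟩ := hw _ hσ
    rw [Finset.card_insert_of_notMem (by simp [hxy, hx]), Finset.card_insert_of_notMem hy] at hcard
    exact ⟨by omega, hx, hy, hK⟩

lemma linkChain_linkChain_eq_zero {K : Set (Finset V)} {i : ℕ} {z : Chain V} {x y : V}
    (hz : SupportedOn (edgeDeletion K x y) i z) : linkChain y (linkChain x z) = 0 := by
  funext σ
  simp only [linkChain_apply, Pi.zero_apply, ite_eq_left_iff]
  intro _ _
  by_contra hne
  exact (hz _ hne).2.2 (by simp)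

variable [Fintype V]

lemma acyclic_zero (K : Set (Finset V)) : Acyclic K 0 := fun _ hi => absurd hi (Nat.not_lt_zero _)

lemma Acyclic.mono {K : Set (Finset V)} {d d' : ℕ} (h : Acyclic K d) (hd : d' ≤ d) :
    Acyclic K d' := fun i hi => h i (hi.trans_le hd)

lemma acyclic_of_apex {K : Set (Finset V)} {x : V} (hK : ∀ σ ∈ K, insert x σ ∈ K) (d : ℕ) :
    Acyclic K d := fun _ _ z hz hbz =>
  ⟨coneChain x z, hz.coneChain_of_insert hK, by rw [boundary_coneChain, hbz, map_zero, add_zero]⟩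

lemma exists_boundary_eq_linkChain {K : Set (Finset V)} {x y : V} {i d : ℕ} {w : Chain V}
    (hxy : x ≠ y) (hi : i ≤ d) (hL : Acyclic (edgeLink K x y) d) (hw : SupportedOn K (i + 1) w)
    (hbw : boundary (linkChain y (linkChain x w)) = 0) :
    ∃ v, SupportedOn (edgeLink K x y) i v ∧ boundary v = linkChain y (linkChain x w) := by
  cases i with
  | zero =>
    refine ⟨0, fun σ h => absurd rfl h, ?_⟩
    rw [map_zero]
    funext σ
    simp only [linkChain_apply, Pi.zero_apply]
    split_ifs with hy hx
    · rfl
    · rfl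
    · by_contra hne
      have hcard := (hw _ (Ne.symm hne)).1
      have hx : x ∉ σ := fun h => hx (Finset.mem_insert_of_mem h)
      rw [Finset.card_insert_of_notMem (by simp [hxy, hx]),
        Finset.card_insert_of_notMem hy] at hcard
      omega
  | succ j => exact hL j hi _ (hw.linkChain_linkChain hxy) hbw

lemma SupportedOn.add_boundary_coneChain_coneChain {K : Set (Finset V)} {x y : V} {i : ℕ}
    {w v : Chain V}
    (hw : SupportedOn K (i + 1) w) (hK : IsLowerSet K) (hxy : x ≠ y)
    (hv : SupportedOn (edgeLink K x y) i v)
    (hbv : boundary v = linkChain y (linkChain x w)) :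
    SupportedOn (edgeDeletion K x y) (i + 1) (w + boundary (coneChain x (coneChain y v))) := by
  have hvx : ∀ σ, x ∈ σ → v σ = 0 := fun σ h => by
    by_contra hne; exact (hv σ hne).2.1 h
  have hvy : ∀ σ, y ∈ σ → v σ = 0 := fun σ h => by
    by_contra hne; exact (hv σ hne).2.2.1 h
  have hsum : SupportedOn K (i + 1) (w + (coneChain y v + coneChain x v)) :=
    hw.add <| (hv.coneChain_of_insert fun σ hσ => hK (Finset.subset_insert _ _) hσ.2.2).add
      (hv.coneChain_of_insert fun σ hσ =>
        hK (Finset.insert_subset_insert _ (Finset.subset_insert _ _)) hσ.2.2)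
  have hexpand : w + boundary (coneChain x (coneChain y v)) =
      w + (coneChain y v + coneChain x v) +
        coneChain x (coneChain y (linkChain y (linkChain x w))) := by
    rw [boundary_coneChain, boundary_coneChain, map_add, hbv, add_assoc, add_assoc]
  intro σ hσ
  rw [hexpand] at hσ
  by_cases h : x ∈ σ ∧ y ∈ σ
  · have hyx : y ∈ σ.erase x := Finset.mem_erase.2 ⟨hxy.symm, h.2⟩
    refine absurd ?_ hσ
    simp only [Pi.add_apply, coneChain_apply, linkChain_apply, h.1, h.2, hyx, if_true]
    rw [hvx _ (Finset.mem_erase.2 ⟨hxy, h.1⟩), hvy _ hyx, if_neg (Finset.notMem_erase _ _),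
      Finset.insert_erase hyx, if_neg (Finset.notMem_erase _ _), Finset.insert_erase h.1, add_zero,
      add_zero]
    exact CharTwo.add_self_eq_zero _
  · have hzero : coneChain x (coneChain y (linkChain y (linkChain x w))) σ = 0 := by
      simp only [coneChain_apply, ite_eq_right_iff]
      exact fun hx hy => absurd ⟨hx, Finset.mem_of_mem_erase hy⟩ h
    obtain ⟨hcard, hσK⟩ := hsum σ (by rwa [Pi.add_apply, hzero, add_zero] at hσ)
    exact ⟨hcard, hσK, h⟩

-- Deleting from a filling of a cycle the simplices through `x` and `y` leaves a hole along a cycle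
-- of the link, which is filled again inside the link.
lemma acyclic_edgeDeletion {K : Set (Finset V)} {x y : V} {d : ℕ} (hK' : Acyclic K (d + 1))
    (hK : IsLowerSet K) (hxy : x ≠ y) (hL : Acyclic (edgeLink K x y) d) :
    Acyclic (edgeDeletion K x y) (d + 1) := by
  intro i hi z hz hbz
  obtain ⟨w, hw, hbw⟩ := hK' i hi z (fun σ hσ => ⟨(hz σ hσ).1, (hz σ hσ).2.1⟩) hbz
  have hlink : boundary (linkChain y (linkChain x w)) = 0 := by
    rw [boundary_linkChain, boundary_linkChain, hbw, linkChain_linkChain_eq_zero hz]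
  obtain ⟨v, hv, hbv⟩ :=
    exists_boundary_eq_linkChain hxy (Nat.lt_succ_iff.1 hi) hL hw hlink
  refine ⟨_, hw.add_boundary_coneChain_coneChain hK hxy hv hbv, ?_⟩
  rw [map_add, hbw, boundary_boundary, add_zero]

end Acyclicity

/-! ### Independence complexes and edge explosions -/

section Independence

variable {V : Type*}

/-- The independence complex of the subgraph of `G` induced on `W`. -/
def indComplex (G : SimpleGraph V) (W : Finset V) : Set (Finset V) :=
  {σ | σ ⊆ W ∧ G.IsIndepSet σ}

/-- `R` is a possible remainder of `W` when the edges of `G` at the vertex `e` are deleted one after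
the other, in the order of increasing `p` at their other end, until the edge `ef` is exploded: its
ends are then removed together with their remaining neighbours. Since `p` may take the same value
more than once, `R` is determined by these data only up to ties. -/
structure IsOutcome (G : SimpleGraph V) (W : Finset V) (e : V) (p : V → ℕ) (f : V)
    (R : Finset V) : Prop where
  subset : R ⊆ W
  mem : f ∈ W
  adj : G.Adj e f
  ne_and_not_adj : ∀ g ∈ R, g ≠ f ∧ ¬ G.Adj f g
  mem_of_lt : ∀ g ∈ W, g ≠ f → ¬ G.Adj f g → (G.Adj e g → p g < p f) → g ∈ R

lemma indComplex_congr {G G' : SimpleGraph V} {W : Finset V}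
    (h : ∀ u ∈ W, ∀ v ∈ W, G.Adj u v ↔ G'.Adj u v) : indComplex G W = indComplex G' W := by
  ext σ
  refine and_congr_right fun hσ => forall₄_congr fun u hu v hv => ?_
  exact imp_congr_right fun _ => not_congr (h u (hσ hu) v (hσ hv))

lemma isLowerSet_indComplex (G : SimpleGraph V) (W : Finset V) : IsLowerSet (indComplex G W) :=
  fun _ _ hτσ hσ => ⟨hτσ.trans hσ.1, hσ.2.mono (by exact_mod_cast hτσ)⟩

lemma edgeDeletion_indComplex_deleteEdges {G : SimpleGraph V} {W : Finset V} {e f : V}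
    (hef : G.Adj e f) :
    edgeDeletion (indComplex (G.deleteEdges {s(e, f)}) W) e f = indComplex G W := by
  ext σ
  simp only [edgeDeletion, indComplex, Set.mem_ofPred_eq, and_assoc, and_congr_right_iff]
  intro _
  constructor
  · rintro ⟨hσ, hnot⟩ u hu v hv huv hadj
    refine hσ hu hv huv (SimpleGraph.deleteEdges_adj.2 ⟨hadj, fun h => hnot ?_⟩)
    rcases Sym2.eq_iff.1 h with ⟨rfl, rfl⟩ | ⟨rfl, rfl⟩
    exacts [⟨hu, hv⟩, ⟨hv, hu⟩]
  · intro hσ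
    exact ⟨fun u hu v hv huv h => hσ hu hv huv (SimpleGraph.deleteEdges_adj.1 h).1,
      fun h => hσ h.1 h.2 hef.ne hef⟩

lemma IsOutcome.of_deleteEdges {G : SimpleGraph V} {W R : Finset V} {e f f' : V} {p : V → ℕ}
    (h : IsOutcome (G.deleteEdges {s(e, f)}) W e p f' R) : IsOutcome G W e p f' R := by
  obtain ⟨hef', hne⟩ := SimpleGraph.deleteEdges_adj.1 h.adj
  have hadj : ∀ g, (G.deleteEdges {s(e, f)}).Adj f' g ↔ G.Adj f' g := fun g => by
    have : f' ≠ f := by rintro rfl; exact hne rfl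
    simp [SimpleGraph.deleteEdges_adj, hef'.ne', this]
  exact ⟨h.subset, h.mem, hef', fun g hg => by simpa only [hadj] using h.ne_and_not_adj g hg,
    fun g hg hgf hfg hp => h.mem_of_lt g hg hgf (by rwa [hadj]) fun heg =>
      hp (SimpleGraph.deleteEdges_adj.1 heg).1⟩

lemma IsOutcome.notMem {G : SimpleGraph V} {W R : Finset V} {e f : V} {p : V → ℕ}
    (h : IsOutcome G W e p f R) : e ∉ R := fun he => (h.ne_and_not_adj e he).2 h.adj.symm

variable [DecidableEq V]

lemma edgeLink_indComplex_deleteEdges {G : SimpleGraph V} [DecidableRel G.Adj] {W : Finset V}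
    {e f : V} (he : e ∈ W) (hf : f ∈ W) (hef : G.Adj e f) :
    edgeLink (indComplex (G.deleteEdges {s(e, f)}) W) e f =
      indComplex G {g ∈ W | ¬ G.Adj e g ∧ g ≠ f ∧ ¬ G.Adj f g} := by
  ext σ
  simp only [edgeLink, indComplex, Set.mem_ofPred_eq, SimpleGraph.IsIndepSet, Set.Pairwise,
    Finset.mem_coe, Finset.mem_insert, SimpleGraph.deleteEdges_adj, Set.mem_singleton_iff,
    Sym2.eq_iff, Finset.subset_iff, Finset.mem_filter, forall_eq_or_imp, he, hf, true_and]
  constructor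
  · rintro ⟨heσ, hfσ, hW, hindep⟩
    have hne : ∀ g ∈ σ, e ≠ g ∧ f ≠ g := fun g hg =>
      ⟨fun h => heσ (h ▸ hg), fun h => hfσ (h ▸ hg)⟩
    refine ⟨fun g hg => ⟨hW g hg, fun h => ?_, (hne g hg).2.symm, fun h => ?_⟩,
      fun u hu v hv huv h => ?_⟩
    · exact hindep.1.2.2 g hg (hne g hg).1 ⟨h, by grind⟩
    · exact hindep.2.1.2.2 g hg (hne g hg).2 ⟨h, by grind⟩
    · exact (hindep.2.2 u hu).2.2 v hv huv ⟨h, by grind⟩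
  · rintro ⟨hW, hindep⟩
    have hadj : ∀ g ∈ σ, ¬ G.Adj g e ∧ ¬ G.Adj g f := fun g hg =>
      ⟨fun h => (hW hg).2.1 h.symm, fun h => (hW hg).2.2.2 h.symm⟩
    exact ⟨fun h => (hW h).2.2.2 hef.symm, fun h => (hW h).2.2.1 rfl,
      fun g hg => (hW hg).1, by grind⟩

lemma acyclic_indComplex_of_explosion [Fintype V] {G : SimpleGraph V} [DecidableRel G.Adj]
    {W : Finset V} {e f : V} {d : ℕ} (he : e ∈ W) (hf : f ∈ W) (hef : G.Adj e f)
    (hdelete : Acyclic (indComplex (G.deleteEdges {s(e, f)}) W) (d + 1))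
    (hexplode : Acyclic (indComplex G {g ∈ W | ¬ G.Adj e g ∧ g ≠ f ∧ ¬ G.Adj f g}) d) :
    Acyclic (indComplex G W) (d + 1) := by
  rw [← edgeDeletion_indComplex_deleteEdges hef]
  exact acyclic_edgeDeletion hdelete (isLowerSet_indComplex _ _) hef.ne
    (by rwa [edgeLink_indComplex_deleteEdges he hf hef])

lemma isOutcome_of_forall_le {G : SimpleGraph V} [DecidableRel G.Adj] {W : Finset V} {e f : V}
    {p : V → ℕ} (hf : f ∈ W) (hef : G.Adj e f) (hmin : ∀ g ∈ W, G.Adj e g → p f ≤ p g) :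
    IsOutcome G W e p f {g ∈ W | ¬ G.Adj e g ∧ g ≠ f ∧ ¬ G.Adj f g} where
  subset := Finset.filter_subset _ _
  mem := hf
  adj := hef
  ne_and_not_adj _ hg := (Finset.mem_filter.1 hg).2.2
  mem_of_lt _ hg hgf hfg hp :=
    Finset.mem_filter.2 ⟨hg, fun heg => (hp heg).not_ge (hmin _ hg heg), hgf, hfg⟩

lemma acyclic_indComplex_of_outcomes [Fintype V] {G : SimpleGraph V} {W : Finset V} {e : V}
    (he : e ∈ W) (p : V → ℕ) (d : ℕ)
    (h : ∀ f R, IsOutcome G W e p f R → Acyclic (indComplex G R) d) :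
    Acyclic (indComplex G W) (d + 1) := by
  classical
  induction hm : (W.filter (G.Adj e)).card using Nat.strong_induction_on generalizing G with
  | _ m ih =>
  rcases (W.filter (G.Adj e)).eq_empty_or_nonempty with hempty | hne
  · refine acyclic_of_apex (x := e) (fun σ hσ => ?_) _
    have hisolated : ∀ v ∈ σ, ¬ G.Adj e v := fun v hv =>
      Finset.filter_eq_empty_iff.1 hempty (hσ.1 hv)
    refine ⟨Finset.insert_subset he hσ.1, ?_⟩
    rw [Finset.coe_insert]
    exact Set.Pairwise.insert hσ.2 fun v hv _ =>
      ⟨hisolated v hv, fun h' => hisolated v hv h'.symm⟩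
  · obtain ⟨f, hf, hmin⟩ := Finset.exists_min_image _ p hne
    obtain ⟨hfW, hef⟩ := Finset.mem_filter.1 hf
    have hsmall : (W.filter ((G.deleteEdges {s(e, f)}).Adj e)).card < m := by
      rw [← hm]
      refine Finset.card_lt_card ((Finset.ssubset_iff_of_subset fun g hg => ?_).2 ⟨f, hf, ?_⟩)
      · exact Finset.mem_filter.2 ((Finset.mem_filter.1 hg).imp_right fun h' =>
          (SimpleGraph.deleteEdges_adj.1 h').1)
      · simp [SimpleGraph.deleteEdges_adj]
    refine acyclic_indComplex_of_explosion he hfW hef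
      (ih _ hsmall (fun f' R hR => ?_) (by convert rfl))
      (h f _ (isOutcome_of_forall_le hfW hef fun g hg heg => hmin g (by simp [hg, heg])))
    rw [indComplex_congr fun u hu v hv => ?_]
    · exact h f' R hR.of_deleteEdges
    · have hue : u ≠ e := fun h' => hR.notMem (h' ▸ hu)
      have hve : v ≠ e := fun h' => hR.notMem (h' ▸ hv)
      simp [SimpleGraph.deleteEdges_adj, hue, hve]

lemma acyclic_indComplex_union_clique [Fintype V] {G : SimpleGraph V} {W Q : Finset V} {d : ℕ}
    (hQ : Q.Nonempty) (hclique : G.IsClique Q) (hWQ : ∀ u ∈ Q, ∀ v ∈ W, ¬ G.Adj u v)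
    (hdisj : Disjoint Q W) (hW : Acyclic (indComplex G W) d) :
    Acyclic (indComplex G (W ∪ Q)) (d + 1) := by
  obtain ⟨e, he⟩ := hQ
  refine acyclic_indComplex_of_outcomes (Finset.mem_union_right _ he) (fun _ => 0) d
    fun f R hR => ?_
  have hf : f ∈ Q := (Finset.mem_union.1 hR.mem).resolve_left fun hf => hWQ e he f hf hR.adj
  suffices R = W by rwa [this]
  ext g
  constructor
  · intro hg
    obtain ⟨hgf, hfg⟩ := hR.ne_and_not_adj g hg
    exact (Finset.mem_union.1 (hR.subset hg)).resolve_right fun h => hfg (hclique hf h hgf.symm)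
  · intro hg
    refine hR.mem_of_lt g (Finset.mem_union_left _ hg) ?_ (hWQ f hf g hg)
      fun heg => absurd heg (hWQ e he g hg)
    rintro rfl
    exact Finset.disjoint_left.1 hdisj hf hg

end Independence

/-! ### The topological Hall theorem -/

section Rainbow

variable {V α : Type*} [DecidableEq α]

lemma sum_erase_erase_eq_zero (c : Finset α → Chain V) (S : Finset α) :
    ∑ a ∈ S, ∑ b ∈ S.erase a, c ((S.erase a).erase b) = 0 := by
  rw [Finset.sum_sigma']
  refine Finset.sum_involution (fun x _ => ⟨x.2, x.1⟩) ?_ ?_ ?_ ?_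
  · rintro ⟨a, b⟩ _
    rw [Finset.erase_right_comm]
    exact CharTwo.add_self_eq_zero _
  · rintro ⟨a, b⟩ h _ heq
    simp only [Finset.mem_sigma, Finset.mem_erase] at h
    exact h.2.1 (congrArg Sigma.fst heq)
  · simp +contextual [eq_comm]
  · simp

variable [Fintype V] [DecidableEq V]

lemma exists_chain_system {K : Finset α → Set (Finset V)} (hempty : ∅ ∈ K ∅) (hmono : Monotone K)
    (hK : ∀ S, Acyclic (K S) S.card) (m : ℕ) :
    ∃ c : Finset α → Chain V, c ∅ = Pi.single ∅ 1 ∧ ∀ S, S.card ≤ m →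
      SupportedOn (K S) S.card (c S) ∧ boundary (c S) = ∑ a ∈ S, c (S.erase a) := by
  induction m with
  | zero =>
    refine ⟨fun _ => Pi.single ∅ 1, rfl, fun S hS => ?_⟩
    obtain rfl : S = ∅ := Finset.card_eq_zero.1 (Nat.le_zero.1 hS)
    refine ⟨fun σ hσ => ?_, by simp [boundary_single]⟩
    obtain rfl : σ = ∅ := by by_contra h; simp [h] at hσ
    exact ⟨rfl, hempty⟩
  | succ m ih =>
    obtain ⟨c, hc0, hc⟩ := ih
    have hfill : ∀ S : Finset α, S.card = m + 1 → ∃ w, SupportedOn (K S) (m + 1) w ∧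
        boundary w = ∑ a ∈ S, c (S.erase a) := by
      intro S hS
      have hcard : ∀ a ∈ S, (S.erase a).card = m := fun a ha => by
        rw [Finset.card_erase_of_mem ha, hS, Nat.add_sub_cancel]
      refine hK S m (by omega) _ (fun σ hσ => ?_) ?_
      · rw [Finset.sum_apply] at hσ
        obtain ⟨a, ha, hne⟩ := Finset.exists_ne_zero_of_sum_ne_zero hσ
        obtain ⟨hσm, hσK⟩ := (hc _ (hcard a ha).le).1 σ hne
        exact ⟨hσm.trans (hcard a ha), hmono (Finset.erase_subset _ _) hσK⟩
      · rw [map_sum, ← sum_erase_erase_eq_zero c S]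
        exact Finset.sum_congr rfl fun a ha => (hc _ (hcard a ha).le).2
    choose w hw using hfill
    refine ⟨fun S => if h : S.card = m + 1 then w S h else c S, by simp [hc0], fun S hS => ?_⟩
    have herase : ∀ a ∈ S, (S.erase a).card ≠ m + 1 := fun a ha =>
      ((Finset.card_erase_lt_of_mem ha).trans_le hS).ne
    simp only
    rw [Finset.sum_congr rfl fun a ha => dif_neg (herase a ha)]
    split_ifs with h
    · exact h ▸ hw S h
    · exact hc S (by omega)

-- Both sides have the same boundary and live in the top degree of the simplex on `S`.
lemma mapChain_eq_single [Finite α] {K : Finset α → Set (Finset V)} {col : V → α}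
    (hcol : ∀ S, ∀ σ ∈ K S, σ.image col ⊆ S) {c : Finset α → Chain V}
    (hc0 : c ∅ = Pi.single ∅ 1) (hc : ∀ S, SupportedOn (K S) S.card (c S))
    (hbc : ∀ S, boundary (c S) = ∑ a ∈ S, c (S.erase a)) (S : Finset α) :
    mapChain col (c S) = Pi.single S 1 := by
  cases nonempty_fintype α
  induction hm : S.card generalizing S with
  | zero =>
    obtain rfl := Finset.card_eq_zero.1 hm
    simp [hc0, mapChain_single]
  | succ m ih =>
    have hsupport : ∀ T ≠ S, mapChain col (c S) T = 0 := by
      refine fun T hT => Finset.sum_eq_zero fun σ hσ => ?_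
      obtain ⟨hσT, hcard⟩ := (Finset.mem_filter.1 hσ).2
      by_contra hne
      obtain ⟨hσS, hσK⟩ := hc S σ hne
      exact hT (Finset.eq_of_subset_of_card_le (hσT ▸ hcol S σ hσK) (by omega))
    obtain ⟨x, hsingle⟩ : ∃ x, mapChain col (c S) = x • Pi.single S 1 :=
      ⟨mapChain col (c S) S, funext fun T => by by_cases hT : T = S <;> simp [hT, hsupport]⟩
    obtain ⟨a, ha⟩ : S.Nonempty := Finset.card_pos.1 (by omega)
    have hboundary : boundary (mapChain col (c S)) = boundary (Pi.single S 1) := by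
      rw [← mapChain_boundary, hbc, map_sum, boundary_single]
      exact Finset.sum_congr rfl fun b hb => ih _ (by rw [Finset.card_erase_of_mem hb]; omega)
    have heval : (boundary (Pi.single S 1) : Chain α) (S.erase a) = 1 := by
      rw [boundary_apply, Finset.sum_eq_single a]
      · simp [Finset.insert_erase ha]
      · intro b _ hba
        have hnotMem : a ∉ insert b (S.erase a) := by simp [hba.symm]
        refine Pi.single_eq_of_ne (fun h => hnotMem ?_) _
        rwa [h]
      · simp
    have hx : x = 1 := by
      simpa [hsingle, map_smul, heval] using congrFun hboundary (S.erase a)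
    rw [hsingle, hx, one_smul]

theorem exists_rainbow [Fintype α] {K : Finset α → Set (Finset V)} {col : V → α} (hempty : ∅ ∈ K ∅)
    (hmono : Monotone K) (hcol : ∀ S, ∀ σ ∈ K S, σ.image col ⊆ S)
    (hK : ∀ S, Acyclic (K S) S.card) :
    ∃ σ ∈ K Finset.univ, σ.image col = Finset.univ ∧ σ.card = Fintype.card α := by
  obtain ⟨c, hc0, hc⟩ := exists_chain_system hempty hmono hK (Fintype.card α)
  replace hc := fun S => hc S (Finset.card_le_univ S)
  have hone := congrFun (mapChain_eq_single hcol hc0 (fun S => (hc S).1) (fun S => (hc S).2)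
    Finset.univ) Finset.univ
  rw [Pi.single_eq_same] at hone
  obtain ⟨σ, hσ, hz⟩ := Finset.exists_ne_zero_of_sum_ne_zero (hone.trans_ne one_ne_zero)
  obtain ⟨himage, hcard⟩ := (Finset.mem_filter.1 hσ).2
  exact ⟨σ, ((hc _).1 σ hz).2, himage, hcard⟩

end Rainbow

/-! ### Matchings in bipartite multigraphs -/

section Bipartite

variable {V B C : Type*}

/-- A set of edges of a bipartite multigraph, no two of which share an end. The multigraph is given
by its type `V` of edges and the maps `l` and `ρ` sending an edge to its two ends. -/
def IsBipMatching (l : V → B) (ρ : V → C) (M : Finset V) : Prop :=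
  Set.InjOn l M ∧ Set.InjOn ρ M

/-- The line graph of the bipartite multigraph whose edges have the ends given by `l` and `ρ`. -/
def lineGraph (l : V → B) (ρ : V → C) : SimpleGraph V where
  Adj e f := e ≠ f ∧ (l e = l f ∨ ρ e = ρ f)
  symm := ⟨fun _ _ h => ⟨h.1.symm, h.2.imp Eq.symm Eq.symm⟩⟩
  loopless := ⟨fun _ h => h.1 rfl⟩

open Classical in
/-- The size of a largest matching of the bipartite multigraph `(l, ρ)` inside `W`. -/
noncomputable def bipNu (l : V → B) (ρ : V → C) (W : Finset V) : ℕ :=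
  (W.powerset.filter (IsBipMatching l ρ)).sup Finset.card

variable {l : V → B} {ρ : V → C} {W M N : Finset V}

lemma IsBipMatching.mono (h : IsBipMatching l ρ M) (hN : N ⊆ M) : IsBipMatching l ρ N :=
  ⟨h.1.mono (by exact_mod_cast hN), h.2.mono (by exact_mod_cast hN)⟩

lemma IsBipMatching.swap (h : IsBipMatching l ρ M) : IsBipMatching ρ l M := ⟨h.2, h.1⟩

lemma isBipMatching_empty : IsBipMatching l ρ ∅ := by simp [IsBipMatching]

lemma IsBipMatching.card_filter_le_one [DecidableEq B] (h : IsBipMatching l ρ M) (b : B) :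
    {g ∈ M | l g = b}.card ≤ 1 := by
  simp only [Finset.card_le_one, Finset.mem_filter]
  exact fun g hg g' hg' => h.1 hg.1 hg'.1 (hg.2.trans hg'.2.symm)

lemma card_le_bipNu (hMW : M ⊆ W) (hM : IsBipMatching l ρ M) : M.card ≤ bipNu l ρ W := by
  classical
  exact Finset.le_sup (f := Finset.card) (Finset.mem_filter.2 ⟨Finset.mem_powerset.2 hMW, hM⟩)

lemma exists_card_eq_bipNu (l : V → B) (ρ : V → C) (W : Finset V) :
    ∃ M ⊆ W, IsBipMatching l ρ M ∧ M.card = bipNu l ρ W := by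
  classical
  obtain ⟨M, hM, h⟩ := Finset.exists_mem_eq_sup {M ∈ W.powerset | IsBipMatching l ρ M}
    ⟨∅, Finset.mem_filter.2 ⟨Finset.empty_mem_powerset W, isBipMatching_empty⟩⟩ Finset.card
  rw [Finset.mem_filter, Finset.mem_powerset] at hM
  exact ⟨M, hM.1, hM.2, h.symm⟩

lemma IsBipMatching.union [DecidableEq V] (hM : IsBipMatching l ρ M) (hN : IsBipMatching l ρ N)
    (hl : ∀ g ∈ M, ∀ g' ∈ N, l g ≠ l g') (hρ : ∀ g ∈ M, ∀ g' ∈ N, ρ g ≠ ρ g') :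
    IsBipMatching l ρ (M ∪ N) := by
  have hdisj : Disjoint (M : Set V) N :=
    Set.disjoint_left.2 fun g hg hg' => hl g (by simpa using hg) g (by simpa using hg') rfl
  rw [IsBipMatching, Finset.coe_union, Set.injOn_union hdisj, Set.injOn_union hdisj]
  exact ⟨⟨hM.1, hN.1, by simpa using hl⟩, hM.2, hN.2, by simpa using hρ⟩

lemma card_union_of_map_ne [DecidableEq V] (h : ∀ g ∈ M, ∀ g' ∈ N, l g ≠ l g') :
    (M ∪ N).card = M.card + N.card :=
  Finset.card_union_of_disjoint (Finset.disjoint_left.2 fun g hg hg' => h g hg g hg' rfl)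

-- A matching loses at most one edge for each vertex of the cover.
lemma bipNu_le_of_cover {R : Finset V} (X : Finset B) (Y : Finset C)
    (h : ∀ g ∈ W, g ∉ R → l g ∈ X ∨ ρ g ∈ Y) :
    bipNu l ρ W ≤ bipNu l ρ R + X.card + Y.card := by
  classical
  obtain ⟨M, hMW, hM, hcard⟩ := exists_card_eq_bipNu l ρ W
  have hR : {g ∈ M | g ∈ R}.card ≤ bipNu l ρ R :=
    card_le_bipNu (fun g hg => (Finset.mem_filter.1 hg).2) (hM.mono (Finset.filter_subset _ _))
  have hX : {g ∈ M | l g ∈ X}.card ≤ X.card :=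
    Finset.card_le_card_of_injOn l (fun g hg => (Finset.mem_filter.1 hg).2)
      (hM.mono (Finset.filter_subset _ _)).1
  have hY : {g ∈ M | ρ g ∈ Y}.card ≤ Y.card :=
    Finset.card_le_card_of_injOn ρ (fun g hg => (Finset.mem_filter.1 hg).2)
      (hM.mono (Finset.filter_subset _ _)).2
  have hcover : M ⊆ {g ∈ M | g ∈ R} ∪ {g ∈ M | l g ∈ X} ∪ {g ∈ M | ρ g ∈ Y} := by
    intro g hg
    simp only [Finset.mem_union, Finset.mem_filter, hg, true_and]
    by_cases hgR : g ∈ R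
    · exact Or.inl (Or.inl hgR)
    · exact (h g (hMW hg) hgR).imp_left Or.inr
  calc bipNu l ρ W = M.card := hcard.symm
    _ ≤ ({g ∈ M | g ∈ R} ∪ {g ∈ M | l g ∈ X} ∪ {g ∈ M | ρ g ∈ Y}).card :=
      Finset.card_le_card hcover
    _ ≤ {g ∈ M | g ∈ R}.card + {g ∈ M | l g ∈ X}.card + {g ∈ M | ρ g ∈ Y}.card :=
      (Finset.card_union_le _ _).trans (Nat.add_le_add_right (Finset.card_union_le _ _) _)
    _ ≤ _ := by omega

end Bipartite

section Hall

variable {V B C : Type*} [DecidableEq B] [DecidableEq C]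

/-- The vertices of the second class joined to `A` by an edge in `W`. -/
def nbr (l : V → B) (ρ : V → C) (W : Finset V) (A : Finset B) : Finset C :=
  {g ∈ W | l g ∈ A}.image ρ

variable {l : V → B} {ρ : V → C} {W : Finset V} {P : Finset B}

lemma mem_nbr {A : Finset B} {c : C} : c ∈ nbr l ρ W A ↔ ∃ g ∈ W, l g ∈ A ∧ ρ g = c := by
  simp [nbr, and_assoc]

lemma mem_nbr_of_mem {A : Finset B} {g : V} (hg : g ∈ W) (hA : l g ∈ A) : ρ g ∈ nbr l ρ W A :=
  mem_nbr.2 ⟨g, hg, hA, rfl⟩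

@[gcongr]
lemma nbr_mono {A A' : Finset B} (h : A ⊆ A') : nbr l ρ W A ⊆ nbr l ρ W A' :=
  Finset.image_subset_image (Finset.monotone_filter_right _ fun _ _ hg => h hg)

lemma nbr_union (A A' : Finset B) : nbr l ρ W (A ∪ A') = nbr l ρ W A ∪ nbr l ρ W A' := by
  ext c
  simp only [Finset.mem_union, mem_nbr, or_and_right, and_or_left, exists_or]

@[simp]
lemma nbr_empty : nbr l ρ W ∅ = ∅ := by
  simp [nbr]

lemma exists_bipMatching_of_hall {U : Finset C}
    (h : ∀ A ⊆ P, A.card ≤ (nbr l ρ W A \ U).card) :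
    ∃ M ⊆ W, IsBipMatching l ρ M ∧ M.card = P.card ∧ ∀ g ∈ M, l g ∈ P ∧ ρ g ∉ U := by
  classical
  have hhall : ∀ S : Finset P, S.card ≤ (S.biUnion fun b => nbr l ρ W {b.1} \ U).card := by
    intro S
    have hsub : nbr l ρ W (S.map (Function.Embedding.subtype _)) \ U ⊆
        S.biUnion fun b => nbr l ρ W {b.1} \ U := by
      intro c hc
      simp only [Finset.mem_sdiff, mem_nbr, Finset.mem_map] at hc
      obtain ⟨⟨g, hg, ⟨b, hb, hbg⟩, rfl⟩, hU⟩ := hc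
      exact Finset.mem_biUnion.2
        ⟨b, hb, Finset.mem_sdiff.2 ⟨mem_nbr_of_mem hg (by simp [← hbg]), hU⟩⟩
    have hS := h (S.map (Function.Embedding.subtype _)) fun b hb => by
      obtain ⟨b', _, rfl⟩ := Finset.mem_map.1 hb
      exact b'.2
    rw [Finset.card_map] at hS
    exact hS.trans (Finset.card_le_card hsub)
  obtain ⟨φ, hinj, hφ⟩ := (Finset.all_card_le_biUnion_card_iff_exists_injective _).1 hhall
  simp only [Finset.mem_sdiff, mem_nbr, Finset.mem_singleton] at hφ
  choose hg hU using hφ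
  choose g hgW hl hρ using hg
  have hginj : Function.Injective g := fun b b' hbb' => hinj (by rw [← hρ b, ← hρ b', hbb'])
  refine ⟨Finset.univ.image g, by simpa [Finset.image_subset_iff] using hgW, ⟨?_, ?_⟩, ?_, ?_⟩
  · simp only [Finset.coe_image, Finset.coe_univ, Set.image_univ]
    rintro _ ⟨b, rfl⟩ _ ⟨b', rfl⟩ heq
    rw [Subtype.ext ((hl b).symm.trans (heq.trans (hl b')))]
  · simp only [Finset.coe_image, Finset.coe_univ, Set.image_univ]
    rintro _ ⟨b, rfl⟩ _ ⟨b', rfl⟩ heq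
    rw [hinj ((hρ b).symm.trans (heq.trans (hρ b')))]
  · rw [Finset.card_image_of_injective _ hginj, Finset.card_univ, Fintype.card_coe]
  · simp only [Finset.mem_image, Finset.mem_univ, true_and, forall_exists_index,
      forall_apply_eq_imp_iff]
    exact fun b => ⟨by rw [hl]; exact b.2, by rw [hρ]; exact hU b⟩

-- Add `δ` vertices to the second class and join them to every vertex of the first.
lemma exists_bipMatching_of_hall_deficiency {δ : ℕ}
    (h : ∀ A ⊆ P, A.card ≤ (nbr l ρ W A).card + δ) :
    ∃ M ⊆ W, IsBipMatching l ρ M ∧ P.card ≤ M.card + δ := by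
  let ρ' : V ⊕ (B × Fin δ) → C ⊕ Fin δ := Sum.map ρ Prod.snd
  let l' : V ⊕ (B × Fin δ) → B := Sum.elim l Prod.fst
  let W' : Finset (V ⊕ (B × Fin δ)) := W.disjSum (P ×ˢ Finset.univ)
  have hhall : ∀ A ⊆ P, A.card ≤ (nbr l' ρ' W' A \ ∅).card := by
    intro A hA
    rcases A.eq_empty_or_nonempty with rfl | ⟨b, hb⟩
    · simp
    have hsub : (nbr l ρ W A).disjSum (Finset.univ : Finset (Fin δ)) ⊆ nbr l' ρ' W' A := by
      intro c hc
      rcases Finset.mem_disjSum.1 hc with ⟨c, hc', rfl⟩ | ⟨j, _, rfl⟩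
      · obtain ⟨g, hg, hgA, rfl⟩ := mem_nbr.1 hc'
        exact mem_nbr.2 ⟨Sum.inl g, by simp [W', hg], hgA, rfl⟩
      · exact mem_nbr.2 ⟨Sum.inr (b, j), by simp [W', hA hb], hb, rfl⟩
    rw [Finset.sdiff_empty]
    refine ((h A hA).trans_eq ?_).trans (Finset.card_le_card hsub)
    rw [Finset.card_disjSum, Finset.card_univ, Fintype.card_fin]
  obtain ⟨M, hMW, hM, hcard, -⟩ := exists_bipMatching_of_hall hhall
  have hright : M.toRight.card ≤ δ := by
    have hinj : Set.InjOn Prod.snd (M.toRight : Set (B × Fin δ)) := fun t ht t' ht' heq =>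
      Sum.inr_injective (hM.2 (Finset.mem_toRight.1 ht) (Finset.mem_toRight.1 ht')
        (congrArg Sum.inr heq))
    rw [← Finset.card_image_of_injOn hinj]
    exact (Finset.card_le_univ _).trans (by simp)
  refine ⟨M.toLeft, fun g hg => by simpa [W'] using hMW (Finset.mem_toLeft.1 hg), ⟨?_, ?_⟩, ?_⟩
  · exact fun g hg g' hg' heq => Sum.inl_injective
      (hM.1 (Finset.mem_toLeft.1 hg) (Finset.mem_toLeft.1 hg') heq)
  · exact fun g hg g' hg' heq => Sum.inl_injective
      (hM.2 (Finset.mem_toLeft.1 hg) (Finset.mem_toLeft.1 hg') (congrArg Sum.inl heq))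
  · rw [← hcard, ← Finset.card_toLeft_add_card_toRight]
    omega

lemma exists_bipMatching_card_add_card_le (l : V → B) (ρ : V → C) (W : Finset V) :
    ∃ M ⊆ W, IsBipMatching l ρ M ∧ ∃ A ⊆ W.image l,
      (W.image l).card + (nbr l ρ W A).card ≤ M.card + A.card := by
  obtain ⟨A, hA, hmax⟩ := Finset.exists_max_image (W.image l).powerset
    (fun A => (A.card : ℤ) - (nbr l ρ W A).card) ⟨∅, Finset.empty_mem_powerset _⟩
  have hempty : (0 : ℤ) ≤ A.card - (nbr l ρ W A).card := by
    simpa using hmax ∅ (Finset.empty_mem_powerset _)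
  obtain ⟨M, hMW, hM, hcard⟩ := exists_bipMatching_of_hall_deficiency (l := l) (ρ := ρ) (W := W)
    (P := W.image l) (δ := A.card - (nbr l ρ W A).card) fun A' hA' => by
      have := hmax A' (Finset.mem_powerset.2 hA')
      omega
  exact ⟨M, hMW, hM, A, Finset.mem_powerset.1 hA, by omega⟩

lemma sum_le_card_of_sum_fiber_le_one {κ : Type*} [DecidableEq κ] {f : V → κ} {s : Finset V}
    {t : Finset κ} {w : V → ℚ} (hmaps : ∀ g ∈ s, f g ∈ t)
    (hfiber : ∀ k ∈ t, ∑ g ∈ s with f g = k, w g ≤ 1) : ∑ g ∈ s, w g ≤ t.card := by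
  rw [← Finset.sum_fiberwise_of_maps_to hmaps w]
  exact (Finset.sum_le_sum hfiber).trans_eq (by simp)

lemma exists_bipMatching_of_fractional (w : V → ℚ) (hw : ∀ g ∈ W, 0 ≤ w g)
    (hl : ∀ b, ∑ g ∈ W with l g = b, w g ≤ 1) (hρ : ∀ c, ∑ g ∈ W with ρ g = c, w g ≤ 1) :
    ∃ M ⊆ W, IsBipMatching l ρ M ∧ ∑ g ∈ W, w g ≤ M.card := by
  obtain ⟨M, hMW, hM, A, hA, hcard⟩ := exists_bipMatching_card_add_card_le l ρ W
  refine ⟨M, hMW, hM, ?_⟩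
  have hfilter : ∀ (p q : V → Prop) [DecidablePred p] [DecidablePred q],
      ∑ g ∈ W with q g, w g ≤ 1 → ∑ g ∈ W.filter p with q g, w g ≤ 1 := fun p q _ _ h =>
    (Finset.sum_le_sum_of_subset_of_nonneg
      (Finset.filter_subset_filter _ (Finset.filter_subset _ _))
      fun g hg _ => hw g (Finset.mem_filter.1 hg).1).trans h
  have hin : ∑ g ∈ W with l g ∈ A, w g ≤ (nbr l ρ W A).card :=
    sum_le_card_of_sum_fiber_le_one (fun g hg => Finset.mem_image_of_mem ρ hg)
      fun c _ => hfilter _ _ (hρ c)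
  have hout : ∑ g ∈ W with l g ∉ A, w g ≤ (W.image l \ A).card := by
    refine sum_le_card_of_sum_fiber_le_one (fun g hg => ?_) fun b _ => hfilter _ _ (hl b)
    rw [Finset.mem_filter] at hg
    exact Finset.mem_sdiff.2 ⟨Finset.mem_image_of_mem _ hg.1, hg.2⟩
  rw [← Finset.sum_filter_add_sum_filter_not W (fun g => l g ∈ A)]
  refine (add_le_add hin hout).trans ?_
  have := Finset.card_sdiff_add_card_eq_card hA
  exact_mod_cast (by omega : (nbr l ρ W A).card + (W.image l \ A).card ≤ M.card)

end Hall

section Surplus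

variable {V B C : Type*} {l : V → B} {ρ : V → C} {W R M N : Finset V} {e f g : V} {p : V → ℕ}

lemma not_lineGraph_adj_of_ne (hl : l g ≠ l f) (hρ : ρ g ≠ ρ f) :
    g ≠ f ∧ ¬ (lineGraph l ρ).Adj f g :=
  ⟨fun h => hl (h ▸ rfl), fun h => h.2.elim (hl ∘ Eq.symm) (hρ ∘ Eq.symm)⟩

lemma IsOutcome.mem_of_ne (h : IsOutcome (lineGraph l ρ) W e p f R) (hg : g ∈ W)
    (hl : l g ≠ l f) (hρ : ρ g ≠ ρ f) (hp : l g = l e ∨ ρ g = ρ e → p g < p f) : g ∈ R := by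
  obtain ⟨hgf, hadj⟩ := not_lineGraph_adj_of_ne hl hρ
  exact h.mem_of_lt g hg hgf hadj fun heg => hp (heg.2.imp Eq.symm Eq.symm)

lemma IsOutcome.eq_of_notMem (h : IsOutcome (lineGraph l ρ) W e p f R) (hg : g ∈ W)
    (hgR : g ∉ R) : l g = l f ∨ ρ g = ρ f ∨ l g = l e ∨ ρ g = ρ e := by
  by_contra! hne
  exact hgR (h.mem_of_ne hg hne.1 hne.2.1 fun hor => absurd hor (not_or.2 hne.2.2))

lemma IsOutcome.card_le_bipNu (h : IsOutcome (lineGraph l ρ) W e p f R) (hMW : M ⊆ W)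
    (hM : IsBipMatching l ρ M) (hl : ∀ g ∈ M, l g ≠ l f) (hρ : ∀ g ∈ M, ρ g ≠ ρ f)
    (hp : ∀ g ∈ M, l g = l e ∨ ρ g = ρ e → p g < p f) : M.card ≤ bipNu l ρ R :=
  Tripartite.card_le_bipNu
    (fun g hg => h.mem_of_ne (hMW hg) (hl g hg) (hρ g hg) (hp g hg)) hM

variable [DecidableEq B] [DecidableEq C] {P : Finset B}

/-- Hall's condition for `P` with one neighbour to spare: every nonempty subset of `P` has more
neighbours than elements. -/
def HasSurplus (l : V → B) (ρ : V → C) (W : Finset V) (P : Finset B) : Prop :=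
  ∀ A ⊆ P, A.Nonempty → A.card + 1 ≤ (nbr l ρ W A).card

lemma HasSurplus.nbr_inter (h : HasSurplus l ρ W P) {X Y : Finset B} (hX : X ⊆ P) (hY : Y ⊆ P)
    (hXt : (nbr l ρ W X).card = X.card + 1) (hYt : (nbr l ρ W Y).card = Y.card + 1)
    (hXY : 1 < (nbr l ρ W X ∩ nbr l ρ W Y).card) :
    nbr l ρ W (X ∩ Y) = nbr l ρ W X ∩ nbr l ρ W Y ∧
      (nbr l ρ W (X ∩ Y)).card = (X ∩ Y).card + 1 := by
  have hsub : nbr l ρ W (X ∩ Y) ⊆ nbr l ρ W X ∩ nbr l ρ W Y :=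
    Finset.subset_inter (nbr_mono Finset.inter_subset_left) (nbr_mono Finset.inter_subset_right)
  have hXne : X.Nonempty := by
    rw [Finset.nonempty_iff_ne_empty]
    rintro rfl
    simp at hXt
  have hunion := h (X ∪ Y) (Finset.union_subset hX hY) (hXne.mono Finset.subset_union_left)
  rw [nbr_union] at hunion
  have hnbr := Finset.card_union_add_card_inter (nbr l ρ W X) (nbr l ρ W Y)
  have hcard := Finset.card_union_add_card_inter X Y
  have hinter := h (X ∩ Y) (Finset.inter_subset_left.trans hX) (Finset.card_pos.1 (by omega))
  have heq := Finset.eq_of_subset_of_card_le hsub (by omega)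
  exact ⟨heq, by rw [heq] at hinter ⊢; omega⟩

-- In a smallest tight `X` sharing two neighbours with a vertex outside it, pick `s ∈ X`. If `s`
-- shares two neighbours with a tight `Y ∌ s`, then it also does so with the smaller set `X ∩ Y`.
lemma HasSurplus.exists_forall_tight_inter_le_one (h : HasSurplus l ρ W P) (hP : P.Nonempty) :
    ∃ t ∈ P, ∀ A ⊆ P.erase t, (nbr l ρ W A).card = A.card + 1 →
      (nbr l ρ W A ∩ nbr l ρ W {t}).card ≤ 1 := by
  by_contra! hcon
  let IsBad : Finset B → Prop := fun A => ∃ t ∈ P, A ⊆ P.erase t ∧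
    (nbr l ρ W A).card = A.card + 1 ∧ 1 < (nbr l ρ W A ∩ nbr l ρ W {t}).card
  obtain ⟨X, ⟨t, -, hXt, hXtight, hXlt⟩, hmin⟩ : ∃ X, IsBad X ∧ ∀ Y ⊂ X, ¬ IsBad Y := by
    obtain ⟨t, ht⟩ := hP
    obtain ⟨A, hA⟩ := hcon t ht
    obtain ⟨X, hX⟩ := exists_minimal_of_wellFoundedLT IsBad ⟨A, t, ht, hA⟩
    exact ⟨X, hX.prop, fun Y hY hbadY => hX.not_prop_of_lt hY hbadY⟩
  have hXP := hXt.trans (Finset.erase_subset _ _)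
  obtain ⟨s, hs⟩ : X.Nonempty := by
    rw [Finset.nonempty_iff_ne_empty]
    rintro rfl
    simp at hXtight
  obtain ⟨Y, hYs, hYtight, hYlt⟩ := hcon s (hXP hs)
  have hsX : nbr l ρ W {s} ⊆ nbr l ρ W X := nbr_mono (Finset.singleton_subset_iff.2 hs)
  have hsub : nbr l ρ W Y ∩ nbr l ρ W {s} ⊆ nbr l ρ W X ∩ nbr l ρ W Y := fun c hc =>
    Finset.mem_inter.2 ⟨hsX (Finset.mem_inter.1 hc).2, (Finset.mem_inter.1 hc).1⟩
  obtain ⟨heq, htight⟩ := h.nbr_inter hXP (hYs.trans (Finset.erase_subset _ _)) hXtight hYtight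
    (hYlt.trans_le (Finset.card_le_card hsub))
  refine hmin (X ∩ Y) ⟨Finset.inter_subset_left, fun hXY => ?_⟩
    ⟨s, hXP hs, Finset.inter_subset_right.trans hYs, htight, hYlt.trans_le
      (Finset.card_le_card (heq ▸ Finset.subset_inter hsub Finset.inter_subset_right))⟩
  exact Finset.notMem_erase s P (hYs (Finset.mem_inter.1 (hXY hs)).2)

lemma HasSurplus.card_le_card_sdiff_singleton (h : HasSurplus l ρ W P) {A : Finset B}
    (hA : A ⊆ P) (c : C) : A.card ≤ (nbr l ρ W A \ {c}).card := by
  rcases A.eq_empty_or_nonempty with rfl | hne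
  · simp
  · have hnbr := h A hA hne
    have hsdiff := Finset.le_card_sdiff {c} (nbr l ρ W A)
    rw [Finset.card_singleton] at hsdiff
    omega

lemma HasSurplus.card_le_card_sdiff (h : HasSurplus l ρ W P) {A : Finset B} (hA : A ⊆ P)
    {t : B} {U : Finset C} (hU : U ⊆ nbr l ρ W {t}) (hcard : U.card ≤ 2)
    (htight : (nbr l ρ W A).card = A.card + 1 → (nbr l ρ W A ∩ nbr l ρ W {t}).card ≤ 1) :
    A.card ≤ (nbr l ρ W A \ U).card := by
  rcases A.eq_empty_or_nonempty with rfl | hne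
  · simp
  have hnbr := h A hA hne
  have hsdiff := Finset.card_sdiff_add_card_inter (nbr l ρ W A) U
  have hle := Finset.card_le_card (Finset.inter_subset_inter_left hU : nbr l ρ W A ∩ U ⊆ _)
  have hle' := Finset.card_le_card (Finset.inter_subset_right : nbr l ρ W A ∩ U ⊆ U)
  by_cases heq : (nbr l ρ W A).card = A.card + 1
  · have := htight heq
    omega
  · omega

lemma IsOutcome.card_add_card_le_bipNu [DecidableEq V] (h : IsOutcome (lineGraph l ρ) W e p f R)
    (hMW : M ⊆ W) (hM : IsBipMatching l ρ M) (hMP : ∀ g ∈ M, l g ∈ P)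
    (hNW : N ⊆ W) (hN : IsBipMatching l ρ N) (hNP : ∀ g ∈ N, l g ∉ P ∧ ρ g ∉ nbr l ρ W P)
    (hl : ∀ g ∈ M ∪ N, l g ≠ l f) (hρ : ∀ g ∈ M ∪ N, ρ g ≠ ρ f)
    (hp : ∀ g ∈ M ∪ N, l g = l e ∨ ρ g = ρ e → p g < p f) :
    M.card + N.card ≤ bipNu l ρ R := by
  have hne : ∀ g ∈ M, ∀ g' ∈ N, l g ≠ l g' := fun g hg g' hg' heq =>
    (hNP g' hg').1 (heq ▸ hMP g hg)
  rw [← card_union_of_map_ne hne]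
  refine h.card_le_bipNu (Finset.union_subset hMW hNW) (hM.union hN hne ?_) hl hρ hp
  exact fun g hg g' hg' heq => (hNP g' hg').2 (heq ▸ mem_nbr_of_mem (hMW hg) (hMP g hg))

section Outcome

variable {M₁ : Finset V} (hsur : HasSurplus l ρ W P) (hM₁W : M₁ ⊆ W) (hM₁ : IsBipMatching l ρ M₁)
  (hM₁P : ∀ g ∈ M₁, l g ∉ P ∧ ρ g ∉ nbr l ρ W P) (he : e ∈ W) (heP : l e ∈ P)
include hsur hM₁W hM₁ hM₁P he heP

lemma HasSurplus.card_le_bipNu_of_left_eq (h : IsOutcome (lineGraph l ρ) W e p f R)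
    (htight : ∀ A ⊆ P.erase (l e), (nbr l ρ W A).card = A.card + 1 →
      (nbr l ρ W A ∩ nbr l ρ W {l e}).card ≤ 1)
    (hfe : l f = l e) : P.card + M₁.card ≤ bipNu l ρ R + 1 := by
  classical
  have hU : {ρ e, ρ f} ⊆ nbr l ρ W {l e} := by
    rw [Finset.insert_subset_iff, Finset.singleton_subset_iff]
    exact ⟨mem_nbr_of_mem he (by simp), mem_nbr_of_mem h.mem (by simp [hfe])⟩
  have hUP := hU.trans (nbr_mono (Finset.singleton_subset_iff.2 heP))
  obtain ⟨M, hMW, hM, hcard, hMP⟩ := exists_bipMatching_of_hall fun A hA =>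
    hsur.card_le_card_sdiff (hA.trans (Finset.erase_subset (l e) P)) hU Finset.card_le_two
      (htight A hA)
  have hne : ∀ g ∈ M ∪ M₁, l g ≠ l e ∧ ρ g ∉ ({ρ e, ρ f} : Finset C) := fun g hg => by
    rcases Finset.mem_union.1 hg with hg | hg
    · exact ⟨Finset.ne_of_mem_erase (hMP g hg).1, (hMP g hg).2⟩
    · exact ⟨fun heq => (hM₁P g hg).1 (heq ▸ heP), fun hmem => (hM₁P g hg).2 (hUP hmem)⟩
  simp only [Finset.mem_insert, Finset.mem_singleton, not_or] at hne
  have := h.card_add_card_le_bipNu hMW hM (fun g hg => Finset.mem_of_mem_erase (hMP g hg).1)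
    hM₁W hM₁ hM₁P (fun g hg => hfe ▸ (hne g hg).1) (fun g hg => (hne g hg).2.2)
    fun g hg hor => absurd hor (not_or.2 ⟨(hne g hg).1, (hne g hg).2.1⟩)
  rw [hcard, Finset.card_erase_of_mem heP] at this
  omega

lemma HasSurplus.card_le_bipNu_of_left_ne
    (h : IsOutcome (lineGraph l ρ) W e (fun g => if l g = l e then 0 else 1) f R)
    (hfe : l f ≠ l e) : P.card + M₁.card ≤ bipNu l ρ R + 1 := by
  classical
  have hρfe : ρ f = ρ e := (h.adj.2.resolve_left hfe.symm).symm
  obtain ⟨M, hMW, hM, hcard, hMP⟩ := exists_bipMatching_of_hall fun A hA =>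
    hsur.card_le_card_sdiff_singleton (hA.trans (Finset.erase_subset (l f) P)) (ρ e)
  have hne : ∀ g ∈ M ∪ {g ∈ M₁ | l g ≠ l f}, l g ≠ l f ∧ ρ g ≠ ρ e := fun g hg => by
    rcases Finset.mem_union.1 hg with hg | hg
    · exact ⟨Finset.ne_of_mem_erase (hMP g hg).1, by simpa using (hMP g hg).2⟩
    · rw [Finset.mem_filter] at hg
      exact ⟨hg.2, fun heq => (hM₁P g hg.1).2 (heq ▸ mem_nbr_of_mem he heP)⟩
  have hle := h.card_add_card_le_bipNu hMW hM
    (fun g hg => Finset.mem_of_mem_erase (hMP g hg).1) ((Finset.filter_subset _ _).trans hM₁W)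
    (hM₁.mono (Finset.filter_subset _ _)) (fun g hg => hM₁P g (Finset.mem_filter.1 hg).1)
    (fun g hg => (hne g hg).1) (fun g hg => hρfe ▸ (hne g hg).2)
    fun g hg hor => by simp [hor.resolve_right (hne g hg).2, hfe]
  have hsplit : {g ∈ M₁ | l g = l f}.card + {g ∈ M₁ | l g ≠ l f}.card = M₁.card :=
    Finset.card_filter_add_card_filter_not _
  have hone := hM₁.card_filter_le_one (l f)
  rw [hcard] at hle
  by_cases hfP : l f ∈ P
  · have hempty : {g ∈ M₁ | l g = l f} = ∅ :=
      Finset.filter_eq_empty_iff.2 fun g hg heq => (hM₁P g hg).1 (heq ▸ hfP)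
    rw [hempty, Finset.card_empty] at hsplit
    rw [Finset.card_erase_of_mem hfP] at hle
    omega
  · rw [Finset.erase_eq_of_notMem hfP] at hle
    omega

end Outcome

lemma HasSurplus.exists_explosion (hsur : HasSurplus l ρ W P) (hP : P.Nonempty)
    {M₁ : Finset V} (hM₁W : M₁ ⊆ W) (hM₁ : IsBipMatching l ρ M₁)
    (hM₁P : ∀ g ∈ M₁, l g ∉ P ∧ ρ g ∉ nbr l ρ W P) :
    ∃ e ∈ W, ∃ p : V → ℕ, ∀ f R, IsOutcome (lineGraph l ρ) W e p f R →
      P.card + M₁.card ≤ bipNu l ρ R + 1 := by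
  obtain ⟨t, ht, htight⟩ := hsur.exists_forall_tight_inter_le_one hP
  obtain ⟨c, hc⟩ : (nbr l ρ W {t}).Nonempty := Finset.card_pos.1 <| by
    have := hsur {t} (Finset.singleton_subset_iff.2 ht) (Finset.singleton_nonempty t)
    omega
  obtain ⟨e, heW, het, -⟩ := mem_nbr.1 hc
  obtain rfl := Finset.mem_singleton.1 het
  refine ⟨e, heW, fun g => if l g = l e then 0 else 1, fun f R h => ?_⟩
  by_cases hfe : l f = l e
  · exact hsur.card_le_bipNu_of_left_eq hM₁W hM₁ hM₁P heW ht h htight hfe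
  · exact hsur.card_le_bipNu_of_left_ne hM₁W hM₁ hM₁P heW ht h hfe

end Surplus

/-! ### The potential of a bipartite multigraph -/

section Potential

variable {V B C : Type*} {l : V → B} {ρ : V → C} {r : ℕ} {W R Q : Finset V} {e f g : V}
  {p : V → ℕ}

lemma lineGraph_swap (l : V → B) (ρ : V → C) : lineGraph ρ l = lineGraph l ρ := by
  ext g g'
  exact and_congr_right' or_comm

variable [DecidableEq B] [DecidableEq C]

/-- Every vertex meets at most `r` edges of `W`. -/
def DegLE (l : V → B) (ρ : V → C) (r : ℕ) (W : Finset V) : Prop :=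
  (∀ b, {g ∈ W | l g = b}.card ≤ r) ∧ ∀ c, {g ∈ W | ρ g = c}.card ≤ r

/-- `Q` consists of all the edges of `W` at `x₁` or `x₂`, and of all those at `y₁` or `y₂`, it has
`2r` edges, and all four pairs of ends occur. Under `DegLE l ρ r W` this means that `Q` is a
component of `W` that is a 4-cycle whose edges have multiplicities adding up to `2r`. -/
def IsFourCycle (l : V → B) (ρ : V → C) (r : ℕ) (W Q : Finset V) : Prop :=
  ∃ x₁ x₂ : B, ∃ y₁ y₂ : C, x₁ ≠ x₂ ∧ y₁ ≠ y₂ ∧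
    Q = {g ∈ W | l g = x₁ ∨ l g = x₂} ∧ Q = {g ∈ W | ρ g = y₁ ∨ ρ g = y₂} ∧
    Q.card = 2 * r ∧ ∀ x y, (x = x₁ ∨ x = x₂) → (y = y₁ ∨ y = y₂) → ∃ g ∈ Q, l g = x ∧ ρ g = y

open Classical in
/-- The components of `W` that are 4-cycles of size `2r`. -/
noncomputable def fourCycles (l : V → B) (ρ : V → C) (r : ℕ) (W : Finset V) :
    Finset (Finset V) := {Q ∈ W.powerset | IsFourCycle l ρ r W Q}

/-- A lower bound, up to the factor `12r²`, for the acyclicity of the matching complex of `W`: every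
explosion used decreases it by at most `12r²`. -/
noncomputable def potential (l : V → B) (ρ : V → C) (r : ℕ) (W : Finset V) : ℤ :=
  4 * r ^ 2 * bipNu l ρ W + (2 * r + 1) * W.card - 2 * r * (fourCycles l ρ r W).card

lemma DegLE.swap (h : DegLE l ρ r W) : DegLE ρ l r W := ⟨h.2, h.1⟩

lemma DegLE.mono (h : DegLE l ρ r W) (hR : R ⊆ W) : DegLE l ρ r R :=
  ⟨fun b => (Finset.card_le_card (Finset.filter_subset_filter _ hR)).trans (h.1 b),
    fun c => (Finset.card_le_card (Finset.filter_subset_filter _ hR)).trans (h.2 c)⟩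

lemma DegLE.pos (h : DegLE l ρ r W) (hg : g ∈ W) : 1 ≤ r :=
  (Finset.card_pos.2 ⟨g, by simp [hg]⟩).trans_le (h.1 (l g))

lemma mem_fourCycles : Q ∈ fourCycles l ρ r W ↔ IsFourCycle l ρ r W Q := by
  classical
  rw [fourCycles, Finset.mem_filter, Finset.mem_powerset, and_iff_right_iff_imp]
  rintro ⟨x₁, x₂, y₁, y₂, -, -, hl, -⟩
  exact hl ▸ Finset.filter_subset _ _

lemma potential_le {i j k : ℕ} (hν : bipNu l ρ W ≤ bipNu l ρ R + i)
    (hcard : W.card ≤ R.card + j)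
    (hcycles : (fourCycles l ρ r R).card + k ≤ (fourCycles l ρ r W).card) :
    potential l ρ r W ≤ potential l ρ r R + (4 * r ^ 2 * i + (2 * r + 1) * j - 2 * r * k) := by
  unfold potential
  zify at hν hcard hcycles
  have hν' := mul_le_mul_of_nonneg_left hν (by positivity : (0 : ℤ) ≤ 4 * r ^ 2)
  have hcard' := mul_le_mul_of_nonneg_left hcard (by positivity : (0 : ℤ) ≤ 2 * r + 1)
  have hcycles' := mul_le_mul_of_nonneg_left hcycles (by positivity : (0 : ℤ) ≤ 2 * r)
  linarith

lemma DegLE.card_filter_or_le (h : DegLE l ρ r W) (x₁ x₂ : B) :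
    {g ∈ W | l g = x₁ ∨ l g = x₂}.card ≤ 2 * r := by
  classical
  rw [Finset.filter_or, two_mul]
  exact (Finset.card_union_le _ _).trans (Nat.add_le_add (h.1 x₁) (h.1 x₂))

lemma DegLE.card_erase_filter_lt [DecidableEq V] (h : DegLE l ρ r W) (hg : g ∈ W) :
    ({g' ∈ W | l g' = l g}.erase g).card < r :=
  (Finset.card_erase_lt_of_mem (by simp [hg])).trans_le (h.1 (l g))

lemma IsFourCycle.mono (hd : DegLE l ρ r W) (hR : R ⊆ W) (h : IsFourCycle l ρ r R Q) :
    IsFourCycle l ρ r W Q := by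
  obtain ⟨x₁, x₂, y₁, y₂, hx, hy, hl, hρ, hcard, hall⟩ := h
  refine ⟨x₁, x₂, y₁, y₂, hx, hy, ?_, ?_, hcard, hall⟩
  · refine Finset.eq_of_subset_of_card_le ?_ (hcard ▸ hd.card_filter_or_le x₁ x₂)
    exact hl ▸ Finset.filter_subset_filter _ hR
  · refine Finset.eq_of_subset_of_card_le ?_ (hcard ▸ hd.swap.card_filter_or_le y₁ y₂)
    exact hρ ▸ Finset.filter_subset_filter _ hR

lemma fourCycles_mono (hd : DegLE l ρ r W) (hR : R ⊆ W) :
    fourCycles l ρ r R ⊆ fourCycles l ρ r W := fun _ hQ =>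
  mem_fourCycles.2 ((mem_fourCycles.1 hQ).mono hd hR)

lemma potential_le_of_cover (hd : DegLE l ρ r W) (hf : f ∈ W) (hR : R ⊆ W)
    (h : ∀ g ∈ W, l g ≠ l f → ρ g ≠ ρ f → g ∈ R) :
    potential l ρ r W ≤ potential l ρ r R + 12 * r ^ 2 := by
  classical
  have hcover : ∀ g ∈ W, g ∉ R → l g = l f ∨ ρ g = ρ f := fun g hg hgR =>
    or_iff_not_imp_left.2 fun hl => by_contra fun hρ => hgR (h g hg hl hρ)
  have hsub : W \ R ⊆ {g ∈ W | l g = l f} ∪ {g ∈ W | ρ g = ρ f}.erase f := by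
    intro g hg
    rw [Finset.mem_sdiff] at hg
    simp only [Finset.mem_union, Finset.mem_filter, Finset.mem_erase, hg.1, true_and]
    have := hcover g hg.1 hg.2
    grind
  have hcard : W.card ≤ R.card + (2 * r - 1) := by
    have := (Finset.card_le_card hsub).trans (Finset.card_union_le _ _)
    have := Finset.card_le_card_sdiff_add_card (s := W) (t := R)
    have := hd.1 (l f)
    have := hd.swap.card_erase_filter_lt hf
    omega
  have hν := bipNu_le_of_cover {l f} {ρ f} (by simpa using hcover)
  simp only [Finset.card_singleton] at hν
  have hpos := hd.pos hf
  have := potential_le (r := r) (i := 2) (k := 0) (by omega) hcard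
    (Finset.card_le_card (fourCycles_mono hd hR))
  rw [Nat.cast_sub (by omega)] at this
  push_cast at this
  nlinarith

section Outcome

variable (h : IsOutcome (lineGraph l ρ) W e p f R) (hd : DegLE l ρ r W) (he : e ∈ W)
include h hd he

lemma IsOutcome.card_le_of_left_eq (hef : l e = l f) : W.card + 2 ≤ R.card + 3 * r := by
  classical
  have hsub : W \ R ⊆ {g ∈ W | l g = l e} ∪
      ({g ∈ W | ρ g = ρ e}.erase e ∪ {g ∈ W | ρ g = ρ f}.erase f) := by
    intro g hg
    rw [Finset.mem_sdiff] at hg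
    simp only [Finset.mem_union, Finset.mem_filter, Finset.mem_erase, hg.1, true_and]
    have := h.eq_of_notMem hg.1 hg.2
    grind
  have hcard := (Finset.card_le_card hsub).trans ((Finset.card_union_le _ _).trans
    (Nat.add_le_add_left (Finset.card_union_le _ _) _))
  have := Finset.card_le_card_sdiff_add_card (s := W) (t := R)
  have := hd.1 (l e)
  have := hd.swap.card_erase_filter_lt he
  have := hd.swap.card_erase_filter_lt h.mem
  omega

lemma IsOutcome.card_le : W.card + 2 ≤ R.card + 3 * r :=
  h.adj.2.elim (h.card_le_of_left_eq hd he) fun hef =>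
    (lineGraph_swap l ρ ▸ h).card_le_of_left_eq hd.swap he hef

lemma IsOutcome.potential_le_of_bipNu_le (hν : bipNu l ρ W ≤ bipNu l ρ R + 1) :
    potential l ρ r W ≤ potential l ρ r R + 12 * r ^ 2 := by
  have hcard := h.card_le hd he
  have hpos := hd.pos he
  have := potential_le (r := r) (j := 3 * r - 2) (k := 0) hν (by omega)
    (Finset.card_le_card (fourCycles_mono hd h.subset))
  rw [Nat.cast_sub (by omega)] at this
  push_cast at this
  nlinarith

end Outcome

end Potential

/-! ### Explosions inside a block -/

section Block

variable {V B C : Type*} [DecidableEq B] [DecidableEq C] {l : V → B} {ρ : V → C} {r : ℕ}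
  {W R : Finset V} {X : Finset B} {e f g : V} {p : V → ℕ}

/-- `X` is a minimal nonempty set without surplus: it has as many neighbours as elements, whereas
every smaller nonempty set has more. -/
structure IsBlock (l : V → B) (ρ : V → C) (W : Finset V) (X : Finset B) : Prop where
  nonempty : X.Nonempty
  card_nbr : (nbr l ρ W X).card = X.card
  surplus : ∀ A ⊂ X, A.Nonempty → A.card + 1 ≤ (nbr l ρ W A).card

/-- The order in which the neighbours of an edge at `y` inside the block `X` are treated. -/
def blockOrder (l : V → B) (ρ : V → C) (X : Finset B) (y : C) (g : V) : ℕ :=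
  if ρ g = y then (if l g ∈ X then 0 else 2) else 1

/-- The edges of `W` that join `c` to the complement of `X`. -/
def edgesOutside (l : V → B) (ρ : V → C) (W : Finset V) (X : Finset B) (c : C) : Finset V :=
  {g ∈ W | ρ g = c ∧ l g ∉ X}

lemma IsBlock.hasSurplus_erase (h : IsBlock l ρ W X) {x : B} (hx : x ∈ X) :
    HasSurplus l ρ W (X.erase x) := fun A hA =>
  h.surplus A (hA.trans_ssubset (Finset.erase_ssubset hx))

lemma exists_isBlock (h : ¬ HasSurplus l ρ W (W.image l)) : ∃ X, IsBlock l ρ W X := by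
  obtain ⟨X, hX⟩ := exists_minimal_of_wellFoundedLT
    (fun A => A ⊆ W.image l ∧ A.Nonempty ∧ (nbr l ρ W A).card ≤ A.card) (by
      simp only [HasSurplus, not_forall] at h
      obtain ⟨A, hA, hne, hlt⟩ := h
      exact ⟨A, hA, hne, by omega⟩)
  obtain ⟨hXW, ⟨x, hx⟩, hXcard⟩ := hX.prop
  have hsur : ∀ A ⊂ X, A.Nonempty → A.card + 1 ≤ (nbr l ρ W A).card := fun A hA hne => by
    by_contra hlt
    exact hX.not_prop_of_lt hA ⟨hA.subset.trans hXW, hne, by omega⟩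
  refine ⟨X, ⟨x, hx⟩, le_antisymm hXcard ?_, hsur⟩
  have hcard := Finset.card_erase_add_one hx
  rcases (X.erase x).eq_empty_or_nonempty with hempty | hne
  · obtain ⟨g, hg, rfl⟩ := Finset.mem_image.1 (hXW hx)
    have := Finset.card_pos.2 ⟨_, mem_nbr_of_mem (ρ := ρ) hg hx⟩
    rw [hempty, Finset.card_empty] at hcard
    omega
  · have := hsur _ (Finset.erase_ssubset hx) hne
    have := Finset.card_le_card (nbr_mono (l := l) (ρ := ρ) (W := W) (Finset.erase_subset x X))
    omega

lemma IsBlock.exists_outer (h : IsBlock l ρ W X) : ∃ M ⊆ W, IsBipMatching l ρ M ∧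
    (∀ g ∈ M, l g ∉ X ∧ ρ g ∉ nbr l ρ W X) ∧ bipNu l ρ W ≤ M.card + X.card := by
  obtain ⟨M, hMW, hM, hcard⟩ := exists_card_eq_bipNu l ρ W
  refine ⟨{g ∈ M | ρ g ∉ nbr l ρ W X}, (Finset.filter_subset _ _).trans hMW,
    hM.mono (Finset.filter_subset _ _), fun g hg => ?_, ?_⟩
  · rw [Finset.mem_filter] at hg
    exact ⟨fun hX => hg.2 (mem_nbr_of_mem (hMW hg.1) hX), hg.2⟩
  · have hinner : {g ∈ M | ρ g ∈ nbr l ρ W X}.card ≤ (nbr l ρ W X).card :=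
      Finset.card_le_card_of_injOn ρ (fun g hg => (Finset.mem_filter.1 hg).2)
        (hM.mono (Finset.filter_subset _ _)).2
    have := Finset.card_filter_add_card_filter_not (s := M) (fun g => ρ g ∈ nbr l ρ W X)
    rw [h.card_nbr] at hinner
    omega

lemma IsBlock.isFourCycle (h : IsBlock l ρ W X) (hX : X.card = 2)
    (hcard : {g ∈ W | l g ∈ X}.card = 2 * r) (hout : ∀ g ∈ W, ρ g ∈ nbr l ρ W X → l g ∈ X) :
    IsFourCycle l ρ r W {g ∈ W | l g ∈ X} := by
  obtain ⟨y₁, y₂, hy, hY⟩ := Finset.card_eq_two.1 (h.card_nbr.trans hX)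
  have hfull : ∀ x ∈ X, nbr l ρ W {x} = nbr l ρ W X := fun x hx => by
    have hsub : {x} ⊆ X := Finset.singleton_subset_iff.2 hx
    have hsur := h.surplus {x} (hsub.ssubset_of_ne (by rintro rfl; simp at hX)) (by simp)
    refine Finset.eq_of_subset_of_card_le (nbr_mono hsub) ?_
    rwa [h.card_nbr, hX]
  obtain ⟨x₁, x₂, hx, rfl⟩ := Finset.card_eq_two.1 hX
  refine ⟨x₁, x₂, y₁, y₂, hx, hy, by simp, Finset.filter_congr fun g hg => ?_, hcard, ?_⟩
  · have : ρ g = y₁ ∨ ρ g = y₂ ↔ ρ g ∈ nbr l ρ W {x₁, x₂} := by simp [hY]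
    rw [this]
    exact ⟨mem_nbr_of_mem hg, hout g hg⟩
  · intro x y hxX hyY
    have hxX : x ∈ ({x₁, x₂} : Finset B) := by simpa using hxX
    obtain ⟨g, hg, hgx, hgy⟩ := mem_nbr.1 (show y ∈ nbr l ρ W {x} by simpa [hfull x hxX, hY])
    rw [Finset.mem_singleton] at hgx
    exact ⟨g, Finset.mem_filter.2 ⟨hg, hgx ▸ hxX⟩, hgx, hgy⟩

lemma mem_of_mem_nbr_of_edgesOutside_eq_empty {c : C} (h : edgesOutside l ρ W X c = ∅)
    (hg : g ∈ W) (hgc : ρ g = c) : l g ∈ X := by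
  by_contra hgX
  exact Finset.notMem_empty g (h ▸ Finset.mem_filter.2 ⟨hg, hgc, hgX⟩)

lemma IsBlock.bipNu_le_of_left_eq (h : IsBlock l ρ W X) (he : e ∈ W) (heX : l e ∈ X)
    (hout : IsOutcome (lineGraph l ρ) W e (blockOrder l ρ X (ρ e)) f R)
    (hfe : l f = l e) (hρ : ρ f ≠ ρ e) : bipNu l ρ W ≤ bipNu l ρ R + 1 := by
  classical
  obtain ⟨M₀, hM₀W, hM₀, hM₀X, hcard₀⟩ := h.exists_outer
  obtain ⟨M, hMW, hM, hcard, hMX⟩ := exists_bipMatching_of_hall fun A hA =>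
    (h.hasSurplus_erase heX).card_le_card_sdiff_singleton hA (ρ f)
  have hMe : ∀ g ∈ M, l g ≠ l e ∧ l g ∈ X ∧ ρ g ≠ ρ f := fun g hg => by
    simpa [and_assoc] using hMX g hg
  have hne : ∀ g ∈ M ∪ M₀, l g ≠ l e ∧ ρ g ≠ ρ f ∧ (ρ g = ρ e → l g ∈ X) := fun g hg => by
    rcases Finset.mem_union.1 hg with hg | hg
    · exact ⟨(hMe g hg).1, (hMe g hg).2.2, fun _ => (hMe g hg).2.1⟩
    · obtain ⟨hgX, hgY⟩ := hM₀X g hg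
      exact ⟨fun heq => hgX (heq ▸ heX),
        fun heq => hgY (heq ▸ mem_nbr_of_mem hout.mem (hfe ▸ heX)),
        fun heq => absurd (heq ▸ mem_nbr_of_mem he heX) hgY⟩
  have := hout.card_add_card_le_bipNu hMW hM (fun g hg => (hMe g hg).2.1) hM₀W hM₀ hM₀X
    (fun g hg => hfe ▸ (hne g hg).1) (fun g hg => (hne g hg).2.1) fun g hg hor => by
      have hge : ρ g = ρ e := hor.resolve_left (hne g hg).1
      simp [blockOrder, hge, (hne g hg).2.2 hge, hρ]
  rw [hcard, Finset.card_erase_of_mem heX] at this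
  omega

lemma IsBlock.potential_le_or (h : IsBlock l ρ W X) (hd : DegLE l ρ r W) (he : e ∈ W)
    (heX : l e ∈ X) (hout : IsOutcome (lineGraph l ρ) W e (blockOrder l ρ X (ρ e)) f R) :
    potential l ρ r W ≤ potential l ρ r R + 12 * r ^ 2 ∨
      (l f ∈ X ∧ l f ≠ l e ∧ ρ f = ρ e) := by
  classical
  have hcover : (∀ g ∈ W, l g ≠ l f → ρ g ≠ ρ f → l g = l e ∨ ρ g = ρ e →
      blockOrder l ρ X (ρ e) g < blockOrder l ρ X (ρ e) f) →
      potential l ρ r W ≤ potential l ρ r R + 12 * r ^ 2 := fun hp =>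
    potential_le_of_cover hd hout.mem hout.subset fun g hg hl hρ =>
      hout.mem_of_ne hg hl hρ (hp g hg hl hρ)
  by_cases hl : l f = l e
  · refine Or.inl ?_
    by_cases hρ : ρ f = ρ e
    · exact hcover fun g _ hgl hgρ hor => absurd hor (not_or.2 ⟨hl ▸ hgl, hρ ▸ hgρ⟩)
    · exact hout.potential_le_of_bipNu_le hd he (h.bipNu_le_of_left_eq he heX hout hl hρ)
  · have hρ : ρ f = ρ e := (hout.adj.2.resolve_left (Ne.symm hl)).symm
    by_cases hfX : l f ∈ X
    · exact Or.inr ⟨hfX, hl, hρ⟩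
    · exact Or.inl (hcover fun g _ _ hgρ _ => by simp [blockOrder, hρ, hfX, hρ ▸ hgρ])

lemma card_add_card_edgesOutside_le (hd : DegLE l ρ r W) {c c' : C} (hc : c ≠ c')
    (hX : nbr l ρ W X = {c, c'}) :
    {g ∈ W | l g ∈ X}.card + (edgesOutside l ρ W X c).card + (edgesOutside l ρ W X c').card ≤
      2 * r := by
  classical
  have hdisj : Disjoint {g ∈ W | l g ∈ X} (edgesOutside l ρ W X c) :=
    Finset.disjoint_filter.2 fun g _ hgX hg => hg.2 hgX
  have hdisj' : Disjoint ({g ∈ W | l g ∈ X} ∪ edgesOutside l ρ W X c)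
      (edgesOutside l ρ W X c') :=
    Finset.disjoint_union_left.2 ⟨Finset.disjoint_filter.2 fun g _ hgX hg => hg.2 hgX,
      Finset.disjoint_filter.2 fun g _ hg hg' => hc (hg.1.symm.trans hg'.1)⟩
  rw [← Finset.card_union_of_disjoint hdisj, ← Finset.card_union_of_disjoint hdisj']
  refine (Finset.card_le_card fun g hg => ?_).trans (hd.swap.card_filter_or_le c c')
  simp only [edgesOutside, Finset.mem_union, Finset.mem_filter] at hg ⊢
  rcases hg with (⟨hg, hgX⟩ | ⟨hg, hgc, -⟩) | ⟨hg, hgc, -⟩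
  · exact ⟨hg, by simpa [hX] using mem_nbr_of_mem (ρ := ρ) hg hgX⟩
  · exact ⟨hg, Or.inl hgc⟩
  · exact ⟨hg, Or.inr hgc⟩

lemma IsOutcome.card_fourCycles_lt (h : IsOutcome (lineGraph l ρ) W e p f R)
    (hd : DegLE l ρ r W) {Q : Finset V} (hQ : IsFourCycle l ρ r W Q) (hf : f ∈ Q) :
    (fourCycles l ρ r R).card < (fourCycles l ρ r W).card := by
  classical
  refine Finset.card_lt_card ⟨fourCycles_mono hd h.subset, fun hsub => ?_⟩
  obtain ⟨_, _, _, _, -, -, hQR, -⟩ := mem_fourCycles.1 (hsub (mem_fourCycles.2 hQ))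
  rw [hQR, Finset.mem_filter] at hf
  exact (h.ne_and_not_adj f hf.1).1 rfl

lemma card_le_add_card_edgesOutside {c : C}
    (hremoved : ∀ g ∈ W, g ∉ R → l g ∈ X ∨ ρ g = c) :
    W.card ≤ R.card + ({g ∈ W | l g ∈ X}.card + (edgesOutside l ρ W X c).card) := by
  classical
  have hsub : W \ R ⊆ {g ∈ W | l g ∈ X} ∪ edgesOutside l ρ W X c := fun g hg => by
    rw [Finset.mem_sdiff] at hg
    simp only [edgesOutside, Finset.mem_union, Finset.mem_filter, hg.1, true_and]
    have := hremoved g hg.1 hg.2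
    tauto
  have := (Finset.card_le_card hsub).trans (Finset.card_union_le _ _)
  have := Finset.card_le_card_sdiff_add_card (s := W) (t := R)
  omega

section Pair

variable (h : IsBlock l ρ W X) (hd : DegLE l ρ r W) (hX : X.card = 2)
include h hd hX

-- If all `2r` edges at the two neighbours of `X` are removed, then they formed a 4-cycle, and its
-- disappearance makes up for the extra edge.
lemma IsBlock.potential_le_of_card_eq_two (hout : IsOutcome (lineGraph l ρ) W e p f R)
    (heX : l e ∈ X) (hfX : l f ∈ X) (hρ : ρ f = ρ e) (heY : ρ e ∈ nbr l ρ W X)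
    (hmin : ∀ c ∈ nbr l ρ W X,
      (edgesOutside l ρ W X (ρ e)).card ≤ (edgesOutside l ρ W X c).card) :
    potential l ρ r W ≤ potential l ρ r R + 12 * r ^ 2 := by
  classical
  obtain ⟨y, hy⟩ : ∃ y, (nbr l ρ W X).erase (ρ e) = {y} := Finset.card_eq_one.1 (by
    rw [Finset.card_erase_of_mem heY, h.card_nbr, hX])
  obtain ⟨hye, hyY⟩ := Finset.mem_erase.1 (hy ▸ Finset.mem_singleton_self y)
  have hY : nbr l ρ W X = {ρ e, y} := by rw [← Finset.insert_erase heY, hy]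
  have hremoved : ∀ g ∈ W, g ∉ R → l g ∈ X ∨ ρ g = ρ e := fun g hg hgR => by
    rcases hout.eq_of_notMem hg hgR with heq | heq | heq | heq
    exacts [Or.inl (heq ▸ hfX), Or.inr (heq.trans hρ), Or.inl (heq ▸ heX), Or.inr heq]
  have hν : bipNu l ρ W ≤ bipNu l ρ R + 2 := by
    have := bipNu_le_of_cover (l := l) ∅ (nbr l ρ W X) fun g hg hgR => Or.inr
      ((hremoved g hg hgR).elim (mem_nbr_of_mem hg) fun heq => heq ▸ heY)
    rwa [Finset.card_empty, h.card_nbr, hX] at this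
  have hcard := card_le_add_card_edgesOutside hremoved
  have htotal := card_add_card_edgesOutside_le hd hye.symm hY
  have hmin' := hmin y hyY
  by_cases hfew : {g ∈ W | l g ∈ X}.card + (edgesOutside l ρ W X (ρ e)).card < 2 * r
  · have := potential_le (r := r) (j := 2 * r - 1) (k := 0) hν (by omega)
      (Finset.card_le_card (fourCycles_mono hd hout.subset))
    rw [Nat.cast_sub (by omega)] at this
    push_cast at this
    nlinarith
  · have hempty : edgesOutside l ρ W X (ρ e) = ∅ := Finset.card_eq_zero.1 (by omega)
    have hempty' : edgesOutside l ρ W X y = ∅ := Finset.card_eq_zero.1 (by omega)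
    have hcycle := h.isFourCycle (r := r) hX (by omega) fun g hg hgY => by
      rw [hY, Finset.mem_insert, Finset.mem_singleton] at hgY
      exact hgY.elim (mem_of_mem_nbr_of_edgesOutside_eq_empty hempty hg)
        (mem_of_mem_nbr_of_edgesOutside_eq_empty hempty' hg)
    have := potential_le (r := r) (j := 2 * r) (k := 1) hν (by omega)
      (hout.card_fourCycles_lt hd hcycle (Finset.mem_filter.2 ⟨hout.mem, hfX⟩))
    push_cast at this
    nlinarith

lemma IsBlock.exists_explosion_of_card_eq_two :
    ∃ e ∈ W, ∃ p, ∀ f R, IsOutcome (lineGraph l ρ) W e p f R →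
      potential l ρ r W ≤ potential l ρ r R + 12 * r ^ 2 := by
  classical
  obtain ⟨y, hy, hmin⟩ := Finset.exists_min_image (nbr l ρ W X)
    (fun c => (edgesOutside l ρ W X c).card)
    (Finset.card_pos.1 (h.card_nbr ▸ Finset.card_pos.2 h.nonempty))
  obtain ⟨e, heW, heX, rfl⟩ := mem_nbr.1 hy
  refine ⟨e, heW, _, fun f R hout => (h.potential_le_or hd heW heX hout).elim id ?_⟩
  rintro ⟨hfX, -, hρ⟩
  exact h.potential_le_of_card_eq_two hd hX hout heX hfX hρ hy hmin

end Pair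

end Block

section LargeBlock

variable {V B C : Type*} [DecidableEq B] [DecidableEq C] {l : V → B} {ρ : V → C} {r : ℕ}
  {W R : Finset V} {X P : Finset B} {T : Finset C} {e f g : V}

lemma nbr_mono_left (hR : R ⊆ W) : nbr l ρ R X ⊆ nbr l ρ W X :=
  Finset.image_subset_image (Finset.filter_subset_filter _ hR)

lemma HasSurplus.mono (h : HasSurplus l ρ W X) (hP : P ⊆ X) : HasSurplus l ρ W P :=
  fun A hA => h A (hA.trans hP)

lemma HasSurplus.of_forall_mem (h : HasSurplus l ρ W P) (hR : ∀ g ∈ W, l g ∈ P → g ∈ R) :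
    HasSurplus l ρ R P := fun A hA hne =>
  (h A hA hne).trans <| Finset.card_le_card fun c hc => by
    obtain ⟨g, hg, hgA, rfl⟩ := mem_nbr.1 hc
    exact mem_nbr_of_mem (hR g hg (hA hgA)) hgA

lemma nbr_right_subset : nbr ρ l {g ∈ W | l g ∈ X} T ⊆ X := fun x hx => by
  obtain ⟨g, hg, -, rfl⟩ := mem_nbr.1 hx
  exact (Finset.mem_filter.1 hg).2

lemma mem_nbr_right (hg : g ∈ W) (hgX : l g ∈ X) (hgT : ρ g ∈ T) :
    l g ∈ nbr ρ l {g ∈ W | l g ∈ X} T :=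
  mem_nbr_of_mem (l := ρ) (ρ := l) (Finset.mem_filter.2 ⟨hg, hgX⟩) hgT

lemma nbr_sdiff_nbr_right_subset :
    nbr l ρ W (X \ nbr ρ l {g ∈ W | l g ∈ X} T) ⊆ nbr l ρ W X \ T := fun c hc => by
  obtain ⟨g, hg, hgX, rfl⟩ := mem_nbr.1 hc
  rw [Finset.mem_sdiff] at hgX ⊢
  exact ⟨mem_nbr_of_mem hg hgX.1, fun hgT => hgX.2 (mem_nbr_right hg hgX.1 hgT)⟩

lemma nbr_right_sdiff_nbr_subset :
    nbr ρ l {g ∈ W | l g ∈ X} (T \ nbr l ρ W P) ⊆ X \ P := fun x hx => by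
  obtain ⟨g, hg, hgT, rfl⟩ := mem_nbr.1 hx
  rw [Finset.mem_filter] at hg
  rw [Finset.mem_sdiff] at hgT ⊢
  exact ⟨hg.2, fun hgP => hgT.2 (mem_nbr_of_mem hg.1 hgP)⟩

/-- A nonempty set `T` of neighbours of the block `X` having at most one more neighbour in `X` than
elements. The smallest such `T` tells where to explode a block with at least three elements. -/
structure IsNearlyTight (l : V → B) (ρ : V → C) (W : Finset V) (X : Finset B) (T : Finset C) :
    Prop where
  subset : T ⊆ nbr l ρ W X
  nonempty : T.Nonempty
  card_nbr_le : (nbr ρ l {g ∈ W | l g ∈ X} T).card ≤ T.card + 1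

lemma IsBlock.exists_isNearlyTight (h : IsBlock l ρ W X) :
    ∃ T, IsNearlyTight l ρ W X T ∧ ∀ S, IsNearlyTight l ρ W X S → T.card ≤ S.card := by
  have hY : IsNearlyTight l ρ W X (nbr l ρ W X) :=
    ⟨subset_rfl, Finset.card_pos.1 (h.card_nbr ▸ Finset.card_pos.2 h.nonempty), by
      rw [h.card_nbr]
      exact (Finset.card_le_card nbr_right_subset).trans (Nat.le_succ _)⟩
  obtain ⟨T, hT, hmin⟩ := exists_minimalFor_of_wellFoundedLT (IsNearlyTight l ρ W X) Finset.card
    ⟨_, hY⟩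
  exact ⟨T, hT, fun S hS => (le_total T.card S.card).elim id fun hle => hmin hS hle⟩

section Minimal

variable (hmin : ∀ S, IsNearlyTight l ρ W X S → T.card ≤ S.card)
include hmin

lemma IsNearlyTight.exists_bipMatching_erase (hT : IsNearlyTight l ρ W X T) {c : C} (hc : c ∈ T)
    (b b' : B) :
    ∃ M ⊆ W, IsBipMatching l ρ M ∧ M.card + 1 = T.card ∧
      ∀ g ∈ M, l g ∈ X ∧ ρ g ∈ T ∧ ρ g ≠ c ∧ l g ≠ b ∧ l g ≠ b' := by
  obtain ⟨M, hMW, hM, hcard, hMT⟩ := exists_bipMatching_of_hall (l := ρ) (ρ := l)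
    (W := {g ∈ W | l g ∈ X}) (P := T.erase c) (U := {b, b'}) fun A hA => by
      rcases A.eq_empty_or_nonempty with rfl | hne
      · simp
      have hlt := (Finset.card_le_card hA).trans_lt (Finset.card_erase_lt_of_mem hc)
      have hsur : A.card + 2 ≤ (nbr ρ l {g ∈ W | l g ∈ X} A).card := by
        by_contra hcon
        have := hmin A ⟨(hA.trans (Finset.erase_subset _ _)).trans hT.subset, hne, by omega⟩
        omega
      have := Finset.le_card_sdiff {b, b'} (nbr ρ l {g ∈ W | l g ∈ X} A)
      have : ({b, b'} : Finset B).card ≤ 2 := Finset.card_le_two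
      omega
  refine ⟨M, hMW.trans (Finset.filter_subset _ _), hM.swap, ?_, fun g hg => ?_⟩
  · rw [hcard, Finset.card_erase_add_one hc]
  · have := hMT g hg
    simp only [Finset.mem_erase, Finset.mem_insert, Finset.mem_singleton, not_or] at this
    exact ⟨(Finset.mem_filter.1 (hMW hg)).2, this.1.2, this.1.1, this.2⟩

lemma IsBlock.card_add_two_le (h : IsBlock l ρ W X) (hcard : X.card ≤ T.card + 1)
    {A : Finset B} (hA : A ⊂ X) (hne : A.Nonempty) (hAcard : A.card + 2 ≤ X.card) :
    A.card + 2 ≤ (nbr l ρ W A).card := by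
  have hsur := h.surplus A hA hne
  by_contra hcon
  have hY := Finset.card_sdiff_add_card_eq_card
    (nbr_mono (l := l) (ρ := ρ) (W := W) hA.subset)
  have hX := Finset.card_sdiff_add_card_eq_card hA.subset
  have hcard' := Finset.card_le_card (nbr_right_sdiff_nbr_subset (l := l) (ρ := ρ) (W := W)
    (X := X) (P := A) (T := nbr l ρ W X))
  have hpos := Finset.card_pos.2 hne
  rw [h.card_nbr] at hY
  have := hmin (nbr l ρ W X \ nbr l ρ W A)
    ⟨Finset.sdiff_subset, Finset.card_pos.1 (by omega), by omega⟩
  omega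

end Minimal

section Outcome

variable (h : IsBlock l ρ W X) (hT : IsNearlyTight l ρ W X T)
  (hmin : ∀ S, IsNearlyTight l ρ W X S → T.card ≤ S.card)
  (he : e ∈ W) (heX : l e ∈ X) (heT : ρ e ∈ T) (hf : f ∈ W) (hfX : l f ∈ X) (hfe : l f ≠ l e)
  (hρ : ρ f = ρ e) (hRW : R ⊆ W)
  (hR : ∀ g ∈ W, l g ≠ l e → l g ≠ l f → ρ g ≠ ρ e → g ∈ R)
include h hT hmin heX heT hfX hRW hR

section Small

include he hf hρ

lemma IsBlock.exists_explosion_of_card_add_two_le (hcard : T.card + 2 ≤ X.card) :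
    ∃ e' ∈ R, ∃ p, ∀ f' R', IsOutcome (lineGraph l ρ) R e' p f' R' →
      bipNu l ρ W ≤ bipNu l ρ R' + 3 := by
  classical
  obtain ⟨M₀, hM₀W, hM₀, hM₀X, hcard₀⟩ := h.exists_outer
  obtain ⟨M, hMW, hM, hMcard, hMT⟩ := IsNearlyTight.exists_bipMatching_erase hmin hT heT (l e) (l f)
  set N := nbr ρ l {g ∈ W | l g ∈ X} T
  have heN : l e ∈ N := mem_nbr_right he heX heT
  have hfN : l f ∈ N := mem_nbr_right hf hfX (hρ ▸ heT)
  have hPcard : (X \ N).card + N.card = X.card :=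
    Finset.card_sdiff_add_card_eq_card nbr_right_subset
  have hNcard : N.card ≤ T.card + 1 := hT.card_nbr_le
  have hnbr : nbr l ρ R (X \ N) ⊆ nbr l ρ W X \ T :=
    (nbr_mono_left hRW).trans nbr_sdiff_nbr_right_subset
  have hsur : HasSurplus l ρ R (X \ N) :=
    ((h.hasSurplus_erase heX).mono (Finset.subset_erase.2
      ⟨Finset.sdiff_subset, fun hmem => (Finset.mem_sdiff.1 hmem).2 heN⟩)).of_forall_mem
      fun g hg hgP => by
        obtain ⟨hgX, hgN⟩ := Finset.mem_sdiff.1 hgP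
        exact hR g hg (fun heq => hgN (heq ▸ heN)) (fun heq => hgN (heq ▸ hfN))
          fun heq => hgN (mem_nbr_right hg hgX (heq ▸ heT))
  have hne : ∀ g ∈ M, ∀ g' ∈ M₀, l g ≠ l g' := fun g hg g' hg' heq =>
    (hM₀X g' hg').1 (heq ▸ (hMT g hg).1)
  have hunion : IsBipMatching l ρ (M ∪ M₀) := hM.union hM₀ hne fun g hg g' hg' heq =>
    (hM₀X g' hg').2 (heq ▸ hT.subset (hMT g hg).2.1)
  obtain ⟨e', he', p, hp⟩ := hsur.exists_explosion (Finset.card_pos.1 (by omega))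
    (M₁ := M ∪ M₀) (fun g hg => by
      rcases Finset.mem_union.1 hg with hg | hg
      · exact hR g (hMW hg) (hMT g hg).2.2.2.1 (hMT g hg).2.2.2.2 (hMT g hg).2.2.1
      · exact hR g (hM₀W hg) (fun heq => (hM₀X g hg).1 (heq ▸ heX))
          (fun heq => (hM₀X g hg).1 (heq ▸ hfX)) fun heq => (hM₀X g hg).2 (heq ▸ hT.subset heT))
    hunion fun g hg => by
      rcases Finset.mem_union.1 hg with hg | hg
      · exact ⟨fun hgP => (Finset.mem_sdiff.1 hgP).2
          (mem_nbr_right (hMW hg) (hMT g hg).1 (hMT g hg).2.1),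
          fun hmem => (Finset.mem_sdiff.1 (hnbr hmem)).2 (hMT g hg).2.1⟩
      · exact ⟨fun hgP => (hM₀X g hg).1 (Finset.mem_sdiff.1 hgP).1,
          fun hmem => (hM₀X g hg).2 (Finset.mem_sdiff.1 (hnbr hmem)).1⟩
  refine ⟨e', he', p, fun f' R' hout => ?_⟩
  have := hp f' R' hout
  rw [card_union_of_map_ne hne] at this
  omega

end Small

include hfe

lemma IsBlock.exists_explosion_of_card_le_add_one (hX : 3 ≤ X.card)
    (hcard : X.card ≤ T.card + 1) :
    ∃ e' ∈ R, ∃ p, ∀ f' R', IsOutcome (lineGraph l ρ) R e' p f' R' →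
      bipNu l ρ W ≤ bipNu l ρ R' + 3 := by
  obtain ⟨M₀, hM₀W, hM₀, hM₀X, hcard₀⟩ := h.exists_outer
  set P := (X.erase (l e)).erase (l f)
  have hPcard : P.card + 2 = X.card := by
    have : P.card + 1 = (X.erase (l e)).card :=
      Finset.card_erase_add_one (Finset.mem_erase.2 ⟨hfe, hfX⟩)
    have := Finset.card_erase_add_one heX
    omega
  have hPX : P ⊆ X.erase (l e) := Finset.erase_subset _ _
  have hsur : HasSurplus l ρ R P := fun A hA hne => by
    have hAX : A ⊂ X := (hA.trans hPX).trans_ssubset (Finset.erase_ssubset heX)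
    have htwo := h.card_add_two_le hmin hcard hAX hne
      (hPcard ▸ Nat.add_le_add_right (Finset.card_le_card hA) 2)
    have hsub : (nbr l ρ W A).erase (ρ e) ⊆ nbr l ρ R A := fun c hc => by
      obtain ⟨hce, hcA⟩ := Finset.mem_erase.1 hc
      obtain ⟨g, hg, hgA, rfl⟩ := mem_nbr.1 hcA
      exact mem_nbr_of_mem (hR g hg (Finset.ne_of_mem_erase (hPX (hA hgA)))
        (Finset.ne_of_mem_erase (hA hgA)) hce) hgA
    have := Finset.card_le_card hsub
    have := Finset.pred_card_le_card_erase (s := nbr l ρ W A) (a := ρ e)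
    omega
  have hPX' : P ⊆ X := hPX.trans (Finset.erase_subset _ _)
  obtain ⟨e', he', p, hp⟩ := hsur.exists_explosion (Finset.card_pos.1 (by omega))
    (fun g hg => hR g (hM₀W hg) (fun heq => (hM₀X g hg).1 (heq ▸ heX))
      (fun heq => (hM₀X g hg).1 (heq ▸ hfX)) fun heq => (hM₀X g hg).2 (heq ▸ hT.subset heT))
    hM₀ fun g hg => ⟨fun hgP => (hM₀X g hg).1 (hPX' hgP),
      fun hmem => (hM₀X g hg).2 (nbr_mono hPX' (nbr_mono_left hRW hmem))⟩
  refine ⟨e', he', p, fun f' R' hout => ?_⟩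
  have := hp f' R' hout
  omega

end Outcome

lemma IsBlock.exists_explosion_of_three_le (h : IsBlock l ρ W X) (hX : 3 ≤ X.card) :
    ∃ e ∈ W, l e ∈ X ∧ ∀ f R p, IsOutcome (lineGraph l ρ) W e p f R →
      l f ∈ X → l f ≠ l e → ρ f = ρ e →
      ∃ e' ∈ R, ∃ p', ∀ f' R', IsOutcome (lineGraph l ρ) R e' p' f' R' →
        bipNu l ρ W ≤ bipNu l ρ R' + 3 := by
  obtain ⟨T, hT, hmin⟩ := h.exists_isNearlyTight
  obtain ⟨c, hc⟩ := hT.nonempty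
  obtain ⟨e, he, heX, rfl⟩ := mem_nbr.1 (hT.subset hc)
  refine ⟨e, he, heX, fun f R p hout hfX hfe hρ => ?_⟩
  have hR : ∀ g ∈ W, l g ≠ l e → l g ≠ l f → ρ g ≠ ρ e → g ∈ R := fun g hg hle hlf hge => by
    by_contra hgR
    rcases hout.eq_of_notMem hg hgR with heq | heq | heq | heq
    exacts [hlf heq, hge (heq.trans hρ), hle heq, hge heq]
  rcases le_or_gt (T.card + 2) X.card with hcard | hcard
  · exact h.exists_explosion_of_card_add_two_le hT hmin he heX hc hout.mem hfX hρ hout.subset hR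
      hcard
  · exact h.exists_explosion_of_card_le_add_one hT hmin heX hc hfX hfe hout.subset hR hX
      (by omega)

end LargeBlock

section AcyclicOfPotential

variable {V B C : Type*} [DecidableEq B] [DecidableEq C] {l : V → B} {ρ : V → C} {r : ℕ}
  {W R R' : Finset V} {X : Finset B} {e f e' f' : V} {p p' : V → ℕ}

lemma potential_empty_nonpos : potential l ρ r ∅ ≤ 0 := by
  obtain ⟨M, hM, -, hcard⟩ := exists_card_eq_bipNu l ρ ∅
  rw [potential, ← hcard, Finset.subset_empty.1 hM]
  simp only [Finset.card_empty, Nat.cast_zero, mul_zero, add_zero, zero_sub, Left.neg_nonpos_iff]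
  positivity

lemma potential_le_of_bipNu_le_add_three (hd : DegLE l ρ r W) (he : e ∈ W)
    (h : IsOutcome (lineGraph l ρ) W e p f R) (he' : e' ∈ R)
    (h' : IsOutcome (lineGraph l ρ) R e' p' f' R') (hν : bipNu l ρ W ≤ bipNu l ρ R' + 3) :
    potential l ρ r W ≤ potential l ρ r R' + 24 * r ^ 2 := by
  have hcard := h.card_le hd he
  have hcard' := h'.card_le (hd.mono h.subset) he'
  have hpos := hd.pos he
  have := potential_le (r := r) (j := 6 * r - 4) (k := 0) hν (by omega)
    (Finset.card_le_card (fourCycles_mono hd (h'.subset.trans h.subset)))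
  rw [Nat.cast_sub (by omega)] at this
  push_cast at this
  nlinarith

lemma HasSurplus.exists_explosion_potential_le (h : HasSurplus l ρ W (W.image l))
    (hd : DegLE l ρ r W) (hW : W.Nonempty) :
    ∃ e ∈ W, ∃ p : V → ℕ, ∀ f R, IsOutcome (lineGraph l ρ) W e p f R →
      potential l ρ r W ≤ potential l ρ r R + 12 * r ^ 2 := by
  obtain ⟨e, he, p, hp⟩ := h.exists_explosion (hW.image l) (Finset.empty_subset W)
    isBipMatching_empty (by simp)
  refine ⟨e, he, p, fun f R hout => hout.potential_le_of_bipNu_le hd he ?_⟩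
  obtain ⟨M, hMW, hM, hcard⟩ := exists_card_eq_bipNu l ρ W
  have := Finset.card_image_of_injOn hM.1
  have := Finset.card_le_card (Finset.image_subset_image (f := l) hMW)
  have := hp f R hout
  rw [Finset.card_empty] at this
  omega

lemma IsBlock.exists_explosion_of_card_eq_one (h : IsBlock l ρ W X) (hd : DegLE l ρ r W)
    (hX : X.card = 1) :
    ∃ e ∈ W, ∃ p : V → ℕ, ∀ f R, IsOutcome (lineGraph l ρ) W e p f R →
      potential l ρ r W ≤ potential l ρ r R + 12 * r ^ 2 := by
  obtain ⟨c, hc⟩ := Finset.card_pos.1 (h.card_nbr ▸ Finset.card_pos.2 h.nonempty)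
  obtain ⟨e, he, heX, -⟩ := mem_nbr.1 hc
  refine ⟨e, he, _, fun f R hout => (h.potential_le_or hd he heX hout).elim id ?_⟩
  rintro ⟨hfX, hfe, -⟩
  exact absurd (Finset.card_le_one.1 hX.le _ hfX _ heX) hfe

lemma exists_explosion_potential_le (hd : DegLE l ρ r W) (hW : W.Nonempty) :
    ∃ e ∈ W, ∃ p : V → ℕ, ∀ f R, IsOutcome (lineGraph l ρ) W e p f R →
      potential l ρ r W ≤ potential l ρ r R + 12 * r ^ 2 ∨
      ∃ e' ∈ R, ∃ p' : V → ℕ, ∀ f' R', IsOutcome (lineGraph l ρ) R e' p' f' R' →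
        potential l ρ r W ≤ potential l ρ r R' + 24 * r ^ 2 := by
  by_cases hsur : HasSurplus l ρ W (W.image l)
  · obtain ⟨e, he, p, hp⟩ := hsur.exists_explosion_potential_le hd hW
    exact ⟨e, he, p, fun f R hout => Or.inl (hp f R hout)⟩
  obtain ⟨X, h⟩ := exists_isBlock hsur
  have hpos := Finset.card_pos.2 h.nonempty
  by_cases hone : X.card = 1
  · obtain ⟨e, he, p, hp⟩ := h.exists_explosion_of_card_eq_one hd hone
    exact ⟨e, he, p, fun f R hout => Or.inl (hp f R hout)⟩
  by_cases htwo : X.card = 2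
  · obtain ⟨e, he, p, hp⟩ := h.exists_explosion_of_card_eq_two hd htwo
    exact ⟨e, he, p, fun f R hout => Or.inl (hp f R hout)⟩
  obtain ⟨e, he, heX, hp⟩ := h.exists_explosion_of_three_le (by omega)
  refine ⟨e, he, _, fun f R hout => (h.potential_le_or hd he heX hout).imp id ?_⟩
  rintro ⟨hfX, hfe, hρ⟩
  obtain ⟨e', he', p', hp'⟩ := hp f R _ hout hfX hfe hρ
  exact ⟨e', he', p', fun f' R' hout' =>
    potential_le_of_bipNu_le_add_three hd he hout he' hout' (hp' f' R' hout')⟩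

theorem acyclic_of_potential [DecidableEq V] [Fintype V] {d : ℕ} (hd : DegLE l ρ r W)
    (hpot : 12 * r ^ 2 * d < potential l ρ r W) :
    Acyclic (indComplex (lineGraph l ρ) W) (d + 1) := by
  induction W using Finset.strongInduction generalizing d with
  | H W ih =>
    rcases W.eq_empty_or_nonempty with rfl | hW
    · have : (0 : ℤ) ≤ 12 * r ^ 2 * d := by positivity
      linarith [potential_empty_nonpos (l := l) (ρ := ρ) (r := r)]
    obtain ⟨e, he, p, hp⟩ := exists_explosion_potential_le hd hW
    refine acyclic_indComplex_of_outcomes he p d fun f R hout => ?_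
    have hRW : R ⊂ W := Finset.ssubset_iff_subset_ne.2
      ⟨hout.subset, fun heq => hout.notMem (heq ▸ he)⟩
    rcases d with _ | d
    · exact acyclic_zero _
    rcases hp f R hout with hdrop | ⟨e', he', p', hp'⟩
    · refine ih R hRW (hd.mono hout.subset) ?_
      push_cast at hpot
      linarith
    · refine acyclic_indComplex_of_outcomes he' p' d fun f' R' hout' => ?_
      rcases d with _ | d
      · exact acyclic_zero _
      refine ih R' (hout'.subset.trans_ssubset hRW) (hd.mono (hout'.subset.trans hout.subset)) ?_
      have := hp' f' R' hout'
      push_cast at hpot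
      linarith

end AcyclicOfPotential

/-! ### Four-cycles and the truncated Fano plane -/

section FourCycle

variable {V B C : Type*} {l : V → B} {ρ : V → C} {r : ℕ} {W Q Q' : Finset V} {g g' : V} {x : B}
  {y : C} {t : V → Bool}

/-- The function `t` separates the edges of `Q` into two types, two edges being of the same type
when they share both ends or none. For a 4-cycle with multiplicities these are its two perfect
matchings. -/
def IsTyping (l : V → B) (ρ : V → C) (Q : Finset V) (t : V → Bool) : Prop :=
  ∀ g ∈ Q, ∀ g' ∈ Q, (t g = t g' ↔ (l g = l g' ↔ ρ g = ρ g'))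

lemma IsTyping.ends_eq_or (ht : IsTyping l ρ Q t) (hg : g ∈ Q) (hg' : g' ∈ Q) (htg : t g' = t g)
    (hl : l g' = l g ∨ l g' = x) (hρ : ρ g' = ρ g ∨ ρ g' = y) (hx : l g ≠ x) :
    l g' = l g ∧ ρ g' = ρ g ∨ l g' = x ∧ ρ g' = y := by
  have hiff : l g' = l g ↔ ρ g' = ρ g := (ht g' hg' g hg).1 htg
  rcases hl with hl | hl
  · exact Or.inl ⟨hl, hiff.1 hl⟩
  · exact Or.inr ⟨hl, hρ.resolve_left fun h => hx ((hiff.2 h).symm.trans hl)⟩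

variable [DecidableEq B] [DecidableEq C]

lemma IsFourCycle.subset (h : IsFourCycle l ρ r W Q) : Q ⊆ W := by
  obtain ⟨x₁, x₂, y₁, y₂, -, -, hl, -⟩ := h
  exact hl ▸ Finset.filter_subset _ _

lemma IsFourCycle.card_eq (h : IsFourCycle l ρ r W Q) : Q.card = 2 * r := by
  obtain ⟨x₁, x₂, y₁, y₂, -, -, -, -, hcard, -⟩ := h
  exact hcard

lemma IsFourCycle.mem_of_meets (h : IsFourCycle l ρ r W Q) (hg : g ∈ Q) (hg' : g' ∈ W)
    (hmeets : l g' = l g ∨ ρ g' = ρ g) : g' ∈ Q := by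
  obtain ⟨x₁, x₂, y₁, y₂, -, -, hl, hρ, -⟩ := h
  rcases hmeets with heq | heq
  · rw [hl, Finset.mem_filter] at hg ⊢
    exact ⟨hg', heq ▸ hg.2⟩
  · rw [hρ, Finset.mem_filter] at hg ⊢
    exact ⟨hg', heq ▸ hg.2⟩

lemma IsFourCycle.exists_ends (h : IsFourCycle l ρ r W Q) (hg : g ∈ Q) :
    ∃ x y, l g ≠ x ∧ ρ g ≠ y ∧
      (∀ g' ∈ Q, (l g' = l g ∨ l g' = x) ∧ (ρ g' = ρ g ∨ ρ g' = y)) ∧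
      ∀ x' y', (x' = l g ∨ x' = x) → (y' = ρ g ∨ y' = y) → ∃ g' ∈ Q, l g' = x' ∧ ρ g' = y' := by
  obtain ⟨x₁, x₂, y₁, y₂, hx, hy, hl, hρ, -, hcorner⟩ := h
  have hendl : ∀ g ∈ Q, l g = x₁ ∨ l g = x₂ := fun g hg => (Finset.mem_filter.1 (hl.subset hg)).2
  have hendρ : ∀ g ∈ Q, ρ g = y₁ ∨ ρ g = y₂ := fun g hg => (Finset.mem_filter.1 (hρ.subset hg)).2
  obtain ⟨x, hgx, hxx⟩ : ∃ x, l g ≠ x ∧ ∀ x', (x' = x₁ ∨ x' = x₂) ↔ (x' = l g ∨ x' = x) := by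
    rcases hendl g hg with heq | heq
    · exact ⟨x₂, heq ▸ hx, fun x' => by rw [heq]⟩
    · exact ⟨x₁, heq ▸ hx.symm, fun x' => by rw [heq, or_comm]⟩
  obtain ⟨y, hgy, hyy⟩ : ∃ y, ρ g ≠ y ∧ ∀ y', (y' = y₁ ∨ y' = y₂) ↔ (y' = ρ g ∨ y' = y) := by
    rcases hendρ g hg with heq | heq
    · exact ⟨y₂, heq ▸ hy, fun y' => by rw [heq]⟩
    · exact ⟨y₁, heq ▸ hy.symm, fun y' => by rw [heq, or_comm]⟩
  simp only [hxx] at hendl hcorner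
  simp only [hyy] at hendρ hcorner
  exact ⟨x, y, hgx, hgy, fun g' hg' => ⟨hendl g' hg', hendρ g' hg'⟩, hcorner⟩

lemma IsFourCycle.exists_left_eq_right_ne (h : IsFourCycle l ρ r W Q) (hg : g ∈ Q) :
    ∃ g' ∈ Q, l g' = l g ∧ ρ g' ≠ ρ g := by
  obtain ⟨x, y, -, hy, -, hcorner⟩ := h.exists_ends hg
  obtain ⟨g', hg', hl, hρ⟩ := hcorner (l g) y (Or.inl rfl) (Or.inr rfl)
  exact ⟨g', hg', hl, hρ ▸ hy.symm⟩

lemma IsFourCycle.eq_of_mem (h : IsFourCycle l ρ r W Q) (h' : IsFourCycle l ρ r W Q')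
    (hg : g ∈ Q) (hg' : g ∈ Q') : Q = Q' := by
  refine Finset.eq_of_subset_of_card_le (fun k hk => ?_) (by rw [h.card_eq, h'.card_eq])
  obtain ⟨x, y, -, -, hends, hcorner⟩ := h.exists_ends hg
  obtain ⟨m, hm, hml, hmρ⟩ := hcorner (l g) (ρ k) (Or.inl rfl) (hends k hk).2
  have hmQ' : m ∈ Q' := h'.mem_of_meets hg' (h.subset hm) (Or.inl hml)
  exact h'.mem_of_meets hmQ' (h.subset hk) (Or.inr hmρ.symm)

lemma IsFourCycle.exists_isTyping (h : IsFourCycle l ρ r W Q) : ∃ t, IsTyping l ρ Q t := by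
  obtain ⟨x₁, x₂, y₁, y₂, hx, hy, hl, hρ, -, -⟩ := h
  refine ⟨fun g => decide (l g = x₁ ↔ ρ g = y₁), fun g hg g' hg' => ?_⟩
  have hgl : l g = x₁ ∨ l g = x₂ := (Finset.mem_filter.1 (hl.subset hg)).2
  have hgρ : ρ g = y₁ ∨ ρ g = y₂ := (Finset.mem_filter.1 (hρ.subset hg)).2
  have hgl' : l g' = x₁ ∨ l g' = x₂ := (Finset.mem_filter.1 (hl.subset hg')).2
  have hgρ' : ρ g' = y₁ ∨ ρ g' = y₂ := (Finset.mem_filter.1 (hρ.subset hg')).2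
  rcases hgl with e₁ | e₁ <;> rcases hgρ with e₂ | e₂ <;> rcases hgl' with e₃ | e₃ <;>
    rcases hgρ' with e₄ | e₄ <;> simp [e₁, e₂, e₃, e₄, hx, hy, hx.symm, hy.symm]

lemma exists_forall_fourCycles_isTyping (l : V → B) (ρ : V → C) (r : ℕ) (W : Finset V) :
    ∃ (q : V → Finset V) (t : V → Bool), ∀ Q ∈ fourCycles l ρ r W,
      (∀ g ∈ Q, q g = Q) ∧ IsTyping l ρ Q t := by
  have hcomp : ∀ g, ∃ P, ∀ Q ∈ fourCycles l ρ r W, g ∈ Q → P = Q := by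
    intro g
    by_cases h : ∃ P ∈ fourCycles l ρ r W, g ∈ P
    · obtain ⟨P, hP, hg⟩ := h
      exact ⟨P, fun Q hQ hgQ => (mem_fourCycles.1 hP).eq_of_mem (mem_fourCycles.1 hQ) hg hgQ⟩
    · exact ⟨∅, fun Q hQ hgQ => absurd ⟨Q, hQ, hgQ⟩ h⟩
  have htype : ∀ Q, ∃ t, Q ∈ fourCycles l ρ r W → IsTyping l ρ Q t := by
    intro Q
    by_cases hQ : Q ∈ fourCycles l ρ r W
    · obtain ⟨t, ht⟩ := (mem_fourCycles.1 hQ).exists_isTyping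
      exact ⟨t, fun _ => ht⟩
    · exact ⟨fun _ => true, fun hQ' => absurd hQ' hQ⟩
  choose q hq using hcomp
  choose t ht using htype
  refine ⟨q, fun g => t (q g) g, fun Q hQ => ⟨fun g hg => hq g Q hQ hg, fun g hg g' hg' => ?_⟩⟩
  simp only [hq g Q hQ hg, hq g' Q hQ hg']
  exact ht Q hQ g hg g' hg'

end FourCycle

section Entire

variable {V B C α : Type*} [DecidableEq B] [DecidableEq C] [DecidableEq α] {a : V → α} {l : V → B}
  {ρ : V → C} {r : ℕ} {R W Q E : Finset V} {c₁ c₂ : α} {x₁ x₂ : B} {y₁ y₂ : C} {t : V → Bool}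

/-- The edges of `W` with colour `c` and ends `x` and `y`. If the colour is viewed as a third end,
these are parallel edges of a 3-partite 3-graph. -/
def parallel (a : V → α) (l : V → B) (ρ : V → C) (W : Finset V) (c : α) (x : B) (y : C) :
    Finset V := {g ∈ W | a g = c ∧ l g = x ∧ ρ g = y}

/-- The coloured bipartite multigraph `W`, viewed as a 3-partite 3-graph, contains `(r/2) • F`,
where `F` is the truncated Fano plane. -/
def HasFano (a : V → α) (l : V → B) (ρ : V → C) (r : ℕ) (W : Finset V) : Prop :=
  ∃ (s : ℕ) (x₁ y₁ : α) (x₂ y₂ : B) (x₃ y₃ : C), 2 * s = r ∧ x₁ ≠ y₁ ∧ x₂ ≠ y₂ ∧ x₃ ≠ y₃ ∧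
    s ≤ (parallel a l ρ W x₁ x₂ x₃).card ∧ s ≤ (parallel a l ρ W x₁ y₂ y₃).card ∧
    s ≤ (parallel a l ρ W y₁ x₂ y₃).card ∧ s ≤ (parallel a l ρ W y₁ y₂ x₃).card

lemma HasFano.mono (h : HasFano a l ρ r R) (hR : R ⊆ W) : HasFano a l ρ r W := by
  have hpar : ∀ {s} c x y, s ≤ (parallel a l ρ R c x y).card →
      s ≤ (parallel a l ρ W c x y).card := fun c x y hs =>
    hs.trans (Finset.card_le_card (Finset.filter_subset_filter _ hR))
  obtain ⟨s, x₁, y₁, x₂, y₂, x₃, y₃, hs, hx, hy, hz, h₁, h₂, h₃, h₄⟩ := h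
  exact ⟨s, x₁, y₁, x₂, y₂, x₃, y₃, hs, hx, hy, hz, hpar _ _ _ h₁, hpar _ _ _ h₂, hpar _ _ _ h₃,
    hpar _ _ _ h₄⟩

lemma disjoint_parallel (hc : c₁ ≠ c₂) :
    Disjoint (parallel a l ρ W c₁ x₁ y₁) (parallel a l ρ W c₂ x₂ y₂) :=
  Finset.disjoint_filter.2 fun _ _ h₁ h₂ => hc (h₁.1.symm.trans h₂.1)

lemma DegLE.card_parallel_add_le_left (hd : DegLE l ρ r W) (hc : c₁ ≠ c₂) (x : B) (y₁ y₂ : C) :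
    (parallel a l ρ W c₁ x y₁).card + (parallel a l ρ W c₂ x y₂).card ≤ r := by
  classical
  rw [← Finset.card_union_of_disjoint (disjoint_parallel hc)]
  refine (Finset.card_le_card (Finset.union_subset ?_ ?_)).trans (hd.1 x) <;>
    exact Finset.monotone_filter_right W fun _ _ h => h.2.1

lemma DegLE.card_parallel_add_le_right (hd : DegLE l ρ r W) (hc : c₁ ≠ c₂) (x₁ x₂ : B) (y : C) :
    (parallel a l ρ W c₁ x₁ y).card + (parallel a l ρ W c₂ x₂ y).card ≤ r := by
  classical
  rw [← Finset.card_union_of_disjoint (disjoint_parallel hc)]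
  refine (Finset.card_le_card (Finset.union_subset ?_ ?_)).trans (hd.2 y) <;>
    exact Finset.monotone_filter_right W fun _ _ h => h.2.2

lemma hasFano_of_two_colors (hd : DegLE l ρ r W) (hc : c₁ ≠ c₂) (hx : x₁ ≠ x₂) (hy : y₁ ≠ y₂)
    (h₁ : r ≤ (parallel a l ρ W c₁ x₁ y₁).card + (parallel a l ρ W c₁ x₂ y₂).card)
    (h₂ : r ≤ (parallel a l ρ W c₂ x₁ y₂).card + (parallel a l ρ W c₂ x₂ y₁).card) :
    HasFano a l ρ r W := by
  have hx₁ := hd.card_parallel_add_le_left (a := a) hc x₁ y₁ y₂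
  have hx₂ := hd.card_parallel_add_le_left (a := a) hc x₂ y₂ y₁
  have hy₁ := hd.card_parallel_add_le_right (a := a) hc x₁ x₂ y₁
  have hy₂ := hd.card_parallel_add_le_right (a := a) hc x₂ x₁ y₂
  exact ⟨(parallel a l ρ W c₁ x₁ y₁).card, c₁, c₂, x₁, x₂, y₁, y₂, by omega, hc, hx, hy, le_rfl,
    by omega, by omega, by omega⟩

lemma exists_two_colors_cover (hQW : Q ⊆ W) (hQ : Q.card = 2 * r)
    (hcol : ∀ g ∈ W, {g' ∈ W | a g' = a g}.card = r) (hEQ : E ⊆ Q) (hE : r < E.card)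
    (hfull : ∀ g ∈ E, {g' ∈ W | a g' = a g} ⊆ Q) :
    ∃ g₁ ∈ E, ∃ g₂ ∈ E, a g₁ ≠ a g₂ ∧ ∀ g ∈ Q, a g = a g₁ ∨ a g = a g₂ := by
  obtain ⟨g₁, hg₁⟩ := Finset.card_pos.1 (r.zero_le.trans_lt hE)
  obtain ⟨g₂, hg₂, hne⟩ : ∃ g₂ ∈ E, a g₂ ≠ a g₁ := by
    by_contra! hmono
    have hsub : E ⊆ {g ∈ W | a g = a g₁} := fun g hg =>
      Finset.mem_filter.2 ⟨hQW (hEQ hg), hmono g hg⟩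
    have hcard := Finset.card_le_card hsub
    rw [hcol g₁ (hQW (hEQ hg₁))] at hcard
    omega
  refine ⟨g₁, hg₁, g₂, hg₂, hne.symm, fun g hg => ?_⟩
  classical
  have hdisj : Disjoint {g ∈ W | a g = a g₁} {g ∈ W | a g = a g₂} :=
    Finset.disjoint_filter.2 fun g _ h₁ h₂ => hne (h₂.symm.trans h₁)
  have hunion : {g ∈ W | a g = a g₁} ∪ {g ∈ W | a g = a g₂} = Q :=
    Finset.eq_of_subset_of_card_le (Finset.union_subset (hfull g₁ hg₁) (hfull g₂ hg₂)) (by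
      rw [Finset.card_union_of_disjoint hdisj, hcol g₁ (hQW (hEQ hg₁)), hcol g₂ (hQW (hEQ hg₂)), hQ,
        two_mul])
  rw [← hunion, Finset.mem_union, Finset.mem_filter, Finset.mem_filter] at hg
  exact hg.imp And.right And.right

lemma card_le_card_parallel_add {c : α} (h : ∀ g ∈ W, a g = c →
      l g = x₁ ∧ ρ g = y₁ ∨ l g = x₂ ∧ ρ g = y₂) :
    {g ∈ W | a g = c}.card ≤
      (parallel a l ρ W c x₁ y₁).card + (parallel a l ρ W c x₂ y₂).card := by
  classical
  refine (Finset.card_le_card fun g hg => ?_).trans (Finset.card_union_le _ _)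
  rw [Finset.mem_filter] at hg
  rw [Finset.mem_union, parallel, parallel, Finset.mem_filter, Finset.mem_filter]
  exact (h g hg.1 hg.2).imp (fun h => ⟨hg.1, hg.2, h⟩) fun h => ⟨hg.1, hg.2, h⟩

variable [DecidableEq V]

/- Otherwise two colours fill the two types of the component, each colour one type, and the degree
bound makes all four parallel classes equally large. -/
lemma IsFourCycle.le_card_not_entire (h : IsFourCycle l ρ r W Q) (hd : DegLE l ρ r W)
    (hcol : ∀ g ∈ W, {g' ∈ W | a g' = a g}.card = r) (hfree : ¬ HasFano a l ρ r W)
    (ht : IsTyping l ρ Q t) :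
    r ≤ {g ∈ Q | ¬ {g' ∈ W | a g' = a g} ⊆ {g' ∈ Q | t g' = t g}}.card := by
  by_contra! hlt
  have hcard := Finset.card_filter_add_card_filter_not (s := Q)
    (fun g => {g' ∈ W | a g' = a g} ⊆ {g' ∈ Q | t g' = t g})
  obtain ⟨g₁, hg₁, g₂, hg₂, hne, hcover⟩ := exists_two_colors_cover
    (E := {g ∈ Q | {g' ∈ W | a g' = a g} ⊆ {g' ∈ Q | t g' = t g}}) h.subset h.card_eq hcol
    (Finset.filter_subset _ _) (by rw [h.card_eq] at hcard; omega)
    fun g hg => (Finset.mem_filter.1 hg).2.trans (Finset.filter_subset _ _)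
  obtain ⟨hg₁, hentire₁⟩ := Finset.mem_filter.1 hg₁
  obtain ⟨hg₂, hentire₂⟩ := Finset.mem_filter.1 hg₂
  have htype₁ : ∀ g ∈ W, a g = a g₁ → g ∈ Q ∧ t g = t g₁ := fun g hg hga =>
    Finset.mem_filter.1 (hentire₁ (Finset.mem_filter.2 ⟨hg, hga⟩))
  have htype₂ : ∀ g ∈ W, a g = a g₂ → g ∈ Q ∧ t g = t g₂ := fun g hg hga =>
    Finset.mem_filter.1 (hentire₂ (Finset.mem_filter.2 ⟨hg, hga⟩))
  obtain ⟨x, y, hx, hy, hends, hcorner⟩ := h.exists_ends hg₁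
  obtain ⟨k, hk, hkl, hkρ⟩ := hcorner (l g₁) y (Or.inl rfl) (Or.inr rfl)
  have hka : a k = a g₂ := (hcover k hk).resolve_left fun hka => hy <| by
    rw [← hkρ, ((ht k hk g₁ hg₁).1 (htype₁ k (h.subset hk) hka).2).1 hkl]
  refine hfree (hasFano_of_two_colors hd hne hx hy ?_ ?_)
  · rw [← hcol g₁ (h.subset hg₁)]
    refine card_le_card_parallel_add fun g hg hga => ?_
    obtain ⟨hgQ, htg⟩ := htype₁ g hg hga
    exact ht.ends_eq_or hg₁ hgQ htg (hends g hgQ).1 (hends g hgQ).2 hx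
  · rw [← hcol g₂ (h.subset hg₂)]
    refine card_le_card_parallel_add fun g hg hga => ?_
    obtain ⟨hgQ, htg⟩ := htype₂ g hg hga
    rw [← (htype₂ k (h.subset hk) hka).2] at htg
    rw [← hkl, ← hkρ] at hends ⊢
    rw [← hkl] at hx
    exact ht.ends_eq_or hk hgQ htg (hends g hgQ).1 (hends g hgQ).2.symm hx

end Entire

/-! ### Random choices in the four-cycles -/

section Weight

variable {V B C α : Type*} [DecidableEq V] [DecidableEq α] {a : V → α} {l : V → B} {ρ : V → C}
  {r : ℕ} {W E : Finset V} {g g' : V}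

/-- A fractional matching inside `E`: the weight is `1/r` on the edges of `E` whose colour occurs in
`W` only inside `E`, and `1/(r-1)` on the other edges of `E`. -/
def weight (a : V → α) (r : ℕ) (W E : Finset V) (g : V) : ℚ :=
  if g ∈ E then if {g' ∈ W | a g' = a g} ⊆ E then 1 / r else 1 / (r - 1) else 0

lemma weight_of_notMem (hg : g ∉ E) : weight a r W E g = 0 := if_neg hg

lemma weight_of_color_notMem (hg : g ∈ E) (hg' : g' ∈ W) (ha : a g' = a g) (hE : g' ∉ E) :
    weight a r W E g = 1 / (r - 1) := by
  rw [weight, if_pos hg, if_neg fun h => hE (h (Finset.mem_filter.2 ⟨hg', ha⟩))]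

lemma one_div_le_one_div_sub_one (hr : 2 ≤ r) : (1 / r : ℚ) ≤ 1 / (r - 1) := by
  have hr' : (2 : ℚ) ≤ r := by exact_mod_cast hr
  exact one_div_le_one_div_of_le (by linarith) (by linarith)

lemma le_weight (hr : 2 ≤ r) (hg : g ∈ E) : 1 / r ≤ weight a r W E g := by
  rw [weight, if_pos hg]
  split_ifs
  · exact le_rfl
  · exact one_div_le_one_div_sub_one hr

lemma weight_nonneg (hr : 2 ≤ r) (W E : Finset V) (g : V) : 0 ≤ weight a r W E g := by
  by_cases hg : g ∈ E
  · exact le_trans (by positivity) (le_weight hr hg)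
  · exact (weight_of_notMem hg).ge

lemma weight_le (hr : 2 ≤ r) (W E : Finset V) (g : V) : weight a r W E g ≤ 1 / (r - 1) := by
  have hr' : (2 : ℚ) ≤ r := by exact_mod_cast hr
  rw [weight]
  split_ifs
  · exact one_div_le_one_div_sub_one hr
  · exact le_rfl
  · exact one_div_nonneg.2 (by linarith)

lemma sum_weight_le_one (hr : 2 ≤ r) (hE : E ⊆ W) {p : V → Prop} [DecidablePred p]
    (hcard : {g ∈ W | p g}.card ≤ r) (hmiss : ∃ g ∈ W, p g ∧ g ∉ E) :
    ∑ g ∈ E with p g, weight a r W E g ≤ 1 := by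
  obtain ⟨g₀, hg₀, hp, hg₀E⟩ := hmiss
  have hlt : {g ∈ E | p g}.card < {g ∈ W | p g}.card :=
    Finset.card_lt_card ⟨Finset.filter_subset_filter _ hE, fun h =>
      hg₀E (Finset.mem_filter.1 (h (Finset.mem_filter.2 ⟨hg₀, hp⟩))).1⟩
  have hr' : (2 : ℚ) ≤ r := by exact_mod_cast hr
  have hlt' : ({g ∈ E | p g}.card : ℚ) + 1 ≤ r := by exact_mod_cast hlt.trans_le hcard
  calc ∑ g ∈ E with p g, weight a r W E g
      ≤ {g ∈ E | p g}.card • (1 / ((r : ℚ) - 1)) :=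
        Finset.sum_le_card_nsmul _ _ _ fun g _ => weight_le hr W E g
    _ ≤ 1 := by
        rw [nsmul_eq_mul, mul_one_div, div_le_one (by linarith)]
        linarith

lemma sum_weight_color_le_one (hr : 2 ≤ r) (hE : E ⊆ W) {x : α}
    (hcol : {g ∈ W | a g = x}.card ≤ r) : ∑ g ∈ E with a g = x, weight a r W E g ≤ 1 := by
  by_cases hfull : {g ∈ W | a g = x} ⊆ E
  · have hweight : ∀ g ∈ E.filter (a · = x), weight a r W E g = 1 / r := by
      intro g hg
      obtain ⟨hgE, rfl⟩ := Finset.mem_filter.1 hg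
      rw [weight, if_pos hgE, if_pos hfull]
    have hcard : ({g ∈ E | a g = x}.card : ℚ) ≤ r := by
      exact_mod_cast (Finset.card_le_card (Finset.filter_subset_filter _ hE)).trans hcol
    have hr' : (2 : ℚ) ≤ r := by exact_mod_cast hr
    rwa [Finset.sum_congr rfl hweight, Finset.sum_const, nsmul_eq_mul, mul_one_div,
      div_le_one (by linarith)]
  · obtain ⟨g, hg, hgE⟩ := Finset.not_subset.1 hfull
    exact sum_weight_le_one hr hE hcol
      ⟨g, (Finset.mem_filter.1 hg).1, (Finset.mem_filter.1 hg).2, hgE⟩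

lemma sum_weight_left_le_one [DecidableEq B] [DecidableEq C] (hr : 2 ≤ r) (hd : DegLE l ρ r W)
    (hE : E ⊆ W) (hmiss : ∀ g ∈ E, ∃ g' ∈ W, g' ∉ E ∧ l g' = l g) (b : B) :
    ∑ g ∈ E with l g = b, weight a r W E g ≤ 1 := by
  by_cases hb : ∃ g ∈ E, l g = b
  · obtain ⟨g, hg, rfl⟩ := hb
    obtain ⟨g', hg', hg'E, hl⟩ := hmiss g hg
    exact sum_weight_le_one hr hE (hd.1 (l g)) ⟨g', hg', hl, hg'E⟩
  · rw [Finset.filter_false_of_mem fun g hg h => hb ⟨g, hg, h⟩, Finset.sum_empty]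
    exact zero_le_one

lemma exists_rainbow_of_weight [DecidableEq B] [DecidableEq C] (hr : 2 ≤ r) (hd : DegLE l ρ r W)
    (hE : E ⊆ W) (hcol : ∀ x, {g ∈ W | a g = x}.card ≤ r)
    (hmiss : ∀ g ∈ E, ∃ g' ∈ W, g' ∉ E ∧ l g' = l g)
    (hρ : ∀ g ∈ E, ∀ g' ∈ E, ρ g = ρ g' → l g = l g') :
    ∃ M ⊆ E, Set.InjOn a M ∧ IsBipMatching l ρ M ∧ ∑ g ∈ E, weight a r W E g ≤ M.card := by
  obtain ⟨M, hME, hM, hcard⟩ := exists_bipMatching_of_fractional (l := a) (ρ := l)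
    (weight a r W E) (fun g _ => weight_nonneg hr W E g)
    (fun x => sum_weight_color_le_one hr hE (hcol x)) (sum_weight_left_le_one hr hd hE hmiss)
  exact ⟨M, hME, hM.1,
    ⟨hM.2, fun g hg g' hg' h => hM.2 hg hg' (hρ g (hME hg) g' (hME hg') h)⟩, hcard⟩

end Weight

section Flip

open scoped BigOperators

variable {X : Type*} [DecidableEq X] {x y : X}

/-- The Boolean function `τ` with its value at `x` negated. -/
def flipAt (x : X) (τ : X → Bool) : X → Bool :=
  Function.update τ x (!τ x)

lemma flipAt_self (x : X) (τ : X → Bool) : flipAt x τ x = !τ x := Function.update_self ..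

lemma flipAt_of_ne (h : y ≠ x) (τ : X → Bool) : flipAt x τ y = τ y := Function.update_of_ne h ..

lemma involutive_flipAt (x : X) : Function.Involutive (flipAt x) := fun τ => by simp [flipAt]

variable [Fintype X] {f : (X → Bool) → ℚ} {c : ℚ}

lemma expect_add_flipAt (x : X) (f : (X → Bool) → ℚ) :
    𝔼 τ, (f τ + f (flipAt x τ)) = 2 * 𝔼 τ, f τ := by
  have hflip : 𝔼 τ, f (flipAt x τ) = 𝔼 τ, f τ :=
    Fintype.expect_equiv (involutive_flipAt x).toPerm _ _ fun _ => rfl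
  rw [Finset.expect_add_distrib, hflip, two_mul]

lemma le_two_mul_expect (x : X) (h : ∀ τ, c ≤ f τ + f (flipAt x τ)) : c ≤ 2 * 𝔼 τ, f τ := by
  rw [← expect_add_flipAt x f]
  exact Finset.le_expect Finset.univ_nonempty fun τ _ => h τ

end Flip

section Chosen

open scoped BigOperators

variable {V α : Type*} {a : V → α} {r : ℕ} {W U : Finset V} {q : V → Finset V} {t : V → Bool}
  {g g' : V} {τ : Finset V → Bool}

/-- The edges of `U` whose type is the one that `τ` picks in their component; the functions `t` and
`q` assign to an edge its type and its component. -/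
def chosen (q : V → Finset V) (t : V → Bool) (U : Finset V) (τ : Finset V → Bool) : Finset V :=
  {g ∈ U | t g = τ (q g)}

lemma mem_chosen : g ∈ chosen q t U τ ↔ g ∈ U ∧ t g = τ (q g) := Finset.mem_filter

variable [DecidableEq V]

lemma mem_chosen_or (hg : g ∈ U) (τ : Finset V → Bool) :
    g ∈ chosen q t U τ ∨ g ∈ chosen q t U (flipAt (q g) τ) := by
  simp only [mem_chosen, hg, true_and, flipAt_self]
  cases t g <;> cases τ (q g) <;> simp

variable [DecidableEq α]

lemma le_weight_add_weight_flipAt (hr : 2 ≤ r) (hg' : g' ∈ W) (ha : a g' = a g)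
    (hq : q g ≠ q g') (hg : g ∈ chosen q t U τ) :
    1 / (r : ℚ) + 1 / (r - 1) ≤ weight a r W (chosen q t U τ) g +
      weight a r W (chosen q t U (flipAt (q g') τ)) g := by
  have hflip : g ∈ chosen q t U (flipAt (q g') τ) := by
    rw [mem_chosen] at hg ⊢
    rwa [flipAt_of_ne hq]
  by_cases hτ : g' ∈ chosen q t U τ
  · have hnot : g' ∉ chosen q t U (flipAt (q g') τ) := by
      rw [mem_chosen] at hτ ⊢
      simp [flipAt_self, hτ.2]
    exact add_le_add (le_weight hr hg) (weight_of_color_notMem hflip hg' ha hnot).ge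
  · rw [add_comm]
    exact add_le_add (weight_of_color_notMem hg hg' ha hτ).ge (le_weight hr hflip)

variable [Fintype V]

lemma le_expect_weight (hr : 2 ≤ r) (hg : g ∈ U) :
    1 / r ≤ 2 * 𝔼 τ, weight a r W (chosen q t U τ) g := by
  refine le_two_mul_expect (q g) fun τ => ?_
  rcases mem_chosen_or hg τ with h | h
  · exact (le_weight hr h).trans (le_add_of_nonneg_right (weight_nonneg hr _ _ _))
  · exact (le_weight hr h).trans (le_add_of_nonneg_left (weight_nonneg hr _ _ _))

lemma le_expect_weight_of_notMem_chosen (hr : 2 ≤ r) (hg : g ∈ U) (hg' : g' ∈ W) (ha : a g' = a g)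
    (hnot : ∀ τ, g ∈ chosen q t U τ → g' ∉ chosen q t U τ) :
    1 / ((r : ℚ) - 1) ≤ 2 * 𝔼 τ, weight a r W (chosen q t U τ) g := by
  refine le_two_mul_expect (q g) fun τ => ?_
  rcases mem_chosen_or hg τ with h | h
  · exact (weight_of_color_notMem h hg' ha (hnot _ h)).ge.trans
      (le_add_of_nonneg_right (weight_nonneg hr _ _ _))
  · exact (weight_of_color_notMem h hg' ha (hnot _ h)).ge.trans
      (le_add_of_nonneg_left (weight_nonneg hr _ _ _))

lemma le_expect_weight_of_comp_ne (hr : 2 ≤ r) (hg : g ∈ U) (hg' : g' ∈ W) (ha : a g' = a g)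
    (hq : q g ≠ q g') : 1 / (r : ℚ) + 1 / (r - 1) ≤ 4 * 𝔼 τ, weight a r W (chosen q t U τ) g := by
  have hnonneg : ∀ τ, 0 ≤ weight a r W (chosen q t U τ) g := fun τ => weight_nonneg hr _ _ _
  have hpair : 1 / (r : ℚ) + 1 / (r - 1) ≤ 2 * 𝔼 τ, (weight a r W (chosen q t U τ) g +
      weight a r W (chosen q t U (flipAt (q g') τ)) g) := by
    refine le_two_mul_expect (q g) fun τ => ?_
    rcases mem_chosen_or hg τ with h | h
    · exact (le_weight_add_weight_flipAt hr hg' ha hq h).trans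
        (le_add_of_nonneg_right (add_nonneg (hnonneg _) (hnonneg _)))
    · exact (le_weight_add_weight_flipAt hr hg' ha hq h).trans
        (le_add_of_nonneg_left (add_nonneg (hnonneg _) (hnonneg _)))
  rw [expect_add_flipAt (q g') fun τ => weight a r W (chosen q t U τ) g] at hpair
  linarith

lemma le_expect_weight_of_not_entire (hr : 2 ≤ r) (hg : g ∈ U) (hg' : g' ∈ W) (ha : a g' = a g)
    (hne : g' ∈ U → q g' = q g → t g' ≠ t g) :
    1 / (r : ℚ) + 1 / (r - 1) ≤ 4 * 𝔼 τ, weight a r W (chosen q t U τ) g := by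
  by_cases hcomp : q g' = q g
  · have hnot : ∀ τ, g ∈ chosen q t U τ → g' ∉ chosen q t U τ := by
      intro τ h h'
      rw [mem_chosen] at h h'
      exact hne h'.1 hcomp (by rw [h'.2, h.2, hcomp])
    have hle := le_expect_weight_of_notMem_chosen hr hg hg' ha hnot
    have hrr := one_div_le_one_div_sub_one hr
    linarith
  · exact le_expect_weight_of_comp_ne hr hg hg' ha (Ne.symm hcomp)

end Chosen

section Averaging

open scoped BigOperators

variable {V B C α : Type*} [DecidableEq α] {a : V → α} {l : V → B} {ρ : V → C} {r μ : ℕ}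
  {W Q : Finset V} {q : V → Finset V} {t : V → Bool}

lemma card_color_le (hcol : ∀ g ∈ W, {g' ∈ W | a g' = a g}.card = r) (x : α) :
    {g ∈ W | a g = x}.card ≤ r := by
  by_cases hx : ∃ g ∈ W, a g = x
  · obtain ⟨g, hg, rfl⟩ := hx
    exact (hcol g hg).le
  · rw [Finset.filter_false_of_mem fun g hg h => hx ⟨g, hg, h⟩]
    exact r.zero_le

variable [DecidableEq V] [DecidableEq B] [DecidableEq C]

lemma mem_biUnion_fourCycles {g : V} :
    g ∈ (fourCycles l ρ r W).biUnion id ↔ ∃ Q, IsFourCycle l ρ r W Q ∧ g ∈ Q := by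
  simp only [Finset.mem_biUnion, mem_fourCycles, id_eq]

lemma sum_biUnion_fourCycles (f : V → ℚ) :
    ∑ g ∈ (fourCycles l ρ r W).biUnion id, f g = ∑ Q ∈ fourCycles l ρ r W, ∑ g ∈ Q, f g :=
  Finset.sum_biUnion fun _ hQ _ hQ' hne => Finset.disjoint_left.2 fun _ hg hg' =>
    hne ((mem_fourCycles.1 hQ).eq_of_mem (mem_fourCycles.1 hQ') hg hg')

section Typing

variable (hqt : ∀ Q ∈ fourCycles l ρ r W, (∀ g ∈ Q, q g = Q) ∧ IsTyping l ρ Q t)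
  (hcol : ∀ g ∈ W, {g' ∈ W | a g' = a g}.card = r)
include hqt hcol

lemma sum_weight_chosen_le (hr : 2 ≤ r) (hd : DegLE l ρ r W)
    (hμ : ∀ M ⊆ W, Set.InjOn a M → IsBipMatching l ρ M → M.card ≤ μ) (τ : Finset V → Bool) :
    ∑ g ∈ (fourCycles l ρ r W).biUnion id,
      weight a r W (chosen q t ((fourCycles l ρ r W).biUnion id) τ) g ≤ μ := by
  set E := chosen q t ((fourCycles l ρ r W).biUnion id) τ
  have hmem : ∀ g ∈ E, ∃ Q ∈ fourCycles l ρ r W, g ∈ Q := fun g hg =>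
    Finset.mem_biUnion.1 (mem_chosen.1 hg).1
  have htype : ∀ Q ∈ fourCycles l ρ r W, ∀ g ∈ Q, ∀ g' ∈ Q, g ∈ E → g' ∈ E →
      (l g = l g' ↔ ρ g = ρ g') := by
    intro Q hQ g hg g' hg' hgE hg'E
    rw [← (hqt Q hQ).2 g hg g' hg', (mem_chosen.1 hgE).2, (mem_chosen.1 hg'E).2,
      (hqt Q hQ).1 g hg, (hqt Q hQ).1 g' hg']
  have hEW : E ⊆ W := fun g hg => by
    obtain ⟨Q, hQ, hgQ⟩ := hmem g hg
    exact (mem_fourCycles.1 hQ).subset hgQ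
  have hmiss : ∀ g ∈ E, ∃ g' ∈ W, g' ∉ E ∧ l g' = l g := by
    intro g hg
    obtain ⟨Q, hQ, hgQ⟩ := hmem g hg
    obtain ⟨g', hg', hl, hρ⟩ := (mem_fourCycles.1 hQ).exists_left_eq_right_ne hgQ
    exact ⟨g', (mem_fourCycles.1 hQ).subset hg',
      fun hg'E => hρ ((htype Q hQ g' hg' g hgQ hg'E hg).1 hl), hl⟩
  have hρ : ∀ g ∈ E, ∀ g' ∈ E, ρ g = ρ g' → l g = l g' := by
    intro g hg g' hg' h
    obtain ⟨Q, hQ, hgQ⟩ := hmem g hg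
    have hgQ' : g' ∈ Q := (mem_fourCycles.1 hQ).mem_of_meets hgQ (hEW hg') (Or.inr h.symm)
    exact (htype Q hQ g hgQ g' hgQ' hg hg').2 h
  obtain ⟨M, hME, hMa, hM, hcard⟩ :=
    exists_rainbow_of_weight hr hd hEW (card_color_le hcol) hmiss hρ
  have hsum := Finset.sum_subset (f := weight a r W E) (Finset.filter_subset _ _ : E ⊆ _)
    fun g _ hg => weight_of_notMem hg
  rw [← hsum]
  exact hcard.trans (by exact_mod_cast hμ M (hME.trans hEW) hMa hM)

lemma le_sum_expect_weight [Fintype V] (hr : 2 ≤ r) (hd : DegLE l ρ r W)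
    (hfree : ¬ HasFano a l ρ r W) (hQ : Q ∈ fourCycles l ρ r W) :
    (4 * r - 3 : ℚ) / (r - 1) ≤ 4 * ∑ g ∈ Q,
      𝔼 τ, weight a r W (chosen q t ((fourCycles l ρ r W).biUnion id) τ) g := by
  have hcycle : IsFourCycle l ρ r W Q := mem_fourCycles.1 hQ
  set δ : ℚ := 1 / (r - 1) - 1 / r with hδ
  have hδ0 : 0 ≤ δ := sub_nonneg.2 (one_div_le_one_div_sub_one hr)
  have hedge : ∀ g ∈ Q,
      2 * (1 / r) + (if ¬ {g' ∈ W | a g' = a g} ⊆ {g' ∈ Q | t g' = t g} then δ else 0) ≤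
        4 * 𝔼 τ, weight a r W (chosen q t ((fourCycles l ρ r W).biUnion id) τ) g := by
    intro g hg
    have hgU := mem_biUnion_fourCycles.2 ⟨Q, hcycle, hg⟩
    split_ifs with hentire
    · have hle := le_expect_weight (a := a) (W := W) (q := q) (t := t) hr hgU
      linarith
    · obtain ⟨g', hg', hnot⟩ := Finset.not_subset.1 hentire
      rw [Finset.mem_filter] at hg' hnot
      have hle := le_expect_weight_of_not_entire (a := a) (q := q) (t := t) hr hgU hg'.1 hg'.2
        fun hg'U hqq htt => hnot ⟨by
          obtain ⟨Q', hQ', hg'Q'⟩ := mem_biUnion_fourCycles.1 hg'U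
          rw [(hqt Q' (mem_fourCycles.2 hQ')).1 g' hg'Q', (hqt Q hQ).1 g hg] at hqq
          exact hqq ▸ hg'Q', htt⟩
      linarith
  have hentire : (r : ℚ) ≤ {g ∈ Q | ¬ {g' ∈ W | a g' = a g} ⊆ {g' ∈ Q | t g' = t g}}.card := by
    exact_mod_cast hcycle.le_card_not_entire hd hcol hfree (hqt Q hQ).2
  have hsum := Finset.sum_le_sum hedge
  rw [← Finset.mul_sum, Finset.sum_add_distrib, ← Finset.sum_filter, Finset.sum_const,
    Finset.sum_const, hcycle.card_eq, nsmul_eq_mul, nsmul_eq_mul] at hsum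
  refine le_trans ?_ hsum
  have hr' : (2 : ℚ) ≤ r := by exact_mod_cast hr
  have hconst : (4 * r - 3 : ℚ) / (r - 1) = (2 * r : ℕ) * (2 * (1 / r)) + r * δ := by
    have : (r : ℚ) - 1 ≠ 0 := by linarith
    have : (r : ℚ) ≠ 0 := by linarith
    rw [hδ]
    push_cast
    field_simp
    ring
  rw [hconst]
  gcongr

end Typing

/- Choosing one of the two types in each component uniformly at random yields a rainbow matching of
expected size at least `(4r-3)/(4(r-1))` per component. -/
omit [DecidableEq V] in
theorem card_fourCycles_le [Finite V] (hr : 2 ≤ r) (hd : DegLE l ρ r W)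
    (hcol : ∀ g ∈ W, {g' ∈ W | a g' = a g}.card = r) (hfree : ¬ HasFano a l ρ r W)
    (hμ : ∀ M ⊆ W, Set.InjOn a M → IsBipMatching l ρ M → M.card ≤ μ) :
    (4 * r - 3 : ℚ) * (fourCycles l ρ r W).card ≤ 4 * (r - 1) * μ := by
  classical
  cases nonempty_fintype V
  obtain ⟨q, t, hqt⟩ := exists_forall_fourCycles_isTyping l ρ r W
  set U := (fourCycles l ρ r W).biUnion id with hU
  have hupper : ∑ g ∈ U, 𝔼 τ, weight a r W (chosen q t U τ) g ≤ μ := by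
    rw [← Finset.expect_sum_comm]
    exact Finset.expect_le Finset.univ_nonempty fun τ _ =>
      sum_weight_chosen_le hqt hcol hr hd hμ τ
  have hlower := Finset.card_nsmul_le_sum (fourCycles l ρ r W) _ _ fun Q hQ =>
    le_sum_expect_weight hqt hcol hr hd hfree hQ
  rw [← Finset.mul_sum, ← sum_biUnion_fourCycles, ← hU, nsmul_eq_mul, mul_div_assoc'] at hlower
  have hr' : (2 : ℚ) ≤ r := by exact_mod_cast hr
  have hbound := hlower.trans (mul_le_mul_of_nonneg_left hupper zero_le_four)
  rw [div_le_iff₀ (by linarith)] at hbound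
  linarith

end Averaging

/-! ### Rainbow matchings with deficiency -/

section Deficiency

variable {V α : Type*} [DecidableEq V] {G : SimpleGraph V} {a : V → α} {W : Finset V}
  {D : ℕ → Finset V} {q : ℕ}

/-- `q` disjoint cliques, with no edges to `W` or to each other, that all contain vertices of every
colour: dummies that make up for a deficiency of `q` in a rainbow independent set of `W`. -/
structure IsDummyFamily (G : SimpleGraph V) (a : V → α) (W : Finset V) (q : ℕ)
    (D : ℕ → Finset V) : Prop where
  isClique : ∀ j < q, G.IsClique (D j)
  exists_color : ∀ j < q, ∀ x, ∃ v ∈ D j, a v = x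
  separated : ∀ j < q, ∀ u ∈ D j, ∀ v ∈ W, u ≠ v ∧ ¬ G.Adj u v
  separated_dummy : ∀ i < q, ∀ j < q, i ≠ j → ∀ u ∈ D i, ∀ v ∈ D j, u ≠ v ∧ ¬ G.Adj u v

lemma IsDummyFamily.union_last (h : IsDummyFamily G a W (q + 1) D) :
    IsDummyFamily G a (W ∪ D q) q D where
  isClique j hj := h.isClique j (by omega)
  exists_color j hj := h.exists_color j (by omega)
  separated j hj u hu v hv := (Finset.mem_union.1 hv).elim (h.separated j (by omega) u hu v)
    (h.separated_dummy j (by omega) q (by omega) (by omega) u hu v)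
  separated_dummy i hi j hj := h.separated_dummy i (by omega) j (by omega)

variable [DecidableEq α] [Fintype V]

lemma IsDummyFamily.acyclic_union_last (h : IsDummyFamily G a W (q + 1) D) {S : Finset α}
    (hS : Acyclic (indComplex G {v ∈ W | a v ∈ S}) (S.card - (q + 1))) :
    Acyclic (indComplex G {v ∈ W ∪ D q | a v ∈ S}) (S.card - q) := by
  rcases S.eq_empty_or_nonempty with rfl | ⟨x, hx⟩
  · rw [Finset.card_empty, Nat.zero_sub]
    exact acyclic_zero _
  have hq : q < q + 1 := q.lt_succ_self
  have hsep : ∀ u ∈ (D q).filter (a · ∈ S), ∀ v ∈ W.filter (a · ∈ S), u ≠ v ∧ ¬ G.Adj u v :=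
    fun u hu v hv => h.separated q hq u (Finset.mem_filter.1 hu).1 v (Finset.mem_filter.1 hv).1
  obtain ⟨v, hv, rfl⟩ := h.exists_color q hq x
  rw [Finset.filter_union]
  refine Acyclic.mono (acyclic_indComplex_union_clique ⟨v, Finset.mem_filter.2 ⟨hv, hx⟩⟩
    ((h.isClique q hq).subset (Finset.coe_subset.2 (Finset.filter_subset _ _)))
    (fun u hu w hw => (hsep u hu w hw).2)
    (Finset.disjoint_left.2 fun u hu hu' => (hsep u hu u hu').1 rfl) hS) (by omega)

variable [Fintype α]

lemma exists_rainbow_isIndepSet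
    (h : ∀ S : Finset α, Acyclic (indComplex G {v ∈ W | a v ∈ S}) S.card) :
    ∃ M ⊆ W, Set.InjOn a M ∧ G.IsIndepSet M ∧ Fintype.card α ≤ M.card := by
  obtain ⟨σ, hσ, himage, hcard⟩ := exists_rainbow
    (K := fun S => indComplex G {v ∈ W | a v ∈ S}) (col := a) ⟨Finset.empty_subset _, by simp⟩
    (fun S T hST σ hσ =>
      ⟨hσ.1.trans (Finset.monotone_filter_right _ fun _ _ hv => hST hv), hσ.2⟩)
    (fun S σ hσ => Finset.image_subset_iff.2 fun v hv => (Finset.mem_filter.1 (hσ.1 hv)).2) h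
  exact ⟨σ, hσ.1.trans (Finset.filter_subset _ _),
    Finset.card_image_iff.1 (by rw [himage, hcard, Finset.card_univ]), hσ.2, hcard.ge⟩

theorem IsDummyFamily.exists_rainbow_isIndepSet (hD : IsDummyFamily G a W q D)
    (h : ∀ S : Finset α, Acyclic (indComplex G {v ∈ W | a v ∈ S}) (S.card - q)) :
    ∃ M ⊆ W, Set.InjOn a M ∧ G.IsIndepSet M ∧ Fintype.card α ≤ M.card + q := by
  induction q generalizing W with
  | zero => exact Tripartite.exists_rainbow_isIndepSet h
  | succ q ih =>
    obtain ⟨M, hM, hMa, hind, hcard⟩ := ih hD.union_last fun S => hD.acyclic_union_last (h S)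
    have hsub : M.filter (· ∈ W) ⊆ M := Finset.filter_subset _ _
    refine ⟨M.filter (· ∈ W), fun v hv => (Finset.mem_filter.1 hv).2, hMa.mono hsub,
      hind.mono hsub, ?_⟩
    have hdummy : (M.filter (· ∉ W)).card ≤ 1 := by
      refine Finset.card_le_one.2 fun u hu v hv => by_contra fun hne => ?_
      obtain ⟨huM, huW⟩ := Finset.mem_filter.1 hu
      obtain ⟨hvM, hvW⟩ := Finset.mem_filter.1 hv
      exact hind huM hvM hne (hD.isClique q q.lt_succ_self
        ((Finset.mem_union.1 (hM huM)).resolve_left huW)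
        ((Finset.mem_union.1 (hM hvM)).resolve_left hvW) hne)
    have hsplit := Finset.card_filter_add_card_filter_not (s := M) (· ∈ W)
    omega

end Deficiency

section Bound

variable {V B C α : Type*} {a : V → α} {l : V → B} {ρ : V → C} {W : Finset V}
  {D : ℕ → Finset V} {r μ : ℕ}

lemma isBipMatching_iff_isIndepSet {M : Finset V} :
    IsBipMatching l ρ M ↔ (lineGraph l ρ).IsIndepSet M := by
  constructor
  · exact fun h u hu v hv hne hadj => hne (hadj.2.elim (h.1 hu hv) (h.2 hu hv))
  · exact fun h => ⟨fun u hu v hv huv => by_contra fun hne => h hu hv hne ⟨hne, Or.inl huv⟩,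
      fun u hu v hv huv => by_contra fun hne => h hu hv hne ⟨hne, Or.inr huv⟩⟩

section Degree

variable [DecidableEq B] [DecidableEq C]

lemma card_le_mul_bipNu (hr : 0 < r) (hd : DegLE l ρ r W) : W.card ≤ r * bipNu l ρ W := by
  have hr' : (0 : ℚ) < r := by exact_mod_cast hr
  have hdeg : ∀ P : Finset V, P.card ≤ r → ∑ _g ∈ P, (1 / r : ℚ) ≤ 1 := by
    intro P hP
    rw [Finset.sum_const, nsmul_eq_mul, mul_one_div, div_le_one hr']
    exact_mod_cast hP
  obtain ⟨M, hMW, hM, hcard⟩ := exists_bipMatching_of_fractional (l := l) (ρ := ρ) (W := W)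
    (fun _ => 1 / r) (fun _ _ => by positivity) (fun b => hdeg _ (hd.1 b))
    (fun c => hdeg _ (hd.2 c))
  rw [Finset.sum_const, nsmul_eq_mul, mul_one_div, div_le_iff₀ hr'] at hcard
  calc W.card ≤ M.card * r := by exact_mod_cast hcard
    _ ≤ bipNu l ρ W * r := Nat.mul_le_mul_right r (card_le_bipNu hMW hM)
    _ = r * bipNu l ρ W := mul_comm _ _

lemma le_potential_of_card_eq_mul {s : ℕ} (hr : 0 < r) (hd : DegLE l ρ r W)
    (hcard : W.card = r * s) :
    r * ((6 * r + 1) * s - 2 * (fourCycles l ρ r W).card) ≤ potential l ρ r W := by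
  have hν : s ≤ bipNu l ρ W :=
    Nat.le_of_mul_le_mul_left (hcard.ge.trans (card_le_mul_bipNu hr hd)) hr
  have hν' : (s : ℤ) ≤ bipNu l ρ W := by exact_mod_cast hν
  have hmul := mul_le_mul_of_nonneg_left hν' (by positivity : (0 : ℤ) ≤ 4 * r ^ 2)
  rw [potential, hcard]
  push_cast
  linarith

end Degree

variable [DecidableEq α]

lemma card_filter_color_mem (hcol : ∀ x, {g ∈ W | a g = x}.card = r) (S : Finset α) :
    {g ∈ W | a g ∈ S}.card = r * S.card := by
  have hmaps : ∀ g ∈ W.filter (a · ∈ S), a g ∈ S := fun g hg => (Finset.mem_filter.1 hg).2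
  rw [Finset.card_eq_sum_card_fiberwise hmaps, mul_comm]
  refine Finset.sum_const_nat fun x hx => ?_
  rw [← hcol x, Finset.filter_filter]
  exact congrArg _ (Finset.filter_congr fun g _ => and_iff_right_of_imp fun h => h ▸ hx)

variable [DecidableEq B] [DecidableEq C] [Finite V] [Fintype α]

lemma exists_potential_le (hμα : μ < Fintype.card α)
    (hD : IsDummyFamily (lineGraph l ρ) a W (Fintype.card α - μ - 1) D) (hd : DegLE l ρ r W)
    (hμ : ∀ M ⊆ W, Set.InjOn a M → IsBipMatching l ρ M → M.card ≤ μ) :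
    ∃ (S : Finset α) (d : ℕ), S.card + μ = Fintype.card α + d ∧
      potential l ρ r {v ∈ W | a v ∈ S} ≤ 12 * r ^ 2 * d := by
  classical
  cases nonempty_fintype V
  obtain ⟨S, hS⟩ : ∃ S : Finset α, ¬ Acyclic (indComplex (lineGraph l ρ) {v ∈ W | a v ∈ S})
      (S.card - (Fintype.card α - μ - 1)) := by
    by_contra! h
    obtain ⟨M, hMW, hMa, hM, hcard⟩ := hD.exists_rainbow_isIndepSet h
    have := hμ M hMW hMa (isBipMatching_iff_isIndepSet.2 hM)
    omega
  have hlt : Fintype.card α - μ - 1 < S.card := by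
    by_contra h
    rw [Nat.sub_eq_zero_of_le (by omega)] at hS
    exact hS (acyclic_zero _)
  refine ⟨S, S.card + μ - Fintype.card α, by omega, le_of_not_gt fun hpot => hS ?_⟩
  have hacyclic := acyclic_of_potential (hd.mono (Finset.filter_subset _ _)) hpot
  exact hacyclic.mono (by omega)

/- Some `s` of the `n` colours violate the topological Hall condition with deficiency, so `12r²d`
bounds the potential of their `rs` edges. `N` counts the 4-cycles among these edges, and `μ` bounds
the rainbow matchings. -/
lemma rainbow_bound_arith {r n μ s d N : ℚ} (hr : 2 ≤ r) (hsn : s ≤ n) (hd : s + μ = n + d)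
    (hpot : r * ((6 * r + 1) * s - 2 * N) ≤ 12 * r ^ 2 * d)
    (hN : (4 * r - 3) * N ≤ 4 * (r - 1) * μ) :
    (24 * r ^ 2 - 14 * r - 3) * n ≤ 2 * (24 * r ^ 2 - 14 * r - 4) * μ := by
  obtain rfl : d = s + μ - n := by linarith
  have hdiv : (6 * r + 1) * s - 2 * N ≤ 12 * r * (s + μ - n) :=
    le_of_mul_le_mul_left (hpot.trans_eq (by ring)) (by linarith : 0 < r)
  have hsn' := mul_nonneg (by linarith : 0 ≤ 6 * r - 1) (sub_nonneg.2 hsn)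
  have hlow : (6 * r + 1) * n - 12 * r * μ ≤ 2 * N := by linarith
  have hmul := mul_le_mul_of_nonneg_left hlow (by linarith : 0 ≤ 4 * r - 3)
  linarith

theorem mul_card_le_of_rainbow_le (hr : 2 ≤ r) (hμα : μ < Fintype.card α)
    (hD : IsDummyFamily (lineGraph l ρ) a W (Fintype.card α - μ - 1) D) (hd : DegLE l ρ r W)
    (hcol : ∀ x, {g ∈ W | a g = x}.card = r) (hfree : ¬ HasFano a l ρ r W)
    (hμ : ∀ M ⊆ W, Set.InjOn a M → IsBipMatching l ρ M → M.card ≤ μ) :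
    (24 * (r : ℚ) ^ 2 - 14 * r - 3) * Fintype.card α ≤
      2 * (24 * (r : ℚ) ^ 2 - 14 * r - 4) * μ := by
  obtain ⟨S, d, hSd, hpot⟩ := exists_potential_le hμα hD hd hμ
  have hsub : {v ∈ W | a v ∈ S} ⊆ W := Finset.filter_subset _ _
  have hcolS : ∀ g ∈ W.filter (a · ∈ S), {g' ∈ W.filter (a · ∈ S) | a g' = a g}.card = r := by
    intro g hg
    rw [← hcol (a g), Finset.filter_filter]
    refine congrArg _ (Finset.filter_congr fun g' _ => and_iff_right_of_imp fun h => ?_)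
    exact h ▸ (Finset.mem_filter.1 hg).2
  have hcycles := card_fourCycles_le hr (hd.mono hsub) hcolS (fun h => hfree (h.mono hsub))
    fun M hM => hμ M (hM.trans hsub)
  have hlow := (le_potential_of_card_eq_mul (zero_lt_two.trans_le hr) (hd.mono hsub)
    (card_filter_color_mem hcol S)).trans hpot
  have hSn : (S.card : ℚ) ≤ Fintype.card α := by exact_mod_cast Finset.card_le_univ S
  have hSd' : (S.card + μ : ℚ) = Fintype.card α + d := by exact_mod_cast hSd
  exact rainbow_bound_arith (N := (fourCycles l ρ r {v ∈ W | a v ∈ S}).card)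
    (by exact_mod_cast hr) hSn hSd' (by exact_mod_cast hlow) hcycles

end Bound

/-! ### Tripartite hypergraphs -/

section Padding

variable {E α δ δ' : Type*} {q r : ℕ}

lemma card_filter_map_inl_le [Fintype E] (T : Finset E) (p : E ⊕ α × Fin q → Prop)
    [DecidablePred p] :
    {g ∈ T.map .inl | p g}.card ≤ ({e | p (Sum.inl e)} : Finset E).card := by
  rw [Finset.filter_map, Finset.card_map]
  exact Finset.card_le_card (Finset.filter_subset_filter _ (Finset.subset_univ T))

/-- The colours of the edges of a hypergraph and of `q` dummy edges of every colour. -/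
def paddedColor (q : ℕ) (col : E → α) : E ⊕ α × Fin q → α :=
  Sum.elim col Prod.fst

/-- The ends, in one vertex class, of the edges of a hypergraph and of `q` dummy edges of every
colour. The `j`-th dummy edges of all colours share a new end `Sum.inr j`. -/
def paddedEnd (α : Type*) (q : ℕ) (f : E → δ) : E ⊕ α × Fin q → δ ⊕ ℕ :=
  Sum.map f fun x => x.2.val

/-- The `j`-th dummy edges of all colours. -/
def dummies (E α : Type*) [Fintype α] (q j : ℕ) : Finset (E ⊕ α × Fin q) :=
  ({x | x.2.val = j} : Finset (α × Fin q)).map .inr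

lemma mem_dummies [Fintype α] {j : ℕ} {v : E ⊕ α × Fin q} :
    v ∈ dummies E α q j ↔ ∃ x : α × Fin q, x.2.val = j ∧ Sum.inr x = v := by
  simp [dummies]

lemma isDummyFamily_dummies [Fintype α] (T : Finset E) (q : ℕ) (col : E → α) (f : E → δ)
    (f' : E → δ') : IsDummyFamily (lineGraph (paddedEnd α q f) (paddedEnd α q f'))
      (paddedColor q col) (T.map .inl) q (dummies E α q) where
  isClique j _ u hu v hv hne := by
    obtain ⟨x, rfl, rfl⟩ := mem_dummies.1 hu
    obtain ⟨y, hy, rfl⟩ := mem_dummies.1 hv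
    exact ⟨hne, Or.inl (congrArg Sum.inr hy.symm)⟩
  exists_color j hj x := ⟨Sum.inr (x, ⟨j, hj⟩), mem_dummies.2 ⟨_, rfl, rfl⟩, rfl⟩
  separated j _ u hu v hv := by
    obtain ⟨x, -, rfl⟩ := mem_dummies.1 hu
    obtain ⟨e, -, rfl⟩ := Finset.mem_map.1 hv
    simp [lineGraph, paddedEnd]
  separated_dummy i _ j _ hij u hu v hv := by
    obtain ⟨x, rfl, rfl⟩ := mem_dummies.1 hu
    obtain ⟨y, rfl, rfl⟩ := mem_dummies.1 hv
    have hxy : x ≠ y := fun h => hij (h ▸ rfl)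
    simp [lineGraph, paddedEnd, hxy, hij]

lemma card_filter_paddedEnd_le [Fintype E] [DecidableEq δ] {f : E → δ}
    (h : ∀ d, ({e | f e = d} : Finset E).card ≤ r) (T : Finset E) (b : δ ⊕ ℕ) :
    {g ∈ T.map .inl | paddedEnd α q f g = b}.card ≤ r := by
  refine (card_filter_map_inl_le T _).trans ?_
  rcases b with d | j
  · simpa [paddedEnd] using h d
  · simp [paddedEnd]

end Padding

section Hypergraph

variable {E α β γ : Type*} {ε : E → α × β × γ} {H : Multiset (α × β × γ)} {q r s : ℕ}

lemma card_filter_of_map_univ [Fintype E] (hε : Finset.univ.val.map ε = H) (p : α × β × γ → Prop)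
    [DecidablePred p] : ({e | p (ε e)} : Finset E).card = (H.filter p).card := by
  rw [← hε, Multiset.filter_map, Multiset.card_map]
  rfl

section Fano

variable [DecidableEq α] [DecidableEq β] [DecidableEq γ] {x₁ y₁ : α} {x₂ y₂ : β} {x₃ y₃ : γ}

lemma nsmul_fanoEdges_le (hα : x₁ ≠ y₁) (hβ : x₂ ≠ y₂) (h₁ : s ≤ H.count (x₁, x₂, x₃))
    (h₂ : s ≤ H.count (x₁, y₂, y₃)) (h₃ : s ≤ H.count (y₁, x₂, y₃))
    (h₄ : s ≤ H.count (y₁, y₂, x₃)) : s • fanoEdges x₁ y₁ x₂ y₂ x₃ y₃ ≤ H := by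
  have hnodup : (fanoEdges x₁ y₁ x₂ y₂ x₃ y₃).Nodup := by
    simp [fanoEdges, hα, hβ]
  refine Multiset.le_iff_count.2 fun e => ?_
  rw [Multiset.count_nsmul]
  by_cases he : e ∈ fanoEdges x₁ y₁ x₂ y₂ x₃ y₃
  · rw [Multiset.count_eq_one_of_mem hnodup he, mul_one]
    simp only [fanoEdges, Multiset.insert_eq_cons, Multiset.mem_cons, Multiset.mem_singleton] at he
    rcases he with rfl | rfl | rfl | rfl <;> assumption
  · simp [Multiset.count_eq_zero_of_notMem he]

variable [Fintype E] {T : Finset E}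

lemma exists_inl_of_le_card_parallel (hε : Finset.univ.val.map ε = H) {x : α} {y : β ⊕ ℕ}
    {z : γ ⊕ ℕ} (hs : 0 < s)
    (h : s ≤ (parallel (paddedColor q fun e => (ε e).1) (paddedEnd α q fun e => (ε e).2.1)
      (paddedEnd α q fun e => (ε e).2.2) (T.map .inl) x y z).card) :
    ∃ y' z', y = Sum.inl y' ∧ z = Sum.inl z' ∧ s ≤ H.count (x, y', z') := by
  obtain ⟨v, hv⟩ := Finset.card_pos.1 (hs.trans_le h)
  obtain ⟨hvT, -, rfl, rfl⟩ := Finset.mem_filter.1 hv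
  obtain ⟨e, -, rfl⟩ := Finset.mem_map.1 hvT
  refine ⟨_, _, rfl, rfl, h.trans ((card_filter_map_inl_le T _).trans (le_of_eq ?_))⟩
  rw [Multiset.count_eq_card_filter_eq, ← card_filter_of_map_univ hε]
  simp [paddedColor, paddedEnd, Prod.ext_iff, eq_comm]

lemma HasFano.exists_isFanoCopy (hε : Finset.univ.val.map ε = H) (hr : 0 < r)
    (h : HasFano (paddedColor q fun e => (ε e).1) (paddedEnd α q fun e => (ε e).2.1)
      (paddedEnd α q fun e => (ε e).2.2) r (T.map .inl)) :
    ∃ (s : ℕ) (x1 y1 : α) (x2 y2 : β) (x3 y3 : γ),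
      2 * s = r ∧ IsFanoCopy H s x1 y1 x2 y2 x3 y3 := by
  obtain ⟨s, x₁, y₁, x₂, y₂, x₃, y₃, hs, hα, hβ, hγ, h₁, h₂, h₃, h₄⟩ := h
  have hs0 : 0 < s := by omega
  obtain ⟨x₂, x₃, rfl, rfl, c₁⟩ := exists_inl_of_le_card_parallel hε hs0 h₁
  obtain ⟨y₂, y₃, rfl, rfl, c₂⟩ := exists_inl_of_le_card_parallel hε hs0 h₂
  obtain ⟨_, _, ⟨⟩, ⟨⟩, c₃⟩ := exists_inl_of_le_card_parallel hε hs0 h₃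
  obtain ⟨_, _, ⟨⟩, ⟨⟩, c₄⟩ := exists_inl_of_le_card_parallel hε hs0 h₄
  rw [ne_eq, Sum.inl.injEq] at hβ hγ
  exact ⟨s, x₁, y₁, x₂, y₂, x₃, y₃, hs, hα, hβ, hγ, nsmul_fanoEdges_le hα hβ c₁ c₂ c₃ c₄⟩

end Fano

lemma IsMatching.card_le_matchNum {M : Finset (α × β × γ)} (hM : IsMatching H M) :
    M.card ≤ matchNum H := by
  classical
  refine le_csSup ⟨H.toFinset.card, ?_⟩ ⟨M, hM, rfl⟩
  rintro k ⟨M', hM', rfl⟩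
  exact Finset.card_le_card fun e he => Multiset.mem_toFinset.2 (hM'.1 e he)

lemma card_le_matchNum_of_injOn {N : Finset E} (hN : ∀ e ∈ N, ε e ∈ H)
    (hα : Set.InjOn (fun e => (ε e).1) N) (hβ : Set.InjOn (fun e => (ε e).2.1) N)
    (hγ : Set.InjOn (fun e => (ε e).2.2) N) : N.card ≤ matchNum H := by
  classical
  have hM : IsMatching H (N.image ε) := by
    refine ⟨Finset.forall_mem_image.2 hN,
      Finset.forall_mem_image.2 fun e he => Finset.forall_mem_image.2 fun e' he' hne => ?_⟩
    have hne' : e ≠ e' := fun h => hne (h ▸ rfl)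
    exact ⟨hα.ne he he' hne', hβ.ne he he' hne', hγ.ne he he' hne'⟩
  rw [← Finset.card_image_of_injOn fun e he e' he' h => hα he he' (congrArg Prod.fst h)]
  exact hM.card_le_matchNum

lemma card_le_matchNum_of_isBipMatching {T : Finset E} (hT : ∀ e ∈ T, ε e ∈ H)
    {M : Finset (E ⊕ α × Fin q)} (hMT : M ⊆ T.map .inl)
    (hα : Set.InjOn (paddedColor q fun e => (ε e).1) (M : Set (E ⊕ α × Fin q)))
    (hM : IsBipMatching (paddedEnd α q fun e => (ε e).2.1) (paddedEnd α q fun e => (ε e).2.2) M) :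
    M.card ≤ matchNum H := by
  obtain ⟨N, hNT, rfl⟩ := Finset.subset_map_iff.1 hMT
  have hmem : ∀ e ∈ N, Sum.inl e ∈ N.map (.inl : E ↪ E ⊕ α × Fin q) := fun e he =>
    Finset.mem_map_of_mem .inl he
  rw [Finset.card_map]
  exact card_le_matchNum_of_injOn (fun e he => hT e (hNT he))
    (fun e he e' he' h => Sum.inl_injective (hα (hmem e he) (hmem e' he') h))
    (fun e he e' he' h =>
      Sum.inl_injective (hM.1 (hmem e he) (hmem e' he') (congrArg Sum.inl h)))
    (fun e he e' he' h =>
      Sum.inl_injective (hM.2 (hmem e he) (hmem e' he') (congrArg Sum.inl h)))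

lemma exists_card_filter_eq [Fintype E] [DecidableEq α] {col : E → α}
    (h : ∀ x, r ≤ ({e | col e = x} : Finset E).card) :
    ∃ T : Finset E, ∀ x, {e ∈ T | col e = x}.card = r := by
  classical
  choose T hT hcard using fun x => Finset.exists_subset_card_eq (h x)
  refine ⟨({e | e ∈ T (col e)} : Finset E), fun x => ?_⟩
  rw [← hcard x, Finset.filter_filter]
  refine congrArg _ (Finset.ext fun e => ⟨fun he => ?_, fun he => ?_⟩)
  · obtain ⟨-, heT, rfl⟩ := Finset.mem_filter.1 he
    exact heT
  · obtain ⟨-, rfl⟩ := Finset.mem_filter.1 (hT x he)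
    exact Finset.mem_filter.2 ⟨Finset.mem_univ e, he, rfl⟩

variable [Fintype α] [DecidableEq α] [DecidableEq β] [DecidableEq γ]

theorem mul_card_le_of_matchNum_lt (hr : 2 ≤ r) (hlt : matchNum H < Fintype.card α)
    (hdA : ∀ a, r ≤ deg1 H a) (hdB : ∀ b, deg2 H b ≤ r) (hdC : ∀ c, deg3 H c ≤ r)
    (hfree : ¬ ∃ (s : ℕ) (x1 y1 : α) (x2 y2 : β) (x3 y3 : γ),
      2 * s = r ∧ IsFanoCopy H s x1 y1 x2 y2 x3 y3) :
    (24 * (r : ℚ) ^ 2 - 14 * r - 3) * Fintype.card α ≤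
      2 * (24 * (r : ℚ) ^ 2 - 14 * r - 4) * matchNum H := by
  classical
  have hε : Finset.univ.val.map (fun e : H => e.1) = H := Multiset.map_univ_coe H
  have hcard := card_filter_of_map_univ hε
  obtain ⟨T, hT⟩ := exists_card_filter_eq (col := fun e : H => e.1.1) fun x =>
    (hdA x).trans_eq (hcard (·.1 = x)).symm
  refine mul_card_le_of_rainbow_le hr hlt
    (isDummyFamily_dummies T _ (·.1.1) (·.1.2.1) (·.1.2.2))
    ⟨card_filter_paddedEnd_le (fun b => (hcard (·.2.1 = b)).trans_le (hdB b)) T,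
      card_filter_paddedEnd_le (fun c => (hcard (·.2.2 = c)).trans_le (hdC c)) T⟩ (fun x => ?_)
    (fun h => hfree (h.exists_isFanoCopy hε (zero_lt_two.trans_le hr)))
    fun M hMT hα hM =>
      card_le_matchNum_of_isBipMatching (fun _ _ => Multiset.coe_mem) hMT hα hM
  rw [Finset.filter_map, Finset.card_map]
  exact hT x

theorem mul_card_le_mul_matchNum (hr : 2 ≤ r) (hdA : ∀ a, r ≤ deg1 H a) (hdB : ∀ b, deg2 H b ≤ r)
    (hdC : ∀ c, deg3 H c ≤ r)
    (hfree : ¬ ∃ (s : ℕ) (x1 y1 : α) (x2 y2 : β) (x3 y3 : γ),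
      2 * s = r ∧ IsFanoCopy H s x1 y1 x2 y2 x3 y3) :
    (24 * (r : ℚ) ^ 2 - 14 * r - 3) * Fintype.card α ≤
      2 * (24 * (r : ℚ) ^ 2 - 14 * r - 4) * matchNum H := by
  rcases lt_or_ge (matchNum H) (Fintype.card α) with hlt | hge
  · exact mul_card_le_of_matchNum_lt hr hlt hdA hdB hdC hfree
  · have hr' : (2 : ℚ) ≤ r := by exact_mod_cast hr
    have hge' : (Fintype.card α : ℚ) ≤ matchNum H := by exact_mod_cast hge
    have hconst : 24 * (r : ℚ) ^ 2 - 14 * r - 3 ≤ 2 * (24 * (r : ℚ) ^ 2 - 14 * r - 4) := by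
      nlinarith
    exact mul_le_mul hconst hge' (Nat.cast_nonneg _) (by nlinarith)

end Hypergraph

theorem stmt9_general {α β γ : Type*} [Fintype α] [DecidableEq α] [DecidableEq β] [DecidableEq γ]
    (H : Multiset (α × β × γ)) (r : ℕ) (hr : 2 ≤ r) (hdA : ∀ a : α, r ≤ deg1 H a)
    (hdB : ∀ b : β, deg2 H b ≤ r) (hdC : ∀ c : γ, deg3 H c ≤ r)
    (hfree : ¬ ∃ (s : ℕ) (x1 y1 : α) (x2 y2 : β) (x3 y3 : γ),
      2 * s = r ∧ IsFanoCopy H s x1 y1 x2 y2 x3 y3) :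
    (1 + 1 / (24 * (r : ℝ) ^ 2 - 14 * r - 4)) * Fintype.card α / 2 ≤ matchNum H := by
  have hr' : (2 : ℝ) ≤ r := by exact_mod_cast hr
  have hbound : (24 * (r : ℝ) ^ 2 - 14 * r - 3) * Fintype.card α ≤
      2 * (24 * (r : ℝ) ^ 2 - 14 * r - 4) * matchNum H := by
    exact_mod_cast (Rat.cast_le (K := ℝ)).2 (mul_card_le_mul_matchNum hr hdA hdB hdC hfree)
  have hpos : (0 : ℝ) < 24 * (r : ℝ) ^ 2 - 14 * r - 4 := by nlinarith
  rw [one_add_div hpos.ne', sub_add, div_mul_eq_mul_div, div_div, div_le_iff₀ (by linarith)]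
  norm_num
  linarith

lemma one_div_le_one_div_sharp {r : ℝ} (hr : 2 ≤ r) :
    1 / (72 * r ^ 2 - 150 * r + 77) ≤ 1 / (24 * r ^ 2 - 14 * r - 4) :=
  one_div_le_one_div_of_le (by nlinarith) (by nlinarith)

/-- If every vertex of the class `α` (of size `n`) has degree at least `r ≥ 2`, every
vertex of the other two classes has degree at most `r`, and `H` contains no subhypergraph
isomorphic to `(r/2) • F`, then `ν(H) ≥ (1 + 1/(72r² − 150r + 77))·n/2`. -/
theorem stmt9 {α β γ : Type*} [Fintype α]
    [DecidableEq α] [DecidableEq β] [DecidableEq γ]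
    (H : Multiset (α × β × γ)) (n r : ℕ) (hr : 2 ≤ r)
    (hA : Fintype.card α = n)
    (hdA : ∀ a : α, r ≤ deg1 H a)
    (hdB : ∀ b : β, deg2 H b ≤ r)
    (hdC : ∀ c : γ, deg3 H c ≤ r)
    (hfree : ¬ ∃ (s : ℕ) (x1 y1 : α) (x2 y2 : β) (x3 y3 : γ),
      2 * s = r ∧ IsFanoCopy H s x1 y1 x2 y2 x3 y3) :
    (1 + 1 / (72 * (r : ℝ) ^ 2 - 150 * r + 77)) * n / 2 ≤ (matchNum H : ℝ) := by
  refine hA ▸ le_trans ?_ (stmt9_general H r hr hdA hdB hdC hfree)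
  gcongr (1 + ?_) * _ / _
  exact one_div_le_one_div_sharp (r := r) (by exact_mod_cast hr)

end Tripartite
end

section
/- For every even r ≥ 2 there exists an r-regular 3-partite 3-graph H with n vertices in each vertex class (for some n), not containing a copy of (r/2)·F, such that ν(H) ≤ (1 + 1/(r + 1))·n/2. (Such an H exists with n = r + 1 and ν(H) ≤ r/2 + 1.) -/
/-!
Start from `s = r / 2` disjoint copies of `s • F`, each on two vertices called `x`, `y` in every
class. From each of them remove one of the `s` parallel edges `(x, x, x)`, and restore the degrees
by the edges `(x, z, z)`, `(z, x, z)`, `(z, z, x)`, where the hub `z` is common to all the copies.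
The edges of `F` pairwise meet, and so do the edges at the hub, since each contains `z` in two of
the three classes; hence a matching has at most `s + 1` edges. In an `r`-regular hypergraph a copy
of `s • F` uses up all the degrees of its vertices, so it would be a connected component; but the
hypergraph is connected, and too large to be a copy of `s • F`.
-/

namespace Tripartite

section Matching

variable {α β γ : Type*}

/-- A set of edges is intersecting if any two of them share a vertex: the obstruction used to bound
the matching number from above. -/
def IsIntersecting (A : Set (α × β × γ)) : Prop :=
  ∀ e ∈ A, ∀ f ∈ A, e.1 = f.1 ∨ e.2.1 = f.2.1 ∨ e.2.2 = f.2.2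

theorem IsMatching.eq_of_isIntersecting {H : Multiset (α × β × γ)} {M : Finset (α × β × γ)}
    (hM : IsMatching H M) {A : Set (α × β × γ)} (hA : IsIntersecting A) {e f : α × β × γ}
    (he : e ∈ M) (hf : f ∈ M) (heA : e ∈ A) (hfA : f ∈ A) : e = f := by
  by_contra hne
  have hdisjoint := hM.2 e he f hf hne
  have hmeet := hA e heA f hfA
  tauto

theorem matchNum_le_card_of_cover {κ : Type*} [Fintype κ] {H : Multiset (α × β × γ)}
    {A : κ → Set (α × β × γ)} (hA : ∀ k, IsIntersecting (A k))
    (hcover : ∀ e ∈ H, ∃ k, e ∈ A k) : matchNum H ≤ Fintype.card κ := by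
  refine csSup_le ⟨0, ∅, by simp [IsMatching], rfl⟩ ?_
  rintro _ ⟨M, hM, rfl⟩
  have hcoverM : ∀ e : M, ∃ k, (e : α × β × γ) ∈ A k := fun e => hcover e (hM.1 e e.2)
  choose k hk using hcoverM
  have hinj : k.Injective := fun e f hef =>
    Subtype.ext (hM.eq_of_isIntersecting (hA (k e)) e.2 f.2 (hk e) (hef ▸ hk f))
  simpa using Fintype.card_le_of_injective k hinj

theorem isIntersecting_fanoEdges (x₁ y₁ : α) (x₂ y₂ : β) (x₃ y₃ : γ) :
    IsIntersecting {e | e ∈ fanoEdges x₁ y₁ x₂ y₂ x₃ y₃} := by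
  simp [IsIntersecting, fanoEdges]

end Matching

section FanoComponent

theorem count_eq_of_countP_le {α : Type*} [DecidableEq α] {G H : Multiset α} (hGH : G ≤ H)
    {p : α → Prop} [DecidablePred p] (hp : H.countP p ≤ G.countP p) {a : α} (ha : p a) :
    H.count a = G.count a := by
  rw [Multiset.countP_eq_card_filter, Multiset.countP_eq_card_filter] at hp
  have hfilter := Multiset.eq_of_le_of_card_le (Multiset.filter_le_filter p hGH) hp
  rw [← Multiset.count_filter_of_pos ha, ← hfilter, Multiset.count_filter_of_pos ha]

theorem two_le_deg1_fanoEdges {α β γ : Type*} [DecidableEq α] {x₁ y₁ a : α} (x₂ y₂ : β)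
    (x₃ y₃ : γ) (ha : a = x₁ ∨ a = y₁) :
    2 ≤ deg1 (fanoEdges x₁ y₁ x₂ y₂ x₃ y₃) a := by
  simp only [deg1, fanoEdges, Multiset.insert_eq_cons, Multiset.filter_cons,
    Multiset.filter_singleton]
  rcases ha with rfl | rfl <;> split_ifs <;> simp_all

theorem two_le_deg2_fanoEdges {α β γ : Type*} [DecidableEq β] {x₂ y₂ b : β} (x₁ y₁ : α)
    (x₃ y₃ : γ) (hb : b = x₂ ∨ b = y₂) :
    2 ≤ deg2 (fanoEdges x₁ y₁ x₂ y₂ x₃ y₃) b := by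
  simp only [deg2, fanoEdges, Multiset.insert_eq_cons, Multiset.filter_cons,
    Multiset.filter_singleton]
  rcases hb with rfl | rfl <;> split_ifs <;> simp_all

theorem two_le_deg3_fanoEdges {α β γ : Type*} [DecidableEq γ] {x₃ y₃ c : γ} (x₁ y₁ : α)
    (x₂ y₂ : β) (hc : c = x₃ ∨ c = y₃) :
    2 ≤ deg3 (fanoEdges x₁ y₁ x₂ y₂ x₃ y₃) c := by
  simp only [deg3, fanoEdges, Multiset.insert_eq_cons, Multiset.filter_cons,
    Multiset.filter_singleton]
  rcases hc with rfl | rfl <;> split_ifs <;> simp_all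

variable {α β γ : Type*} [DecidableEq α] [DecidableEq β] [DecidableEq γ]
  {H : Multiset (α × β × γ)} {s : ℕ} {x₁ y₁ : α} {x₂ y₂ : β} {x₃ y₃ : γ}

theorem IsFanoCopy.isFanoComponent (hF : IsFanoCopy H s x₁ y₁ x₂ y₂ x₃ y₃)
    (hH : IsRegular H (2 * s)) : IsFanoComponent H s x₁ y₁ x₂ y₂ x₃ y₃ := by
  obtain ⟨h₁, h₂, h₃, hle⟩ := hF
  obtain ⟨hdeg₁, hdeg₂, hdeg₃⟩ := hH
  refine ⟨h₁, h₂, h₃, ?_⟩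
  -- A vertex of the copy already has its full degree `2 * s` inside the copy.
  have hcount (p : α × β × γ → Prop) [DecidablePred p] (hpH : (H.filter p).card = 2 * s)
      (hpF : 2 ≤ ((fanoEdges x₁ y₁ x₂ y₂ x₃ y₃).filter p).card) {e : α × β × γ} (he : p e) :
      H.count e = (s • fanoEdges x₁ y₁ x₂ y₂ x₃ y₃).count e := by
    refine count_eq_of_countP_le hle ?_ he
    rw [Multiset.countP_eq_card_filter, hpH, Multiset.countP_nsmul, mul_comm,
      Multiset.countP_eq_card_filter]
    exact Nat.mul_le_mul_left s hpF
  ext e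
  rw [Multiset.count_filter]
  split_ifs with he
  · obtain he₁ | he₂ | he₃ : (e.1 = x₁ ∨ e.1 = y₁) ∨ (e.2.1 = x₂ ∨ e.2.1 = y₂) ∨
        (e.2.2 = x₃ ∨ e.2.2 = y₃) := by tauto
    · exact hcount (·.1 = e.1) (hdeg₁ e.1) (two_le_deg1_fanoEdges _ _ _ _ he₁) rfl
    · exact hcount (·.2.1 = e.2.1) (hdeg₂ e.2.1) (two_le_deg2_fanoEdges _ _ _ _ he₂) rfl
    · exact hcount (·.2.2 = e.2.2) (hdeg₃ e.2.2) (two_le_deg3_fanoEdges _ _ _ _ he₃) rfl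
  · refine (Multiset.count_eq_zero_of_notMem fun hmem => he ?_).symm
    have hmem := Multiset.mem_of_mem_nsmul hmem
    simp only [fanoEdges, Multiset.insert_eq_cons, Multiset.mem_cons,
      Multiset.mem_singleton] at hmem
    rcases hmem with rfl | rfl | rfl | rfl <;> simp

theorem IsFanoComponent.mem_iff_mem (hF : IsFanoComponent H s x₁ y₁ x₂ y₂ x₃ y₃)
    {a : α} {b : β} {c : γ} (he : (a, b, c) ∈ H) :
    (a ∈ ({x₁, y₁} : Set α) ↔ b ∈ ({x₂, y₂} : Set β)) ∧
      (b ∈ ({x₂, y₂} : Set β) ↔ c ∈ ({x₃, y₃} : Set γ)) := by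
  have hmem (hmeet : a = x₁ ∨ a = y₁ ∨ b = x₂ ∨ b = y₂ ∨ c = x₃ ∨ c = y₃) :
      (a, b, c) ∈ fanoEdges x₁ y₁ x₂ y₂ x₃ y₃ :=
    Multiset.mem_of_mem_nsmul (hF.2.2.2 ▸ Multiset.mem_filter.2 ⟨he, hmeet⟩)
  simp only [fanoEdges, Multiset.insert_eq_cons, Multiset.mem_cons, Multiset.mem_singleton,
    Prod.mk.injEq] at hmem
  simp only [Set.mem_insert_iff, Set.mem_singleton_iff]
  tauto

end FanoComponent

section CrossEdges

variable {V : Type*}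

/-- The three edges having one vertex `a` and two vertices `b`, where the three vertex classes are
copies of the same type `V`. They are the edges of `fanoEdges a b a b a b` other than `(a, a, a)`,
and they also serve to join `a` to `b`. -/
def crossEdges (a b : V) : Multiset (V × V × V) :=
  {(a, b, b), (b, a, b), (b, b, a)}

theorem isIntersecting_crossEdges (b : V) : IsIntersecting {e | ∃ a, e ∈ crossEdges a b} := by
  simp only [IsIntersecting, crossEdges, Multiset.insert_eq_cons, Multiset.mem_cons,
    Multiset.mem_singleton, Set.mem_ofPred_eq]
  rintro e ⟨a, rfl | rfl | rfl⟩ f ⟨a', rfl | rfl | rfl⟩ <;> simp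

theorem IsFanoComponent.mem_iff_mem_of_crossEdges_subset [DecidableEq V]
    {H : Multiset (V × V × V)} {s : ℕ} {x₁ y₁ x₂ y₂ x₃ y₃ : V}
    (hF : IsFanoComponent H s x₁ y₁ x₂ y₂ x₃ y₃) {a b : V} (hab : crossEdges a b ⊆ H) :
    a ∈ ({x₁, y₁} : Set V) ↔ b ∈ ({x₁, y₁} : Set V) := by
  have habb := hF.mem_iff_mem (hab (by simp [crossEdges] : (a, b, b) ∈ crossEdges a b))
  have hbab := hF.mem_iff_mem (hab (by simp [crossEdges] : (b, a, b) ∈ crossEdges a b))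
  rw [habb.1, habb.2, hbab.1, hbab.2]

end CrossEdges

section VertexMultiset

variable {V : Type*}

/-- In each of the three classes, the vertices of the edges of `H`, counted with multiplicity, form
the multiset `m`. This records all degrees at once, in a form that is additive in `H`. -/
def HasVertexMultiset (H : Multiset (V × V × V)) (m : Multiset V) : Prop :=
  H.map (·.1) = m ∧ H.map (·.2.1) = m ∧ H.map (·.2.2) = m

theorem HasVertexMultiset.sum {ι : Type*} {S : Finset ι} {H : ι → Multiset (V × V × V)}
    {m : ι → Multiset V} (h : ∀ i ∈ S, HasVertexMultiset (H i) (m i)) :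
    HasVertexMultiset (∑ i ∈ S, H i) (∑ i ∈ S, m i) := by
  refine ⟨?_, ?_, ?_⟩ <;> rw [← Multiset.coe_mapAddMonoidHom, map_sum]
  · exact Finset.sum_congr rfl fun i hi => (h i hi).1
  · exact Finset.sum_congr rfl fun i hi => (h i hi).2.1
  · exact Finset.sum_congr rfl fun i hi => (h i hi).2.2

theorem isRegular_iff_hasVertexMultiset [Fintype V] [DecidableEq V] {H : Multiset (V × V × V)}
    {r : ℕ} : IsRegular H r ↔ HasVertexMultiset H (r • Finset.univ.val) := by
  simp [IsRegular, HasVertexMultiset, deg1, deg2, deg3, Multiset.ext, Multiset.count_map,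
    Multiset.count_univ, eq_comm]

end VertexMultiset

section HubGraph

variable {ι V : Type*}

/-- The truncated Fano plane on `x` and `y` with multiplicity `t + 1`, in which one copy of the
edge `(x, x, x)` is replaced by the three edges joining `x` to the hub `z`. Writing the multiplicity
as `t + 1` avoids truncated subtraction. -/
def hubGadget (t : ℕ) (x y z : V) : Multiset (V × V × V) :=
  t • fanoEdges x y x y x y + crossEdges x y + crossEdges x z

theorem hasVertexMultiset_hubGadget (t : ℕ) (x y z : V) :
    HasVertexMultiset (hubGadget t x y z) ((2 * (t + 1)) • ({x} + {y}) + 2 • {z}) := by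
  refine ⟨?_, ?_, ?_⟩ <;>
    simp only [hubGadget, fanoEdges, crossEdges, Multiset.insert_eq_cons, Multiset.map_add,
      Multiset.map_nsmul, Multiset.map_singleton, ← Multiset.singleton_add] <;>
    module

theorem mem_fanoEdges_or_mem_crossEdges_of_mem_hubGadget {t : ℕ} {x y z : V} {e : V × V × V}
    (he : e ∈ hubGadget t x y z) : e ∈ fanoEdges x y x y x y ∨ e ∈ crossEdges x z := by
  rw [hubGadget, Multiset.mem_add, Multiset.mem_add] at he
  rcases he with (he | he) | he
  · exact Or.inl (Multiset.mem_of_mem_nsmul he)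
  · exact Or.inl (Multiset.mem_cons_of_mem he)
  · exact Or.inr he

variable [Fintype ι]

/-- The hypergraph proving the theorem: one gadget for each `i : ι`, all sharing the same hub. The
bijection `φ` names the vertices of each class: `φ none` is the hub, and `φ (some (inl i))`,
`φ (some (inr i))` are the vertices `x`, `y` of the `i`-th gadget. -/
def hubGraph (t : ℕ) (φ : Option (ι ⊕ ι) ≃ V) : Multiset (V × V × V) :=
  ∑ i, hubGadget t (φ (some (.inl i))) (φ (some (.inr i))) (φ none)

theorem hubGadget_subset_hubGraph (t : ℕ) (φ : Option (ι ⊕ ι) ≃ V) (i : ι) :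
    hubGadget t (φ (some (.inl i))) (φ (some (.inr i))) (φ none) ⊆ hubGraph t φ :=
  fun _ he => Multiset.mem_sum.2 ⟨i, Finset.mem_univ i, he⟩

theorem isRegular_hubGraph [DecidableEq V] {t : ℕ} (hι : Fintype.card ι = t + 1)
    (φ : Option (ι ⊕ ι) ≃ V) : IsRegular (hubGraph t φ) (2 * (t + 1)) := by
  let _ : Fintype V := Fintype.ofEquiv _ φ
  have huniv : (Finset.univ.val : Multiset V) =
      {φ none} + ∑ i, ({φ (some (.inl i))} + {φ (some (.inr i))}) := by
    rw [← Finset.sum_multiset_singleton, ← φ.sum_comp, Fintype.sum_option, Fintype.sum_sum_type,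
      Finset.sum_add_distrib]
  have hdegrees : (2 * (t + 1)) • (Finset.univ.val : Multiset V) =
      ∑ i, ((2 * (t + 1)) • ({φ (some (.inl i))} + {φ (some (.inr i))}) + 2 • {φ none}) := by
    rw [huniv, Finset.sum_add_distrib (f := fun i => (2 * (t + 1)) • _), ← Finset.smul_sum,
      Finset.sum_const, Finset.card_univ, hι]
    module
  rw [isRegular_iff_hasVertexMultiset, hdegrees]
  exact HasVertexMultiset.sum fun i _ => hasVertexMultiset_hubGadget t _ _ _

theorem matchNum_hubGraph_le (t : ℕ) (φ : Option (ι ⊕ ι) ≃ V) :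
    matchNum (hubGraph t φ) ≤ Fintype.card ι + 1 := by
  let x (i : ι) : V := φ (some (.inl i))
  let y (i : ι) : V := φ (some (.inr i))
  let A : Option ι → Set (V × V × V)
    | none => {e | ∃ a, e ∈ crossEdges a (φ none)}
    | some i => {e | e ∈ fanoEdges (x i) (y i) (x i) (y i) (x i) (y i)}
  have hA : ∀ k, IsIntersecting (A k)
    | none => isIntersecting_crossEdges _
    | some _ => isIntersecting_fanoEdges _ _ _ _ _ _
  have hcover : ∀ e ∈ hubGraph t φ, ∃ k, e ∈ A k := by
    intro e he
    obtain ⟨i, -, hi⟩ := Multiset.mem_sum.1 he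
    rcases mem_fanoEdges_or_mem_crossEdges_of_mem_hubGadget hi with hfano | hcross
    exacts [⟨some i, hfano⟩, ⟨none, x i, hcross⟩]
  simpa using matchNum_le_card_of_cover hA hcover

theorem not_isFanoComponent_hubGraph [DecidableEq V] [Nonempty ι] (t s : ℕ)
    (φ : Option (ι ⊕ ι) ≃ V) (x₁ y₁ x₂ y₂ x₃ y₃ : V) :
    ¬ IsFanoComponent (hubGraph t φ) s x₁ y₁ x₂ y₂ x₃ y₃ := by
  intro hF
  have hx (i : ι) : φ (some (.inl i)) ∈ ({x₁, y₁} : Set V) ↔ φ none ∈ ({x₁, y₁} : Set V) :=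
    hF.mem_iff_mem_of_crossEdges_subset fun _ he =>
      hubGadget_subset_hubGraph t φ i (by simp [hubGadget, he])
  have hy (i : ι) : φ (some (.inl i)) ∈ ({x₁, y₁} : Set V) ↔
      φ (some (.inr i)) ∈ ({x₁, y₁} : Set V) :=
    hF.mem_iff_mem_of_crossEdges_subset fun _ he =>
      hubGadget_subset_hubGraph t φ i (by simp [hubGadget, he])
  have hconnected (v : V) : v ∈ ({x₁, y₁} : Set V) ↔ φ none ∈ ({x₁, y₁} : Set V) := by
    obtain ⟨_ | i | i, rfl⟩ := φ.surjective v
    exacts [Iff.rfl, hx i, (hy i).symm.trans (hx i)]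
  have hall (v : V) : v ∈ ({x₁, y₁} : Set V) :=
    (hconnected v).2 ((hconnected x₁).1 (Set.mem_insert x₁ {y₁}))
  have hle : Nat.card V ≤ 2 := by
    rw [← Set.ncard_univ, ← Set.eq_univ_of_forall hall]
    simpa using Set.ncard_insert_le x₁ {y₁}
  have hcard : Nat.card V = Fintype.card ι + Fintype.card ι + 1 := by
    simp [← Nat.card_congr φ]
  have hpos := Fintype.card_pos (α := ι)
  omega

end HubGraph

/-- For every even `r ≥ 2` there is an `r`-regular 3-partite 3-graph `H` with `n` vertices
in each class (namely `n = r + 1`), containing no copy of `(r/2) • F`, with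
`ν(H) ≤ r/2 + 1`, so that `ν(H) ≤ (1 + 1/(r+1))·n/2`. -/
theorem stmt10 (r : ℕ) (hr : 2 ≤ r) (hre : Even r) :
    ∃ (n : ℕ) (H : Multiset (Fin n × Fin n × Fin n)),
      n = r + 1 ∧
      IsRegular H r ∧
      (¬ ∃ (s : ℕ) (x1 y1 x2 y2 x3 y3 : Fin n),
        2 * s = r ∧ IsFanoCopy H s x1 y1 x2 y2 x3 y3) ∧
      matchNum H ≤ r / 2 + 1 ∧
      (matchNum H : ℝ) ≤ (1 + 1 / ((r : ℝ) + 1)) * n / 2 := by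
  obtain ⟨t, rfl⟩ : ∃ t, r = 2 * (t + 1) := by
    obtain ⟨s, rfl⟩ := hre
    exact ⟨s - 1, by omega⟩
  let φ : Option (Fin (t + 1) ⊕ Fin (t + 1)) ≃ Fin (2 * (t + 1) + 1) :=
    Fintype.equivFinOfCardEq (by simp [two_mul])
  have hreg : IsRegular (hubGraph t φ) (2 * (t + 1)) := isRegular_hubGraph (by simp) φ
  have hν : matchNum (hubGraph t φ) ≤ t + 2 := by
    simpa using matchNum_hubGraph_le t φ
  refine ⟨2 * (t + 1) + 1, hubGraph t φ, rfl, hreg, ?_, by omega, ?_⟩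
  · rintro ⟨s, x₁, y₁, x₂, y₂, x₃, y₃, hs, hF⟩
    obtain rfl : s = t + 1 := by omega
    exact not_isFanoComponent_hubGraph t _ φ _ _ _ _ _ _ (hF.isFanoComponent hreg)
  · calc (matchNum (hubGraph t φ) : ℝ) ≤ t + 2 := mod_cast hν
      _ = (1 + 1 / (((2 * (t + 1) : ℕ) : ℝ) + 1)) * (2 * (t + 1) + 1 : ℕ) / 2 := by
        push_cast
        field_simp
        ring

end Tripartite
end
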